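/- arXiv:1501.01690 — 2 statements merged into one kernel-verified Lean document; each statement's English description precedes it below -/
import Mathlib

section
/- Suppose G is an acyclic 4-regular Borel graph on a comeager Borel subset C of a Polish space X. Then there is a G-invariant comeager Borel set A ⊆ C and a free Borel action of the free group F₂ = ⟨a, b⟩ on A which generates G ↾ A; that is, there are Borel automorphisms f₁, f₂ of A with f₁(x) ≠ f₂(x) for all x ∈ A, generating a free action of F₂, such that the edges of G ↾ A are exactly the pairs {x, f₁(x)} and {x, f₂(x)} for x ∈ A. -/
section
open Set MeasureTheory

namespace MU

structure IsEnum {X : Type*} [MeasurableSpace X] (C : Set X) (G : SimpleGraph X)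
    (n : Fin 4 → X → X) : Prop where
  meas : ∀ i, Measurable (n i)
  adj : ∀ x ∈ C, ∀ i, G.Adj x (n i x)
  inj : ∀ x ∈ C, Function.Injective (fun i => n i x)
  surj : ∀ x y, G.Adj x y → ∃ i, n i x = y
  out : ∀ x, x ∉ C → ∀ i, n i x = x

theorem exists_enum {X : Type*} [TopologicalSpace X] [PolishSpace X]
    [MeasurableSpace X] [BorelSpace X]
    (C : Set X) (hCBorel : MeasurableSet C)
    (G : SimpleGraph X)
    (hsupp : ∀ x y : X, G.Adj x y → x ∈ C ∧ y ∈ C)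
    (hGBorel : MeasurableSet {p : X × X | G.Adj p.1 p.2})
    (hreg : ∀ x ∈ C, (G.neighborSet x).ncard = 4) :
    ∃ n : Fin 4 → X → X, IsEnum C G n := by
  classical
  obtain ⟨e, he⟩ := exists_measurableEmbedding_real X
  let S : Set (X × (Fin 4 → X)) := {p | (∀ i, G.Adj p.1 (p.2 i)) ∧ ∀ i j, i < j → e (p.2 i) < e (p.2 j)}
  have hS : MeasurableSet S := by
    have h1 : ∀ i, MeasurableSet {p : X × (Fin 4 → X) | G.Adj p.1 (p.2 i)} := by
      intro i
      have hm : Measurable (fun p : X × (Fin 4 → X) => (p.1, p.2 i)) := by fun_prop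
      exact hm hGBorel
    have h2 : ∀ i j : Fin 4, MeasurableSet {p : X × (Fin 4 → X) | i < j → e (p.2 i) < e (p.2 j)} := by
      intro i j
      by_cases h : i < j
      · simp only [h, true_imp_iff]
        exact measurableSet_lt (he.measurable.comp ((measurable_pi_apply i).comp measurable_snd))
          (he.measurable.comp ((measurable_pi_apply j).comp measurable_snd))
      · simp [h]
    have : S = (⋂ i, {p : X × (Fin 4 → X) | G.Adj p.1 (p.2 i)}) ∩
        ⋂ i, ⋂ j, {p : X × (Fin 4 → X) | i < j → e (p.2 i) < e (p.2 j)} := by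
      ext p; simp [S]
    rw [this]
    exact (MeasurableSet.iInter h1).inter (MeasurableSet.iInter fun i => MeasurableSet.iInter (h2 i))
  have hrange : ∀ p ∈ S, range p.2 = G.neighborSet p.1 := by
    rintro ⟨x, y⟩ ⟨h1, h2⟩
    have hx : x ∈ C := (hsupp _ _ (h1 0)).1
    have hmono : StrictMono (e ∘ y) := fun i j h => h2 i j h
    have hinj : Function.Injective y := hmono.injective.of_comp
    have hfin : (G.neighborSet x).Finite := Set.finite_of_ncard_ne_zero (by rw [hreg x hx]; norm_num)
    apply Set.eq_of_subset_of_ncard_le _ _ hfin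
    · rintro _ ⟨i, rfl⟩; exact h1 i
    · change (G.neighborSet x).ncard ≤ (range y).ncard
      rw [hreg x hx, ← Set.image_univ, Set.ncard_image_of_injective _ hinj]; simp
  have hinj : InjOn Prod.fst S := by
    rintro ⟨x, y⟩ hp ⟨x', y'⟩ hp' (rfl : x = x')
    have h := (hrange _ hp).trans (hrange _ hp').symm
    have m1 : StrictMono (e ∘ y) := fun i j h => hp.2 i j h
    have m2 : StrictMono (e ∘ y') := fun i j h => hp'.2 i j h
    have : e ∘ y = e ∘ y' := by
      apply (StrictMono.range_inj m1 m2).1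
      rw [range_comp, range_comp]; exact congrArg _ h
    have : y = y' := funext fun i => he.injective (congrFun this i)
    rw [this]
  have hex : ∀ x ∈ C, ∃ y : Fin 4 → X, (x, y) ∈ S := by
    intro x hx
    have hfin : (G.neighborSet x).Finite := Set.finite_of_ncard_ne_zero (by rw [hreg x hx]; norm_num)
    let F := hfin.toFinset.image e
    have hF : F.card = 4 := by
      rw [Finset.card_image_of_injective _ he.injective, ← Set.ncard_eq_toFinset_card _ hfin, hreg x hx]
    have hm : ∀ i : Fin 4, ∃ y, G.Adj x y ∧ e y = F.orderEmbOfFin hF i := by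
      intro i
      have := F.orderEmbOfFin_mem hF i
      obtain ⟨y, hy, hy'⟩ := Finset.mem_image.1 this
      exact ⟨y, by simpa using hy, hy'⟩
    choose y hy1 hy2 using hm
    refine ⟨y, hy1, fun i j h => ?_⟩
    change e (y i) < e (y j)
    rw [hy2, hy2]
    exact (F.orderEmbOfFin hF).strictMono h
  choose! y hy using hex
  refine ⟨fun i x => if x ∈ C then y x i else x, ?_, ?_, ?_, ?_, ?_⟩
  · intro i B hB
    have : (fun x => if x ∈ C then y x i else x) ⁻¹' B =
        (Prod.fst '' (S ∩ {p | p.2 i ∈ B})) ∪ (Cᶜ ∩ B) := by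
      ext x
      simp only [mem_preimage, mem_union, mem_image, mem_inter_iff, mem_compl_iff]
      constructor
      · intro h
        by_cases hx : x ∈ C
        · left; rw [if_pos hx] at h; exact ⟨(x, y x), ⟨hy x hx, h⟩, rfl⟩
        · right; rw [if_neg hx] at h; exact ⟨hx, h⟩
      · rintro (⟨⟨x', y'⟩, ⟨hp, hB'⟩, rfl⟩ | ⟨hx, h⟩)
        · have hx : x' ∈ C := (hsupp _ _ (hp.1 0)).1
          have := hinj hp (hy x' hx) rfl
          rw [Prod.mk.injEq] at this
          rw [if_pos hx, ← this.2]; exact hB'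
        · rw [if_neg hx]; exact h
    rw [this]
    refine MeasurableSet.union ?_ (hCBorel.compl.inter hB)
    refine MeasurableSet.image_of_measurable_injOn ?_ measurable_fst (hinj.mono inter_subset_left)
    exact hS.inter (((measurable_pi_apply i).comp measurable_snd) hB)
  · intro x hx i
    simp only [if_pos hx]; exact (hy x hx).1 i
  · intro x hx i j hij
    simp only [if_pos hx] at hij
    have m1 : StrictMono (e ∘ y x) := fun i j h => (hy x hx).2 i j h
    exact m1.injective.of_comp hij
  · intro x z h
    have hx := (hsupp _ _ h).1
    have : z ∈ range (y x) := by rw [hrange _ (hy x hx)]; exact h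
    obtain ⟨i, hi⟩ := this
    exact ⟨i, by simp only [if_pos hx]; exact hi⟩
  · intro x hx i; simp [hx]

/-- nearness -/
def Nr {X : Type*} (G : SimpleGraph X) (k : ℕ) (u v : X) : Prop := ∃ p : G.Walk u v, p.length ≤ k

section nr
variable {X : Type*} {G : SimpleGraph X}

theorem Nr.refl (k : ℕ) (u : X) : Nr G k u u := ⟨.nil, by simp⟩
theorem Nr.symm {k : ℕ} {u v : X} (h : Nr G k u v) : Nr G k v u := by
  obtain ⟨p, hp⟩ := h; exact ⟨p.reverse, by simpa using hp⟩
theorem Nr.trans {k l : ℕ} {u v w : X} (h : Nr G k u v) (h' : Nr G l v w) : Nr G (k + l) u w := by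
  obtain ⟨p, hp⟩ := h; obtain ⟨q, hq⟩ := h'
  exact ⟨p.append q, by rw [SimpleGraph.Walk.length_append]; omega⟩
theorem Nr.mono {k l : ℕ} {u v : X} (h : Nr G k u v) (hkl : k ≤ l) : Nr G l u v := by
  obtain ⟨p, hp⟩ := h; exact ⟨p, by omega⟩
theorem Nr.of_adj {u v : X} (h : G.Adj u v) : Nr G 1 u v := ⟨h.toWalk, by simp⟩
theorem Nr.reach {k : ℕ} {u v : X} (h : Nr G k u v) : G.Reachable u v := h.elim fun p _ => ⟨p⟩
theorem nr_iff_dist {k : ℕ} {u v : X} : Nr G k u v ↔ G.Reachable u v ∧ G.dist u v ≤ k := by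
  constructor
  · rintro ⟨p, hp⟩; exact ⟨⟨p⟩, (G.dist_le p).trans hp⟩
  · rintro ⟨h, h'⟩
    obtain ⟨p, hp⟩ := h.exists_walk_length_eq_dist
    exact ⟨p, by omega⟩

def ConnIn (G : SimpleGraph X) (K : Set X) (u v : X) : Prop :=
  ∃ p : G.Walk u v, ∀ z ∈ p.support, z ∈ K
theorem ConnIn.symm {K : Set X} {u v : X} (h : ConnIn G K u v) : ConnIn G K v u := by
  obtain ⟨p, hp⟩ := h; exact ⟨p.reverse, by simpa using hp⟩
theorem ConnIn.trans {K : Set X} {u v w : X} (h : ConnIn G K u v) (h' : ConnIn G K v w) :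
    ConnIn G K u w := by
  obtain ⟨p, hp⟩ := h; obtain ⟨q, hq⟩ := h'
  refine ⟨p.append q, fun z hz => ?_⟩
  rw [SimpleGraph.Walk.mem_support_append_iff] at hz
  exact hz.elim (hp z) (hq z)
theorem ConnIn.mono {K L : Set X} {u v : X} (h : ConnIn G K u v) (hKL : K ⊆ L) : ConnIn G L u v := by
  obtain ⟨p, hp⟩ := h; exact ⟨p, fun z hz => hKL (hp z hz)⟩
theorem ConnIn.path (hG : G.IsAcyclic) {K : Set X} {u v : X} (h : ConnIn G K u v) (q : G.Walk u v)
    (hq : q.IsPath) : ∀ z ∈ q.support, z ∈ K := by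
  classical
  obtain ⟨p, hp⟩ := h
  have : (⟨p.bypass, p.bypass_isPath⟩ : G.Path u v) = ⟨q, hq⟩ := (hG.subsingleton_path _ _).elim _ _
  have : p.bypass = q := congrArg Subtype.val this
  intro z hz
  rw [← this] at hz
  exact hp z (p.support_bypass_subset_support hz)

/-- dist parity lemma -/
theorem dist_cases (hG : G.IsAcyclic) {y u v : X} (h : G.Adj u v) (hr : G.Reachable y u) :
    G.dist y u = G.dist y v + 1 ∨ G.dist y v = G.dist y u + 1 :=
  hG.dist_eq_dist_add_one_of_adj_of_reachable y h hr

/-- unique parent -/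
theorem parent_unique (hG : G.IsAcyclic) {y x p q : X} (hr : G.Reachable y x) (hp : G.Adj p x)
    (hq : G.Adj q x) (h1 : G.dist y p < G.dist y x) (h2 : G.dist y q < G.dist y x) : p = q := by
  have key : ∀ p, G.Adj p x → G.dist y p < G.dist y x → ∃ P : G.Walk y x, P.IsPath ∧ P.penultimate = p := by
    intro p hp h1
    have hrp : G.Reachable y p := hr.trans hp.symm.reachable
    obtain ⟨P, hP⟩ := hrp.exists_walk_length_eq_dist
    have := dist_cases hG hp hrp
    refine ⟨P.concat hp, ?_, by simp⟩
    apply SimpleGraph.Walk.isPath_of_length_eq_dist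
    rw [SimpleGraph.Walk.length_concat]; omega
  obtain ⟨P, hP, rfl⟩ := key p hp h1
  obtain ⟨Q, hQ, rfl⟩ := key q hq h2
  have : (⟨P, hP⟩ : G.Path y x) = ⟨Q, hQ⟩ := (hG.subsingleton_path _ _).elim _ _
  have : P = Q := congrArg Subtype.val this
  rw [this]

/-- if connected in `K` then the parent is in `K` -/
theorem parent_mem (hG : G.IsAcyclic) {K : Set X} {y x p : X} (hK : ConnIn G K y x)
    (hp : G.Adj p x) (h1 : G.dist y p < G.dist y x) : p ∈ K := by
  have hr : G.Reachable y x := hK.elim fun p _ => ⟨p⟩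
  have hrp : G.Reachable y p := hr.trans hp.symm.reachable
  obtain ⟨P, hP⟩ := hrp.exists_walk_length_eq_dist
  have := dist_cases hG hp hrp
  refine hK.path hG (P.concat hp) ?_ p (by simp [SimpleGraph.Walk.support_concat])
  apply SimpleGraph.Walk.isPath_of_length_eq_dist
  rw [SimpleGraph.Walk.length_concat]; omega

end nr
end MU
end

section
open Set MeasureTheory

namespace MU

def act {X : Type*} (n : Fin 4 → X → X) : List (Fin 4) → X → X
  | [], x => x
  | i :: w, x => act n w (n i x)

section words
variable {X : Type*} [MeasurableSpace X] {C : Set X} {G : SimpleGraph X} {n : Fin 4 → X → X}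

theorem measurable_act (h : IsEnum C G n) (w : List (Fin 4)) : Measurable (act n w) := by
  induction w with
  | nil => exact measurable_id
  | cons i w ih => exact ih.comp (h.meas i)

theorem act_nr (h : IsEnum C G n) (w : List (Fin 4)) (x : X) : Nr G w.length x (act n w x) := by
  induction w generalizing x with
  | nil => exact Nr.refl _ _
  | cons i w ih =>
    by_cases hx : x ∈ C
    · have := (Nr.of_adj (h.adj x hx i)).trans (ih (n i x))
      exact this.mono (by simp; omega)
    · have := ih (n i x)
      rw [h.out x hx] at this
      have h2 : act n (i :: w) x = act n w x := by simp [act, h.out x hx]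
      rw [h2]; exact this.mono (by simp)

theorem nr_iff (h : IsEnum C G n) {k : ℕ} {x z : X} :
    Nr G k x z ↔ ∃ w : List (Fin 4), w.length ≤ k ∧ act n w x = z := by
  constructor
  · rintro ⟨p, hp⟩
    induction p generalizing k with
    | nil => exact ⟨[], by simp, rfl⟩
    | @cons u v t hadj p ih =>
      simp only [SimpleGraph.Walk.length_cons] at hp
      obtain ⟨w, hw, hw'⟩ := ih (k := k - 1) (by omega)
      obtain ⟨i, hi⟩ := h.surj _ _ hadj
      exact ⟨i :: w, by simp; omega, by simp [act, hi, hw']⟩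
  · rintro ⟨w, hw, rfl⟩
    exact (act_nr h w x).mono hw

theorem reach_iff (h : IsEnum C G n) {x z : X} :
    G.Reachable x z ↔ ∃ w : List (Fin 4), act n w x = z := by
  constructor
  · rintro ⟨p⟩
    obtain ⟨w, -, hw⟩ := (nr_iff h).1 (⟨p, le_rfl⟩ : Nr G p.length x z)
    exact ⟨w, hw⟩
  · rintro ⟨w, rfl⟩; exact (act_nr h w x).reach

theorem act_mem (h : IsEnum C G n) (hsupp : ∀ x y : X, G.Adj x y → x ∈ C ∧ y ∈ C)
    (w : List (Fin 4)) {x : X} (hx : x ∈ C) : act n w x ∈ C := by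
  induction w generalizing x with
  | nil => exact hx
  | cons i w ih => exact ih (hsupp _ _ (h.adj x hx i)).2

theorem measurable_ex (h : IsEnum C G n) {Y : Type*} [MeasurableSpace Y] {g : Y → X}
    (hg : Measurable g) {R : Y → X → Prop} (hR : MeasurableSet {p : Y × X | R p.1 p.2})
    (hreach : ∀ y z, R y z → G.Reachable (g y) z) : MeasurableSet {y | ∃ z, R y z} := by
  have : {y | ∃ z, R y z} = ⋃ w : List (Fin 4), {y | R y (act n w (g y))} := by
    ext y
    simp only [mem_ofPred_eq, mem_iUnion]
    constructor
    · rintro ⟨z, hz⟩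
      obtain ⟨w, rfl⟩ := (reach_iff h).1 (hreach y z hz)
      exact ⟨w, hz⟩
    · rintro ⟨w, hw⟩; exact ⟨_, hw⟩
  rw [this]
  refine MeasurableSet.iUnion fun w => ?_
  have hm : Measurable (fun y => (y, act n w (g y))) :=
    measurable_id.prodMk ((measurable_act h w).comp hg)
  exact hm hR

theorem measurable_nr [MeasurableEq X] (h : IsEnum C G n) (k : ℕ) :
    MeasurableSet {p : X × X | Nr G k p.1 p.2} := by
  have : {p : X × X | Nr G k p.1 p.2} = ⋃ w : List (Fin 4), {p : X × X | w.length ≤ k ∧ act n w p.1 = p.2} := by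
    ext p; simp [nr_iff h]
  rw [this]
  refine MeasurableSet.iUnion fun w => ?_
  refine (MeasurableSet.const _).inter (measurableSet_eq_fun ?_ measurable_snd)
  exact (measurable_act h w).comp measurable_fst

end words

theorem exists_coloring {X : Type*} [TopologicalSpace X] [PolishSpace X]
    [MeasurableSpace X] [BorelSpace X] {C : Set X} {G : SimpleGraph X} {n : Fin 4 → X → X}
    (h : IsEnum C G n) (s : ℕ) :
    ∃ c : X → ℕ, Measurable c ∧ ∀ x y, Nr G s x y → c x = c y → x = y := by
  classical
  obtain ⟨U, hU⟩ := TopologicalSpace.exists_countable_basis X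
  rcases isEmpty_or_nonempty X with hX | hX
  · exact ⟨fun _ => 0, measurable_const, fun x => hX.elim x⟩
  have hne : U.Nonempty := by
    obtain ⟨x⟩ := hX
    obtain ⟨u, hu, -⟩ := hU.2.2.exists_subset_of_mem_open (mem_univ x) isOpen_univ
    exact ⟨u, hu⟩
  obtain ⟨f, hf⟩ := hU.1.exists_eq_range hne
  let p : X → ℕ → Prop := fun x k => x ∈ f k ∧ ∀ w : List (Fin 4), w.length ≤ s → act n w x ∈ f k → act n w x = x
  have hop : ∀ k, IsOpen (f k) := fun k => hU.2.2.isOpen (hf ▸ mem_range_self k)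
  have hp : ∀ x, ∃ k, p x k := by
    intro x
    have hfin : {w : List (Fin 4) | w.length ≤ s}.Finite := List.finite_length_le _ _
    have hfin2 : ((fun w => act n w x) '' {w : List (Fin 4) | w.length ≤ s} \ {x}).Finite :=
      (hfin.image _).sdiff
    obtain ⟨u, hu, hxu, hsub⟩ := hU.2.2.exists_subset_of_mem_open
      (show x ∈ ((fun w => act n w x) '' {w : List (Fin 4) | w.length ≤ s} \ {x})ᶜ by simp)
      hfin2.isClosed.isOpen_compl
    rw [hf] at hu
    obtain ⟨k, rfl⟩ := hu
    refine ⟨k, hxu, fun w hw hwk => ?_⟩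
    by_contra hne
    exact hsub hwk ⟨⟨w, hw, rfl⟩, hne⟩
  have hm : ∀ k, MeasurableSet {x | p x k} := by
    intro k
    have : {x | p x k} = f k ∩ ⋂ w : List (Fin 4), {x | w.length ≤ s → act n w x ∈ f k → act n w x = x} := by
      ext x; simp [p]
    rw [this]
    refine (hop k).measurableSet.inter (MeasurableSet.iInter fun w => ?_)
    refine (MeasurableSet.const _).imp (MeasurableSet.imp ?_ ?_)
    · exact measurable_act h w (hop k).measurableSet
    · exact measurableSet_eq_fun (measurable_act h w) measurable_id
  refine ⟨fun x => Nat.find (hp x), measurable_find hp hm, fun x y hxy hc => ?_⟩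
  have h1 := (Nat.find_spec (hp x))
  have h2 := (Nat.find_spec (hp y))
  simp only at hc
  obtain ⟨w, hw, hwy⟩ := (nr_iff h).1 hxy
  have := h1.2 w hw (by rw [hwy, hc]; exact h2.1)
  rw [← hwy, this]

/-! labels -/

def linv : Fin 4 → Fin 4 := ![1, 0, 3, 2]
theorem linv_linv (i : Fin 4) : linv (linv i) = i := by revert i; decide

section lab
variable {X : Type*}

def Lab (n : Fin 4 → X → X) (ℓ : X → Option (Equiv.Perm (Fin 4))) (x y : X) (l : Fin 4) : Prop :=
  ∃ σ i, ℓ x = some σ ∧ n i x = y ∧ σ i = l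

structure Compat (C : Set X) (n : Fin 4 → X → X) (ℓ : X → Option (Equiv.Perm (Fin 4))) : Prop where
  dom : ∀ x, ℓ x ≠ none → x ∈ C
  edge : ∀ x y l l', Lab n ℓ x y l → Lab n ℓ y x l' → l' = linv l
  vert : ∀ v x x' l, ℓ v = none → Lab n ℓ x v l → Lab n ℓ x' v l → x = x'

def Phi (n : Fin 4 → X → X) (ℓ : X → Option (Equiv.Perm (Fin 4))) (x : X)
    (σ : Equiv.Perm (Fin 4)) : Prop :=
  ∀ i, (∀ l, Lab n ℓ (n i x) x l → σ i = linv l) ∧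
    (ℓ (n i x) = none → ∀ u l, Lab n ℓ u (n i x) l → σ i ≠ l)

variable [MeasurableSpace X] {C : Set X} {G : SimpleGraph X} {n : Fin 4 → X → X}
  {ℓ : X → Option (Equiv.Perm (Fin 4))}

theorem Lab.adj (h : IsEnum C G n) (hd : Compat C n ℓ) {x y : X} {l : Fin 4} (hl : Lab n ℓ x y l) :
    G.Adj x y := by
  obtain ⟨σ, i, h1, rfl, -⟩ := hl
  exact h.adj x (hd.dom x (by simp [h1])) i

theorem Lab.dom {x y : X} {l : Fin 4} (hl : Lab n ℓ x y l) : ℓ x ≠ none := by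
  obtain ⟨σ, i, h1, rfl, -⟩ := hl
  simp [h1]

theorem Lab.unique (h : IsEnum C G n) (hd : Compat C n ℓ) {x y : X} {l l' : Fin 4}
    (hl : Lab n ℓ x y l) (hl' : Lab n ℓ x y l') : l = l' := by
  have hx := hd.dom x hl.dom
  obtain ⟨σ, i, h1, h2, rfl⟩ := hl
  obtain ⟨σ', i', h1', h2', rfl⟩ := hl'
  have := h.inj x hx (h2.trans h2'.symm)
  rw [h1] at h1'
  rw [this, Option.some.inj h1']

theorem measurable_phi [MeasurableEq X] (h : IsEnum C G n) (hd : Compat C n ℓ)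
    (hℓ : ∀ o, MeasurableSet (ℓ ⁻¹' {o})) (σ : Equiv.Perm (Fin 4)) :
    MeasurableSet {x | Phi n ℓ x σ} := by
  have hlab : ∀ (f g : X → X) (l : Fin 4), Measurable f → Measurable g →
      MeasurableSet {x | Lab n ℓ (f x) (g x) l} := by
    intro f g l hf hg
    have : {x | Lab n ℓ (f x) (g x) l} = ⋃ σ : Equiv.Perm (Fin 4), ⋃ i, {x | ℓ (f x) = some σ ∧ n i (f x) = g x ∧ σ i = l} := by
      ext x; simp [Lab]
    rw [this]
    refine MeasurableSet.iUnion fun σ => MeasurableSet.iUnion fun i => ?_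
    refine MeasurableSet.inter (hf (hℓ (some σ))) (MeasurableSet.inter ?_ (MeasurableSet.const _))
    exact measurableSet_eq_fun ((h.meas i).comp hf) hg
  have : {x | Phi n ℓ x σ} = ⋂ i, ((⋂ l, {x | Lab n ℓ (n i x) x l → σ i = linv l}) ∩
      {x | ℓ (n i x) = none → x ∈ ⋂ k, ⋂ l, {x | Lab n ℓ (n k (n i x)) (n i x) l → σ i ≠ l}}) := by
    ext x
    simp only [Phi, mem_ofPred_eq, mem_iInter, mem_inter_iff]
    refine forall_congr' fun i => and_congr_right fun _ => imp_congr_right fun _ => ?_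
    constructor
    · intro H k l hl; exact H _ l hl
    · intro H u l hl
      obtain ⟨k, rfl⟩ := h.surj _ _ (hl.adj h hd).symm
      exact H k l hl
  rw [this]
  refine MeasurableSet.iInter fun i => MeasurableSet.inter (MeasurableSet.iInter fun l => ?_) ?_
  · exact (hlab _ _ l (h.meas i) measurable_id).imp (MeasurableSet.const _)
  · refine MeasurableSet.imp (h.meas i (hℓ none)) ?_
    refine MeasurableSet.iInter fun k => MeasurableSet.iInter fun l => ?_
    exact (hlab _ _ l ((h.meas k).comp (h.meas i)) (h.meas i)).imp (MeasurableSet.const _)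

/-- the one-step extension -/
theorem extend_label [MeasurableEq X] (h : IsEnum C G n) (hd : Compat C n ℓ)
    (hℓ : ∀ o, MeasurableSet (ℓ ⁻¹' {o})) (T : Set X) (hT : MeasurableSet T) (hTC : T ⊆ C)
    (hTd : ∀ x ∈ T, ℓ x = none)
    (hphi : ∀ x ∈ T, ∃ σ, Phi n ℓ x σ)
    (hT1 : ∀ x ∈ T, ∀ y ∈ T, ¬ G.Adj x y)
    (hT2 : ∀ x ∈ T, ∀ y ∈ T, ∀ m, G.Adj x m → G.Adj y m → ℓ m = none → x = y) :
    ∃ ℓ' : X → Option (Equiv.Perm (Fin 4)), Compat C n ℓ' ∧ (∀ o, MeasurableSet (ℓ' ⁻¹' {o})) ∧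
      (∀ x σ, ℓ x = some σ → ℓ' x = some σ) ∧ (∀ x, ℓ' x ≠ none ↔ ℓ x ≠ none ∨ x ∈ T) := by
  classical
  obtain ⟨e, he⟩ := exists_injective_nat (Equiv.Perm (Fin 4))
  let q : X → ℕ → Prop := fun x k => x ∈ T → ∃ σ, e σ = k ∧ Phi n ℓ x σ
  have hq : ∀ x, ∃ k, q x k := by
    intro x
    by_cases hx : x ∈ T
    · obtain ⟨σ, hσ⟩ := hphi x hx
      exact ⟨e σ, fun _ => ⟨σ, rfl, hσ⟩⟩
    · exact ⟨0, fun h => (hx h).elim⟩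
  have hqm : ∀ k, MeasurableSet {x | q x k} := by
    intro k
    refine MeasurableSet.imp hT ?_
    have : {x | ∃ σ, e σ = k ∧ Phi n ℓ x σ} = ⋃ σ : Equiv.Perm (Fin 4), {x | e σ = k ∧ Phi n ℓ x σ} := by
      ext x; simp
    rw [this]
    exact MeasurableSet.iUnion fun σ => (MeasurableSet.const _).inter (measurable_phi h hd hℓ σ)
  have hfm := measurable_find hq hqm
  have hspec : ∀ x ∈ T, ∃ σ, e σ = Nat.find (hq x) ∧ Phi n ℓ x σ := fun x hx => Nat.find_spec (hq x) hx
  choose! τ hτ1 hτ2 using hspec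
  let ℓ' : X → Option (Equiv.Perm (Fin 4)) := fun x => if x ∈ T then some (τ x) else ℓ x
  have hpos : ∀ x ∈ T, ℓ' x = some (τ x) := fun x hx => if_pos hx
  have hneg : ∀ x, x ∉ T → ℓ' x = ℓ x := fun x hx => if_neg hx
  have labpos : ∀ x ∈ T, ∀ y l, Lab n ℓ' x y l → ∃ i, n i x = y ∧ τ x i = l := by
    rintro x hx y l ⟨σ, i, h1, h2, h3⟩
    rw [hpos x hx] at h1
    exact ⟨i, h2, by rw [Option.some.inj h1]; exact h3⟩
  have labneg : ∀ x, x ∉ T → ∀ y l, Lab n ℓ' x y l → Lab n ℓ x y l := by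
    rintro x hx y l ⟨σ, i, h1, h2, h3⟩
    rw [hneg x hx] at h1
    exact ⟨σ, i, h1, h2, h3⟩
  have hdom' : ∀ x, ℓ' x ≠ none ↔ ℓ x ≠ none ∨ x ∈ T := by
    intro x
    by_cases hx : x ∈ T
    · simp [hpos x hx, hx]
    · simp [hneg x hx, hx]
  refine ⟨ℓ', ⟨?_, ?_, ?_⟩, ?_, ?_, hdom'⟩
  · intro x hx
    rcases (hdom' x).1 hx with hx | hx
    · exact hd.dom x hx
    · exact hTC hx
  · intro x y l l' hl hl'
    by_cases hx : x ∈ T <;> by_cases hy : y ∈ T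
    · obtain ⟨i, hi, -⟩ := labpos x hx y l hl
      exact (hT1 x hx y hy (hi ▸ h.adj x (hTC hx) i)).elim
    · obtain ⟨i, rfl, rfl⟩ := labpos x hx y l hl
      rw [(hτ2 x hx i).1 l' (labneg _ hy _ _ hl'), linv_linv]
    · obtain ⟨i, rfl, rfl⟩ := labpos y hy x l' hl'
      exact (hτ2 y hy i).1 l (labneg _ hx _ _ hl)
    · exact hd.edge x y l l' (labneg _ hx _ _ hl) (labneg _ hy _ _ hl')
  · intro v x x' l hv hl hl'
    have hvT : v ∉ T := fun hvT => by simp [hpos v hvT] at hv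
    rw [hneg v hvT] at hv
    by_cases hx : x ∈ T <;> by_cases hy : x' ∈ T
    · obtain ⟨i, hi, -⟩ := labpos x hx v l hl
      obtain ⟨j, hj, -⟩ := labpos x' hy v l hl'
      exact hT2 x hx x' hy v (hi ▸ h.adj x (hTC hx) i) (hj ▸ h.adj x' (hTC hy) j) hv
    · obtain ⟨i, rfl, rfl⟩ := labpos x hx v l hl
      exact ((hτ2 x hx i).2 hv x' _ (labneg _ hy _ _ hl') rfl).elim
    · obtain ⟨i, rfl, rfl⟩ := labpos x' hy v l hl'
      exact ((hτ2 x' hy i).2 hv x _ (labneg _ hx _ _ hl) rfl).elim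
    · exact hd.vert v x x' l hv (labneg _ hx _ _ hl) (labneg _ hy _ _ hl')
  · intro o
    have : ℓ' ⁻¹' {o} = (T ∩ {x | ∃ σ, some σ = o ∧ e σ = Nat.find (hq x)}) ∪ (Tᶜ ∩ ℓ ⁻¹' {o}) := by
      ext x
      simp only [mem_preimage, mem_singleton_iff, mem_union, mem_inter_iff, mem_ofPred_eq, mem_compl_iff]
      by_cases hx : x ∈ T
      · rw [hpos x hx]
        simp only [hx, true_and, not_true, false_and, or_false]
        constructor
        · intro ho; exact ⟨_, ho, hτ1 x hx⟩
        · rintro ⟨σ, rfl, hσ⟩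
          rw [he (hσ.trans (hτ1 x hx).symm)]
      · rw [hneg x hx]; simp [hx]
    rw [this]
    refine (hT.inter ?_).union (hT.compl.inter (hℓ o))
    have : {x | ∃ σ, some σ = o ∧ e σ = Nat.find (hq x)} = ⋃ σ : Equiv.Perm (Fin 4), {x | some σ = o ∧ e σ = Nat.find (hq x)} := by
      ext x; simp
    rw [this]
    refine MeasurableSet.iUnion fun σ => (MeasurableSet.const _).inter ?_
    exact measurableSet_eq_fun measurable_const hfm
  · intro x σ hx
    have : x ∉ T := fun hxT => by simp [hTd x hxT] at hx
    rw [hneg x this, hx]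

end lab
end MU
end

section
open Set MeasureTheory

namespace MU

theorem perm_aa : ∀ i j l m : Fin 4, i ≠ j → l ≠ m → ∃ σ : Equiv.Perm (Fin 4), σ i = l ∧ σ j = m := by
  intro i j l m hij hlm
  refine ⟨(Equiv.swap i l).trans (Equiv.swap (Equiv.swap i l j) m), ?_, ?_⟩
  · simp only [Equiv.trans_apply, Equiv.swap_apply_left]
    rw [Equiv.swap_apply_of_ne_of_ne _ hlm]
    intro h
    apply hij
    apply (Equiv.swap i l).injective
    rw [← h, Equiv.swap_apply_left]
  · simp

theorem perm_ab (i j l m : Fin 4) (hij : i ≠ j) : ∃ σ : Equiv.Perm (Fin 4), σ i = l ∧ σ j ≠ m := by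
  obtain ⟨m', h1, h2⟩ : ∃ m' : Fin 4, l ≠ m' ∧ m' ≠ m := by revert l m; decide
  obtain ⟨σ, h3, h4⟩ := perm_aa i j l m' hij h1
  exact ⟨σ, h3, by rw [h4]; exact h2⟩

theorem perm_bb (i j l m : Fin 4) : ∃ σ : Equiv.Perm (Fin 4), σ i ≠ l ∧ σ j ≠ m := by
  by_cases hij : i = j
  · subst hij
    obtain ⟨m', h1, h2⟩ : ∃ m' : Fin 4, m' ≠ l ∧ m' ≠ m := by revert l m; decide
    exact ⟨Equiv.swap i m', by simpa using h1, by simpa using h2⟩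
  · obtain ⟨l', h1⟩ : ∃ l' : Fin 4, l' ≠ l := by revert l; decide
    obtain ⟨σ, h3, h4⟩ := perm_ab i j l' m hij
    exact ⟨σ, by rw [h3]; exact h1, h4⟩

theorem perm_a (i l : Fin 4) : ∃ σ : Equiv.Perm (Fin 4), σ i = l := ⟨Equiv.swap i l, by simp⟩

section
variable {X : Type*} [MeasurableSpace X] {C : Set X} {G : SimpleGraph X} {n : Fin 4 → X → X}
  {ℓ : X → Option (Equiv.Perm (Fin 4))}

theorem no_triangle (hG : G.IsAcyclic) {x u m : X} (h1 : G.Adj x u) (h2 : G.Adj x m) (h3 : G.Adj u m) :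
    False := by
  have a := SimpleGraph.dist_eq_one_iff_adj.2 h1
  have b := SimpleGraph.dist_eq_one_iff_adj.2 h2
  have := dist_cases hG h3 h1.reachable
  omega

theorem no_square (hG : G.IsAcyclic) {x u m m' : X} (h1 : G.Adj x m) (h2 : G.Adj x m')
    (h3 : G.Adj m u) (h4 : G.Adj m' u) (hne : x ≠ u) : m = m' := by
  have a := SimpleGraph.dist_eq_one_iff_adj.2 h1
  have b := SimpleGraph.dist_eq_one_iff_adj.2 h2
  have hr : G.Reachable x u := h1.reachable.trans h3.reachable
  have c := hr.pos_dist_of_ne hne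
  have := dist_cases hG h3 h1.reachable
  exact parent_unique hG hr h3 h4 (by omega) (by omega)

theorem exists_sigma (hG : G.IsAcyclic) (h : IsEnum C G n) (hd : Compat C n ℓ) (x : X) (hx : x ∈ C)
    (hxn : ℓ x = none) (u₁ u₂ : X)
    (hu : ∀ u, ℓ u ≠ none → (G.Adj u x ∨ ∃ m, ℓ m = none ∧ G.Adj m x ∧ G.Adj u m) → u = u₁ ∨ u = u₂) :
    ∃ σ, Phi n ℓ x σ := by
  let Sat : X → Equiv.Perm (Fin 4) → Prop := fun u σ =>
    (∀ i l, n i x = u → Lab n ℓ u x l → σ i = linv l) ∧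
    (∀ i l, ℓ (n i x) = none → Lab n ℓ u (n i x) l → σ i ≠ l)
  have hsat : ∀ σ, Sat u₁ σ → Sat u₂ σ → Phi n ℓ x σ := by
    intro σ h1 h2 i
    constructor
    · intro l hl
      rcases hu _ hl.dom (Or.inl (hl.adj h hd)) with hh | hh
      · exact h1.1 i l hh (hh ▸ hl)
      · exact h2.1 i l hh (hh ▸ hl)
    · intro hi u l hl
      rcases hu _ hl.dom (Or.inr ⟨_, hi, (h.adj x hx i).symm, hl.adj h hd⟩) with rfl | rfl
      · exact h1.2 i l hi hl
      · exact h2.2 i l hi hl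
  have tri : ∀ u, (∃ i l, n i x = u ∧ Lab n ℓ u x l ∧ ∀ σ : Equiv.Perm (Fin 4), σ i = linv l → Sat u σ) ∨
      (∃ i l, ℓ (n i x) = none ∧ ∀ σ : Equiv.Perm (Fin 4), σ i ≠ l → Sat u σ) ∨ ∀ σ, Sat u σ := by
    intro u
    by_cases ha : ∃ i l, n i x = u ∧ Lab n ℓ u x l
    · obtain ⟨i, l, hi, hl⟩ := ha
      left
      refine ⟨i, l, hi, hl, fun σ hσ => ⟨?_, ?_⟩⟩
      · intro j l' hj hl'
        rw [← hl.unique h hd hl', ← hσ, h.inj x hx (hi.trans hj.symm)]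
      · intro j l' hj hl'
        exact (no_triangle hG (hl.adj h hd).symm (h.adj x hx j) (hl'.adj h hd)).elim
    · right
      by_cases hb : ∃ i l, ℓ (n i x) = none ∧ Lab n ℓ u (n i x) l
      · obtain ⟨i, l, hi, hl⟩ := hb
        left
        refine ⟨i, l, hi, fun σ hσ => ⟨fun j l' hj hl' => (ha ⟨j, l', hj, hl'⟩).elim, ?_⟩⟩
        intro j l' hj hl'
        have hxu : x ≠ u := by rintro rfl; exact hl.dom hxn
        have hij := no_square hG (h.adj x hx i) (h.adj x hx j) (hl.adj h hd).symm (hl'.adj h hd).symm hxu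
        have : i = j := h.inj x hx hij
        subst this
        rwa [← hl.unique h hd hl']
      · right
        exact fun σ => ⟨fun j l' hj hl' => (ha ⟨j, l', hj, hl'⟩).elim,
          fun j l' hj hl' => (hb ⟨j, l', hj, hl'⟩).elim⟩
  rcases tri u₁ with ⟨i, l, hi, hl, h1⟩ | ⟨i, l, hi, h1⟩ | h1 <;>
    rcases tri u₂ with ⟨j, m, hj, hm, h2⟩ | ⟨j, m, hj, h2⟩ | h2
  · by_cases he : u₁ = u₂
    · subst he
      obtain ⟨σ, hσ⟩ := perm_a i (linv l)
      exact ⟨σ, hsat σ (h1 σ hσ) (h1 σ hσ)⟩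
    · obtain ⟨σ, s1, s2⟩ := perm_aa i j (linv l) (linv m)
        (fun hij => he (by rw [← hi, ← hj, hij]))
        (fun hlm => by
          have : l = m := by rw [← linv_linv l, hlm, linv_linv]
          subst this
          exact he (hd.vert x _ _ l hxn hl hm))
      exact ⟨σ, hsat σ (h1 σ s1) (h2 σ s2)⟩
  · obtain ⟨σ, s1, s2⟩ := perm_ab i j (linv l) m
      (fun hij => by subst hij; rw [hi] at hj; exact hl.dom hj)
    exact ⟨σ, hsat σ (h1 σ s1) (h2 σ s2)⟩
  · obtain ⟨σ, s1⟩ := perm_a i (linv l)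
    exact ⟨σ, hsat σ (h1 σ s1) (h2 σ)⟩
  · obtain ⟨σ, s1, s2⟩ := perm_ab j i (linv m) l
      (fun hij => by subst hij; rw [hj] at hi; exact hm.dom hi)
    exact ⟨σ, hsat σ (h1 σ s2) (h2 σ s1)⟩
  · obtain ⟨σ, s1, s2⟩ := perm_bb i j l m
    exact ⟨σ, hsat σ (h1 σ s1) (h2 σ s2)⟩
  · obtain ⟨σ, s1, s2⟩ := perm_bb i i l l
    exact ⟨σ, hsat σ (h1 σ s1) (h2 σ)⟩
  · obtain ⟨σ, s1⟩ := perm_a j (linv m)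
    exact ⟨σ, hsat σ (h1 σ) (h2 σ s1)⟩
  · obtain ⟨σ, s1, s2⟩ := perm_bb j j m m
    exact ⟨σ, hsat σ (h1 σ) (h2 σ s1)⟩
  · exact ⟨1, hsat 1 (h1 _) (h2 _)⟩

end
end MU
end

section
open Set MeasureTheory

namespace MU

structure Stage {X : Type*} [MeasurableSpace X] (C : Set X) (G : SimpleGraph X)
    (n : Fin 4 → X → X) where
  ℓ : X → Option (Equiv.Perm (Fin 4))
  K : ℕ → X → Set X
  M : ℕ → ℕ
  compat : Compat C n ℓ
  meas : ∀ o, MeasurableSet (ℓ ⁻¹' {o})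
  Kmeas : ∀ m, MeasurableSet {p : X × X | p.2 ∈ K m p.1}
  Klow : ∀ m x z, Nr G m x z → z ∈ K m x
  Kup : ∀ m x z, z ∈ K m x → Nr G (M m) x z
  Kconn : ∀ m x z, z ∈ K m x → ConnIn G (K m x) x z
  Ksep : ∀ m x u d, u ∈ K m x → ℓ d ≠ none → Nr G 4 u d → d ∈ K m x
  conv : ∀ u v, ℓ u ≠ none → ℓ v ≠ none → ∀ p : G.Walk u v, p.IsPath → p.length ≤ 4 →
    ∀ z ∈ p.support, ℓ z ≠ none

section
variable {X : Type*} [MeasurableSpace X] [MeasurableEq X] {C : Set X} {G : SimpleGraph X}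
  {n : Fin 4 → X → X}

theorem stage_zero (h : IsEnum C G n) : Nonempty (Stage C G n) := by
  classical
  refine ⟨⟨fun _ => none, fun m x => {z | Nr G m x z}, id, ⟨?_, ?_, ?_⟩, ?_, ?_, ?_, ?_, ?_, ?_, ?_⟩⟩
  · intro x hx; simp at hx
  · rintro x y l l' ⟨σ, i, h1, -⟩; simp at h1
  · rintro v x x' l - ⟨σ, i, h1, -⟩; simp at h1
  · intro o; exact MeasurableSet.const _
  · intro m; exact measurable_nr h m
  · intro m x z hz; exact hz
  · intro m x z hz; exact hz
  · rintro m x z ⟨p, hp⟩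
    refine ⟨p, fun v hv => ?_⟩
    exact ⟨p.takeUntil v hv, (p.length_takeUntil_le hv).trans hp⟩
  · intro m x u d _ hd; simp at hd
  · intro u v hu; simp at hu

/-- sparsity parameter of a stage -/
def Stage.s (S : Stage C G n) : ℕ := S.M (S.M 0 + 4) + S.M 0 + S.M 0 + 4

theorem D_unique (S : Stage C G n) (ℓ' : X → Option (Equiv.Perm (Fin 4)))
    (hext : ∀ x, S.ℓ x ≠ none → ℓ' x ≠ none) (x : X) (hx : ℓ' x = none) (u v : X)
    (hu : S.ℓ u ≠ none) (hv : S.ℓ v ≠ none)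
    (hcu : G.Adj u x ∨ ∃ m, ℓ' m = none ∧ G.Adj m x ∧ G.Adj u m)
    (hcv : G.Adj v x ∨ ∃ m, ℓ' m = none ∧ G.Adj m x ∧ G.Adj v m) : u = v := by
  by_contra hne
  have ne : ∀ a b, S.ℓ a ≠ none → ℓ' b = none → a ≠ b := by
    rintro a _ ha hb rfl; exact hext a ha hb
  rcases hcu with hu1 | ⟨m, hm, hmx, hum⟩ <;> rcases hcv with hv1 | ⟨m', hm', hmx', hvm'⟩
  · refine hext x (S.conv u v hu hv (.cons hu1 (.cons hv1.symm .nil)) ?_ (by simp) x (by simp)) hx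
    simp [SimpleGraph.Walk.cons_isPath_iff, hne, hu1.ne, hv1.ne.symm]
  · refine hext x (S.conv u v hu hv (.cons hu1 (.cons hmx'.symm (.cons hvm'.symm .nil))) ?_ (by simp) x (by simp)) hx
    simp [SimpleGraph.Walk.cons_isPath_iff, hne, hu1.ne, hvm'.ne.symm, hmx'.ne.symm, ne u m' hu hm', (ne v x hv hx).symm]
  · refine hext x (S.conv u v hu hv (.cons hum (.cons hmx (.cons hv1.symm .nil))) ?_ (by simp) x (by simp)) hx
    simp [SimpleGraph.Walk.cons_isPath_iff, hne, hum.ne, hmx.ne, hv1.ne.symm, ne u x hu hx, (ne v m hv hm).symm]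
  · by_cases hmm : m = m'
    · subst hmm
      refine hext m (S.conv u v hu hv (.cons hum (.cons hvm'.symm .nil)) ?_ (by simp) m (by simp)) hm
      simp [SimpleGraph.Walk.cons_isPath_iff, hne, hum.ne, hvm'.ne.symm]
    · refine hext x (S.conv u v hu hv (.cons hum (.cons hmx (.cons hmx'.symm (.cons hvm'.symm .nil)))) ?_ (by simp) x (by simp)) hx
      simp [SimpleGraph.Walk.cons_isPath_iff, hne, hum.ne, hmx.ne, hmx'.ne.symm, hvm'.ne.symm, hmm,
        ne u x hu hx, ne u m' hu hm', (ne v m hv hm).symm, (ne v x hv hx).symm]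

theorem label_step (hG : G.IsAcyclic) (h : IsEnum C G n)
    (hsupp : ∀ x y : X, G.Adj x y → x ∈ C ∧ y ∈ C) (S : Stage C G n) (A : Set X)
    (hA : MeasurableSet A) (hAC : A ⊆ C)
    (hsp : ∀ y ∈ A, ∀ y' ∈ A, Nr G S.s y y' → y = y') (t : ℕ) :
    ∃ ℓ' : X → Option (Equiv.Perm (Fin 4)), Compat C n ℓ' ∧ (∀ o, MeasurableSet (ℓ' ⁻¹' {o})) ∧
      (∀ x σ, S.ℓ x = some σ → ℓ' x = some σ) ∧
      (∀ x, ℓ' x ≠ none ↔ S.ℓ x ≠ none ∨ ∃ y ∈ A, x ∈ S.K 0 y ∧ G.dist y x < t) := by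
  classical
  induction t with
  | zero => exact ⟨S.ℓ, S.compat, S.meas, fun _ _ h => h, by simp⟩
  | succ t ih =>
    obtain ⟨ℓ, hc, hm, hext, hdom⟩ := ih
    have hext' : ∀ x, S.ℓ x ≠ none → ℓ x ≠ none := fun x hx => (hdom x).2 (Or.inl hx)
    let T : Set X := {x | ∃ y, y ∈ A ∧ x ∈ S.K 0 y ∧ Nr G t y x} ∩ ℓ ⁻¹' {none}
    have hTm : MeasurableSet T := by
      refine MeasurableSet.inter ?_ (hm none)
      refine measurable_ex h (g := id) measurable_id (R := fun x y => y ∈ A ∧ x ∈ S.K 0 y ∧ Nr G t y x) ?_ ?_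
      · refine (measurable_snd hA).inter (MeasurableSet.inter ?_ ?_)
        · exact measurable_swap (S.Kmeas 0)
        · exact measurable_swap (measurable_nr h t)
      · rintro x y ⟨-, -, hy⟩; exact hy.symm.reach
    have hT : ∀ x ∈ T, ℓ x = none ∧ ∃ y ∈ A, x ∈ S.K 0 y ∧ G.Reachable y x ∧ G.dist y x = t := by
      rintro x ⟨⟨y, hy, hx, hn⟩, hxn⟩
      refine ⟨hxn, y, hy, hx, hn.reach, le_antisymm (nr_iff_dist.1 hn).2 ?_⟩
      by_contra hlt
      exact (hdom x).2 (Or.inr ⟨y, hy, hx, not_le.1 hlt⟩) hxn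
    have hreachC : ∀ y ∈ C, ∀ x, G.Reachable y x → x ∈ C := by
      intro y hy x hr
      obtain ⟨w, rfl⟩ := (reach_iff h).1 hr
      exact act_mem h hsupp w hy
    have hsame : ∀ y ∈ A, ∀ y' ∈ A, ∀ x x', x ∈ S.K 0 y → x' ∈ S.K 0 y' → Nr G 2 x x' → y = y' := by
      intro y hy y' hy' x x' hx hx' hn
      refine hsp y hy y' hy' ((((S.Kup _ _ _ hx).trans hn).trans (S.Kup _ _ _ hx').symm).mono ?_)
      simp only [Stage.s]; omega
    -- a neighbour of a point of `T` which is unlabelled is further away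
    have hfar : ∀ y ∈ A, ∀ x ∈ S.K 0 y, G.Reachable y x → G.dist y x = t → ∀ m, G.Adj m x → ℓ m = none →
        G.dist y m = t + 1 := by
      intro y hy x hx hr hdx m hmx hmn
      rcases dist_cases hG hmx.symm hr with hh | hh
      · exfalso
        have := parent_mem hG (S.Kconn 0 y x hx) hmx (by omega)
        exact (hdom m).2 (Or.inr ⟨y, hy, this, by omega⟩) hmn
      · omega
    obtain ⟨ℓ', hc', hm', hext2, hdom2⟩ := extend_label (ℓ := ℓ) h hc hm T hTm
      (by
        intro x hx
        obtain ⟨-, y, hy, -, hr, -⟩ := hT x hx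
        exact hreachC y (hAC hy) x hr)
      (fun x hx => (hT x hx).1)
      (by
        intro x hx
        obtain ⟨hxn, y, hy, hxK, hr, hdx⟩ := hT x hx
        have hxC := hreachC y (hAC hy) x hr
        let P1 : X → Prop := fun u => S.ℓ u ≠ none ∧
          (G.Adj u x ∨ ∃ m, ℓ m = none ∧ G.Adj m x ∧ G.Adj u m)
        let P2 : X → Prop := fun u => G.Adj u x ∧ G.dist y u < t
        have hu1 : ∃ u₁, ∀ u, P1 u → u = u₁ := by
          by_cases hex : ∃ u, P1 u
          · obtain ⟨u₁, hu₁⟩ := hex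
            exact ⟨u₁, fun u hu => D_unique S ℓ hext' x hxn u u₁ hu.1 hu₁.1 hu.2 hu₁.2⟩
          · exact ⟨x, fun u hu => (hex ⟨u, hu⟩).elim⟩
        have hu2 : ∃ u₂, ∀ u, P2 u → u = u₂ := by
          by_cases hex : ∃ u, P2 u
          · obtain ⟨u₂, hu₂⟩ := hex
            exact ⟨u₂, fun u hu => parent_unique hG hr hu.1 hu₂.1 (by rw [hdx]; exact hu.2)
              (by rw [hdx]; exact hu₂.2)⟩
          · exact ⟨x, fun u hu => (hex ⟨u, hu⟩).elim⟩
        obtain ⟨u₁, hu₁⟩ := hu1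
        obtain ⟨u₂, hu₂⟩ := hu2
        refine exists_sigma hG h hc x hxC hxn u₁ u₂ fun u hu hcu => ?_
        rcases (hdom u).1 hu with hD | ⟨y', hy', huK, hud⟩
        · exact Or.inl (hu₁ u ⟨hD, hcu⟩)
        · right
          have hux : Nr G 2 u x := by
            rcases hcu with hh | ⟨m, -, h1, h2⟩
            · exact (Nr.of_adj hh).mono (by norm_num)
            · exact (Nr.of_adj h2).trans (Nr.of_adj h1)
          obtain rfl := hsame y' hy' y hy u x huK hxK hux
          apply hu₂
          refine ⟨?_, hud⟩
          rcases hcu with hh | ⟨m, hmn, h1, h2⟩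
          · exact hh
          · exfalso
            have h3 := hfar y' hy' x hxK hr hdx m h1 hmn
            have h4 := dist_cases hG h2 (hr.trans hux.symm.reach)
            omega)
      (by
        intro x hx x' hx' hadj
        obtain ⟨hxn, y, hy, hxK, hr, hdx⟩ := hT x hx
        obtain ⟨hxn', y', hy', hxK', hr', hdx'⟩ := hT x' hx'
        obtain rfl := hsame y hy y' hy' x x' hxK hxK' ((Nr.of_adj hadj).mono (by norm_num))
        have := dist_cases hG hadj hr
        omega)
      (by
        intro x hx x' hx' m h1 h2 hmn
        obtain ⟨hxn, y, hy, hxK, hr, hdx⟩ := hT x hx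
        obtain ⟨hxn', y', hy', hxK', hr', hdx'⟩ := hT x' hx'
        obtain rfl := hsame y hy y' hy' x x' hxK hxK' ((Nr.of_adj h1).trans (Nr.of_adj h2.symm))
        have h3 := hfar y hy x hxK hr hdx m h1.symm hmn
        exact parent_unique hG (hr.trans h1.reachable) h1 h2 (by omega) (by omega))
    refine ⟨ℓ', hc', hm', fun x σ hx => hext2 x σ (hext x σ hx), fun x => ?_⟩
    rw [hdom2 x, hdom x]
    constructor
    · rintro ((hx | ⟨y, hy, hxK, hlt⟩) | hx)
      · exact Or.inl hx
      · exact Or.inr ⟨y, hy, hxK, by omega⟩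
      · obtain ⟨hxn, y, hy, hxK, hr, hdx⟩ := hT x hx
        exact Or.inr ⟨y, hy, hxK, by omega⟩
    · rintro (hx | ⟨y, hy, hxK, hlt⟩)
      · exact Or.inl (Or.inl hx)
      · by_cases hxn : ℓ x = none
        · right
          exact ⟨⟨y, hy, hxK, nr_iff_dist.2 ⟨(S.Kup _ _ _ hxK).reach, by omega⟩⟩, hxn⟩
        · left; exact (hdom x).1 hxn

theorem stage_step (hG : G.IsAcyclic) (h : IsEnum C G n)
    (hsupp : ∀ x y : X, G.Adj x y → x ∈ C ∧ y ∈ C) (S : Stage C G n) (A : Set X)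
    (hA : MeasurableSet A) (hAC : A ⊆ C)
    (hsp : ∀ y ∈ A, ∀ y' ∈ A, Nr G S.s y y' → y = y') :
    ∃ S' : Stage C G n, (∀ x σ, S.ℓ x = some σ → S'.ℓ x = some σ) ∧ ∀ y ∈ A, S'.ℓ y ≠ none := by
  obtain ⟨ℓ', hc, hm, hext, hdom0⟩ := label_step hG h hsupp S A hA hAC hsp (S.M 0 + 1)
  have hdom : ∀ x, ℓ' x ≠ none ↔ S.ℓ x ≠ none ∨ ∃ y ∈ A, x ∈ S.K 0 y := by
    intro x
    rw [hdom0]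
    refine or_congr_right ⟨?_, ?_⟩
    · rintro ⟨y, hy, hx, -⟩; exact ⟨y, hy, hx⟩
    · rintro ⟨y, hy, hx⟩
      exact ⟨y, hy, hx, Nat.lt_succ_of_le (nr_iff_dist.1 (S.Kup _ _ _ hx)).2⟩
  let Q : ℕ → X → X → Prop := fun m x y => ∃ u, u ∈ S.K 0 y ∧ ∃ v, v ∈ S.K m x ∧ Nr G 4 u v
  have hQr : ∀ m x y, Q m x y → Nr G (S.M m + 4 + S.M 0) x y := by
    rintro m x y ⟨u, hu, v, hv, huv⟩
    exact ((S.Kup _ _ _ hv).trans huv.symm).trans (S.Kup _ _ _ hu).symm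
  have hQm : ∀ m, MeasurableSet {p : X × X | Q m p.1 p.2} := by
    intro m
    refine measurable_ex h (g := Prod.snd) measurable_snd
      (R := fun p u => u ∈ S.K 0 p.2 ∧ ∃ v, v ∈ S.K m p.1 ∧ Nr G 4 u v) ?_ ?_
    · refine MeasurableSet.inter ?_ ?_
      · have : Measurable (fun q : (X × X) × X => (q.1.2, q.2)) := by fun_prop
        exact this (S.Kmeas 0)
      · refine measurable_ex h (g := fun q : (X × X) × X => q.2) measurable_snd
          (R := fun q v => v ∈ S.K m q.1.1 ∧ Nr G 4 q.2 v) ?_ ?_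
        · refine MeasurableSet.inter ?_ ?_
          · have : Measurable (fun q : ((X × X) × X) × X => (q.1.1.1, q.2)) := by fun_prop
            exact this (S.Kmeas m)
          · have : Measurable (fun q : ((X × X) × X) × X => (q.1.2, q.2)) := by fun_prop
            exact this (measurable_nr h 4)
        · rintro q v ⟨-, hv⟩; exact hv.reach
    · rintro p u ⟨hu, -⟩; exact (S.Kup _ _ _ hu).reach
  let m' := S.M 0 + 4
  have hK0 : ∀ y, S.K 0 y ⊆ S.K m' y := fun y z hz =>
    S.Klow _ _ _ ((S.Kup _ _ _ hz).mono (by simp only [m']; omega))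
  let K' : ℕ → X → Set X := fun m x => S.K m x ∪ {z | ∃ y, y ∈ A ∧ z ∈ S.K m' y ∧ Q m x y}
  refine ⟨⟨ℓ', K', fun m => S.M m + 4 + S.M 0 + S.M m', hc, hm, ?_, ?_, ?_, ?_, ?_, ?_⟩, hext, ?_⟩
  · intro m
    refine MeasurableSet.union (S.Kmeas m) ?_
    refine measurable_ex h (g := Prod.fst) measurable_fst
      (R := fun p y => y ∈ A ∧ p.2 ∈ S.K m' y ∧ Q m p.1 y) ?_ ?_
    · refine (measurable_snd hA).inter (MeasurableSet.inter ?_ ?_)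
      · have : Measurable (fun q : (X × X) × X => (q.2, q.1.2)) := by fun_prop
        exact this (S.Kmeas m')
      · have : Measurable (fun q : (X × X) × X => (q.1.1, q.2)) := by fun_prop
        exact this (hQm m)
    · rintro p y ⟨-, -, hq⟩; exact (hQr _ _ _ hq).reach
  · intro m x z hz; exact Or.inl (S.Klow _ _ _ hz)
  · rintro m x z (hz | ⟨y, hy, hz, hq⟩)
    · exact (S.Kup _ _ _ hz).mono (by omega)
    · exact (hQr _ _ _ hq).trans (S.Kup _ _ _ hz)
  · rintro m x z (hz | ⟨y, hy, hz, hq⟩)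
    · exact (S.Kconn _ _ _ hz).mono subset_union_left
    · have hsub : S.K m' y ⊆ K' m x := fun z hz => Or.inr ⟨y, hy, hz, hq⟩
      obtain ⟨u, hu, v, hv, huv⟩ := hq
      have hv' : v ∈ S.K m' y := S.Klow _ _ _ ((S.Kup _ _ _ hu).trans huv)
      exact (((S.Kconn _ _ _ hv).mono subset_union_left).trans
        ((S.Kconn _ _ _ hv').mono hsub).symm).trans ((S.Kconn _ _ _ hz).mono hsub)
  · intro m x u d hu hd hud
    rcases (hdom d).1 hd with hD | ⟨y', hy', hdy⟩
    · rcases hu with hu | ⟨y, hy, hu, hq⟩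
      · exact Or.inl (S.Ksep _ _ _ _ hu hD hud)
      · exact Or.inr ⟨y, hy, S.Ksep _ _ _ _ hu hD hud, hq⟩
    · rcases hu with hu | ⟨y, hy, hu, hq⟩
      · exact Or.inr ⟨y', hy', hK0 _ hdy, d, hdy, u, hu, hud.symm⟩
      · have : y = y' := by
          refine hsp y hy y' hy' ((((S.Kup _ _ _ hu).trans hud).trans (S.Kup _ _ _ hdy).symm).mono ?_)
          simp only [Stage.s, m']; omega
        subst this
        exact Or.inr ⟨y, hy, hK0 _ hdy, hq⟩
  · intro u v hu hv p hp hlen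
    have hmain : ∀ y ∈ A, u ∈ S.K 0 y → v ∈ S.K 0 y → ∀ z ∈ p.support, ℓ' z ≠ none := by
      intro y hy hu hv z hz
      exact (hdom z).2 (Or.inr ⟨y, hy,
        (((S.Kconn _ _ _ hu).symm.trans (S.Kconn _ _ _ hv)).path hG p hp z hz)⟩)
    have huv : Nr G 4 u v := ⟨p, hlen⟩
    rcases (hdom u).1 hu with hu | ⟨y, hy, hu⟩ <;> rcases (hdom v).1 hv with hv | ⟨y', hy', hv⟩
    · intro z hz; exact (hdom z).2 (Or.inl (S.conv u v hu hv p hp hlen z hz))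
    · exact hmain y' hy' (S.Ksep _ _ _ _ hv hu huv.symm) hv
    · exact hmain y hy hu (S.Ksep _ _ _ _ hu hv huv)
    · have : y = y' := by
        refine hsp y hy y' hy' ((((S.Kup _ _ _ hu).trans huv).trans (S.Kup _ _ _ hv).symm).mono ?_)
        simp only [Stage.s]; omega
      subst this
      exact hmain y hy hu hv
  · intro y hy
    exact (hdom y).2 (Or.inr ⟨y, hy, S.Klow _ _ _ (Nr.refl _ _)⟩)

end
end MU
end

section
open Set MeasureTheory

namespace MU

theorem free_of_labels {X : Type*} {G : SimpleGraph X} (hG : G.IsAcyclic) {A : Set X}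
    (F : Fin 4 → Equiv.Perm A) (hadj : ∀ l (x : A), G.Adj (x : X) (F l x : X))
    (hinj : ∀ x : A, Function.Injective (fun l => F l x))
    (hinv : ∀ l, F (linv l) = (F l)⁻¹) :
    ∀ w : FreeGroup (Fin 2), w ≠ 1 → ∀ x : A, (FreeGroup.lift ![F 0, F 2]) w x ≠ x := by
  have hlab : ∀ a : Fin 2 × Bool, ∃ l, cond a.2 (![F 0, F 2] a.1) (![F 0, F 2] a.1)⁻¹ = F l ∧
      l = ![![1, 0], ![3, 2]] a.1 (if a.2 then 1 else 0) := by
    rintro ⟨i, b⟩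
    have h0 := hinv 0
    have h2 := hinv 2
    fin_cases i <;> cases b
    · exact ⟨1, by simpa [linv] using h0.symm, rfl⟩
    · exact ⟨0, by simp, rfl⟩
    · exact ⟨3, by simpa [linv] using h2.symm, rfl⟩
    · exact ⟨2, by simp, rfl⟩
  choose lab hlab1 hlab2 using hlab
  have hred : ∀ a b : Fin 2 × Bool, lab a = linv (lab b) → ¬ (a.1 = b.1 → a.2 = b.2) := by
    intro a b
    rw [hlab2, hlab2]
    revert a b
    decide
  have key : ∀ (L : List (Fin 2 × Bool)), FreeGroup.IsReduced L → ∀ x : A,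
      G.Reachable (x : X) (FreeGroup.lift ![F 0, F 2] (FreeGroup.mk L) x : A) ∧
      G.dist (x : X) (FreeGroup.lift ![F 0, F 2] (FreeGroup.mk L) x : A) = L.length ∧
      ∀ b L', L = b :: L' →
        G.dist (x : X) (FreeGroup.lift ![F 0, F 2] (FreeGroup.mk L') x : A) = L'.length := by
    have hcons : ∀ a L (x : A), FreeGroup.lift ![F 0, F 2] (FreeGroup.mk (a :: L)) x =
        F (lab a) (FreeGroup.lift ![F 0, F 2] (FreeGroup.mk L) x) := by
      intro a L x
      rw [FreeGroup.lift_mk, FreeGroup.lift_mk, List.map_cons, List.prod_cons, ← hlab1]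
      rfl
    intro L
    induction L with
    | nil => intro _ x; simp [FreeGroup.lift_mk]
    | cons a L ih =>
      intro hr x
      have hr' : FreeGroup.IsReduced L := List.IsChain.tail hr
      obtain ⟨h1, h2, h3⟩ := ih hr' x
      have had := hadj (lab a) (FreeGroup.lift ![F 0, F 2] (FreeGroup.mk L) x)
      rw [hcons]
      refine ⟨h1.trans had.reachable, ?_, by rintro _ _ ⟨⟩; exact h2⟩
      cases L with
      | nil =>
        simp only [FreeGroup.lift_mk, List.map_nil, List.prod_nil, Equiv.Perm.coe_one, id] at had ⊢
        simpa using SimpleGraph.dist_eq_one_iff_adj.2 had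
      | cons b L =>
        have h4 := h3 b L rfl
        rw [hcons] at h1 h2 had ⊢
        rw [List.length_cons] at h2
        rcases dist_cases hG had h1 with h5 | h5
        · exfalso
          have hr'' : FreeGroup.IsReduced L := List.IsChain.tail hr'
          set z := FreeGroup.lift ![F 0, F 2] (FreeGroup.mk L) x with hz
          have hzy := hadj (lab b) z
          have hdz : G.dist (x : X) z < G.dist (x : X) (F (lab b) z) := by omega
          have := parent_unique hG h1 had.symm hzy (by omega) hdz
          have h6 : F (lab a) (F (lab b) z) = F (linv (lab b)) (F (lab b) z) := by
            rw [hinv]; simpa using Subtype.ext this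
          have h7 := hinj _ h6
          exact hred a b h7 (FreeGroup.isReduced_cons_cons.1 hr).1
        · rw [h5, h2]; rfl
  intro w hw x hx
  have := (key w.toWord FreeGroup.isReduced_toWord x).2.1
  rw [FreeGroup.mk_toWord, hx, SimpleGraph.dist_self] at this
  exact hw (FreeGroup.toWord_eq_nil_iff.1 (List.length_eq_zero_iff.1 this.symm))

section
variable {X : Type*} [TopologicalSpace X] [PolishSpace X]
    [MeasurableSpace X] [BorelSpace X] {C : Set X} {G : SimpleGraph X} {n : Fin 4 → X → X}

theorem one_step (hG : G.IsAcyclic) (h : IsEnum C G n)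
    (hC : MeasurableSet C) (hCc : C ∈ residual X)
    (hsupp : ∀ x y : X, G.Adj x y → x ∈ C ∧ y ∈ C) (S : Stage C G n) (U : Set X)
    (hU : IsOpen U) (hne : U.Nonempty) (w : List (Fin 4)) :
    ∃ S' : Stage C G n, (∀ x σ, S.ℓ x = some σ → S'.ℓ x = some σ) ∧
      ¬ IsMeagre (U ∩ {x | S'.ℓ (act n w x) ≠ none}) := by
  obtain ⟨c, hc, hcol⟩ := exists_coloring h S.s
  have : ∃ k, ¬ IsMeagre (U ∩ {x | act n w x ∈ C ∩ c ⁻¹' {k}}) := by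
    by_contra! hcon
    have h1 := isMeagre_iUnion hcon
    have h2 : IsMeagre Cᶜ := by rwa [IsMeagre, compl_compl]
    refine not_isMeagre_of_isOpen hU hne ((h1.union h2).mono ?_)
    intro x hx
    by_cases hxC : x ∈ C
    · left
      exact mem_iUnion.2 ⟨c (act n w x), hx, act_mem h hsupp w hxC, rfl⟩
    · right; exact hxC
  obtain ⟨k, hk⟩ := this
  obtain ⟨S', h1, h2⟩ := stage_step hG h hsupp S (C ∩ c ⁻¹' {k})
    (hC.inter (hc (measurableSet_singleton k))) inter_subset_left
    (fun y hy y' hy' hn => hcol y y' hn (hy.2.trans hy'.2.symm))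
  refine ⟨S', h1, fun hm => hk (hm.mono ?_)⟩
  rintro x ⟨hx, hx'⟩
  exact ⟨hx, h2 _ hx'⟩

theorem residual_of_nonmeagre {B : Set X} (hB : MeasurableSet B)
    (h : ∀ U ∈ TopologicalSpace.countableBasis X, ¬ IsMeagre (U ∩ B)) : B ∈ residual X := by
  obtain ⟨V, hV, hBV⟩ := hB.residualEq_isOpen
  have hd : Dense V := by
    rw [dense_iff_inter_open]
    intro W hW ⟨x, hx⟩
    obtain ⟨U, hU, hxU, hUW⟩ :=
      (TopologicalSpace.isBasis_countableBasis X).exists_subset_of_mem_open hx hW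
    by_contra hcon
    apply h U hU
    filter_upwards [hBV] with y hy hy'
    have hy2 : y ∈ V := (show (y ∈ B) = (y ∈ V) from hy) ▸ hy'.2
    exact hcon ⟨y, hUW hy'.1, hy2⟩
  filter_upwards [hBV, residual_of_dense_open hV hd] with y hy hyV
  exact (show (y ∈ B) = (y ∈ V) from hy) ▸ hyV

theorem measurable_dom (h : IsEnum C G n) (St : ℕ → Stage C G n) (w : List (Fin 4)) :
    MeasurableSet {x | ∃ k, (St k).ℓ (act n w x) ≠ none} := by
  have : {x | ∃ k, (St k).ℓ (act n w x) ≠ none} =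
      ⋃ k, act n w ⁻¹' ((St k).ℓ ⁻¹' {none})ᶜ := by
    ext x; simp
  rw [this]
  exact MeasurableSet.iUnion fun k => measurable_act h w ((St k).meas none).compl

theorem exists_seq (hG : G.IsAcyclic) (h : IsEnum C G n)
    (hC : MeasurableSet C) (hCc : C ∈ residual X)
    (hsupp : ∀ x y : X, G.Adj x y → x ∈ C ∧ y ∈ C) :
    ∃ St : ℕ → Stage C G n, (∀ k x σ, (St k).ℓ x = some σ → (St (k+1)).ℓ x = some σ) ∧
      ∀ w, {x | ∃ k, (St k).ℓ (act n w x) ≠ none} ∈ residual X := by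
  classical
  have : Countable (TopologicalSpace.countableBasis X) :=
    (TopologicalSpace.countable_countableBasis X).to_subtype
  obtain ⟨e, he⟩ := exists_surjective_nat (Option (TopologicalSpace.countableBasis X × List (Fin 4)))
  obtain ⟨S0⟩ := stage_zero h
  have step : ∀ (k : ℕ) (S : Stage C G n), ∃ S' : Stage C G n,
      (∀ x σ, S.ℓ x = some σ → S'.ℓ x = some σ) ∧ ∀ q, e k = some q →
        ¬ IsMeagre ((q.1 : Set X) ∩ {x | S'.ℓ (act n q.2 x) ≠ none}) := by
    intro k S
    cases hk : e k with
    | none => exact ⟨S, fun _ _ h => h, by simp⟩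
    | some q =>
      obtain ⟨S', h1, h2⟩ := one_step hG h hC hCc hsupp S q.1
        (TopologicalSpace.isOpen_of_mem_countableBasis q.1.2)
        (TopologicalSpace.nonempty_of_mem_countableBasis q.1.2) q.2
      refine ⟨S', h1, ?_⟩
      rintro _ ⟨⟩
      exact h2
  choose nx h1 h2 using step
  let St : ℕ → Stage C G n := fun k => Nat.rec S0 (fun k S => nx k S) k
  refine ⟨St, fun k x σ hx => h1 k (St k) x σ hx, fun w => ?_⟩
  refine residual_of_nonmeagre (measurable_dom h St w) fun U hU hm => ?_
  obtain ⟨k, hk⟩ := he (some (⟨U, hU⟩, w))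
  refine h2 k (St k) _ hk (hm.mono ?_)
  rintro x ⟨hx, hx'⟩
  exact ⟨hx, k+1, hx'⟩


theorem assemble (hG : G.IsAcyclic) (h : IsEnum C G n)
    (hC : MeasurableSet C) (hCc : C ∈ residual X)
    (hsupp : ∀ x y : X, G.Adj x y → x ∈ C ∧ y ∈ C) :
    ∃ A : Set X, A ⊆ C ∧ MeasurableSet A ∧ A ∈ residual X ∧
      (∀ x y : X, G.Adj x y → (x ∈ A ↔ y ∈ A)) ∧
      ∃ F : Fin 4 → Equiv.Perm A, (∀ l, Measurable (fun x : A => (F l x : X))) ∧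
        (∀ l (x : A), G.Adj (x : X) (F l x : X)) ∧
        (∀ x : A, Function.Injective (fun l => F l x)) ∧
        (∀ l, F (linv l) = (F l)⁻¹) ∧
        ∀ x y : A, G.Adj (x : X) (y : X) → ∃ l, F l x = y := by
  classical
  obtain ⟨St, hmono, hres⟩ := exists_seq hG h hC hCc hsupp
  have hmono' : ∀ j k, j ≤ k → ∀ x σ, (St j).ℓ x = some σ → (St k).ℓ x = some σ := by
    intro j k hjk x σ hx
    induction k, hjk using Nat.le_induction with
    | base => exact hx
    | succ k _ ih => exact hmono k x σ ih
  let A : Set X := C ∩ ⋂ w, {x | ∃ k, (St k).ℓ (act n w x) ≠ none}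
  have hAadj : ∀ x y : X, G.Adj x y → x ∈ A → y ∈ A := by
    intro x y hxy hx
    refine ⟨(hsupp _ _ hxy).2, mem_iInter.2 fun w => ?_⟩
    obtain ⟨i, rfl⟩ := h.surj x y hxy
    exact mem_iInter.1 hx.2 (i :: w)
  have hAn : ∀ x ∈ A, ∀ i, n i x ∈ A := fun x hx i => hAadj _ _ (h.adj x hx.1 i) hx
  have hlim : ∀ x ∈ A, ∃ σ : Equiv.Perm (Fin 4), ∃ k, (St k).ℓ x = some σ := by
    intro x hx
    obtain ⟨k, hk⟩ := mem_iInter.1 hx.2 []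
    obtain ⟨σ, hσ⟩ := Option.ne_none_iff_exists'.1 hk
    exact ⟨σ, k, hσ⟩
  have huniq : ∀ x σ τ j k, (St j).ℓ x = some σ → (St k).ℓ x = some τ → σ = τ := by
    intro x σ τ j k h1 h2
    have h3 := hmono' j _ (le_max_left j k) x σ h1
    have h4 := hmono' k _ (le_max_right j k) x τ h2
    exact Option.some.inj (h3.symm.trans h4)
  have hs : ∃ s : A → Equiv.Perm (Fin 4), ∀ x : A, ∃ k, (St k).ℓ (x : X) = some (s x) := by
    choose s hs using fun x : A => hlim x x.2
    exact ⟨s, hs⟩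
  obtain ⟨s, hs⟩ := hs
  have hsm : ∀ σ, MeasurableSet {x : A | s x = σ} := by
    intro σ
    have : {x : A | s x = σ} = (Subtype.val : A → X) ⁻¹' (⋃ k, (St k).ℓ ⁻¹' {some σ}) := by
      ext x
      simp only [mem_ofPred_eq, mem_preimage, mem_iUnion, mem_singleton_iff]
      constructor
      · rintro rfl; exact hs x
      · rintro ⟨k, hk⟩
        obtain ⟨j, hj⟩ := hs x
        exact huniq _ _ _ _ _ hj hk
    rw [this]
    exact measurable_subtype_coe (MeasurableSet.iUnion fun k => (St k).meas _)
  have hedge : ∀ (x y : A) (i j : Fin 4), n i (x : X) = (y : X) → n j (y : X) = (x : X) → s y j = linv (s x i) := by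
    intro x y i j hi hj
    obtain ⟨k, hk⟩ := hs x
    obtain ⟨k', hk'⟩ := hs y
    have h3 := hmono' k _ (le_max_left k k') _ _ hk
    have h4 := hmono' k' _ (le_max_right k k') _ _ hk'
    exact (St (max k k')).compat.edge x y _ _ ⟨_, i, h3, hi, rfl⟩ ⟨_, j, h4, hj, rfl⟩
  let g : Fin 4 → A → A := fun l x => ⟨n ((s x).symm l) x, hAn x x.2 _⟩
  have hgadj : ∀ l (x : A), G.Adj (x : X) (g l x : X) := fun l x => h.adj x x.2.1 _
  have hginv : ∀ l x, g (linv l) (g l x) = x := by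
    intro l x
    obtain ⟨j, hj⟩ := h.surj _ _ (hgadj l x).symm
    have h1 := hedge x (g l x) _ j rfl hj
    rw [Equiv.apply_symm_apply] at h1
    apply Subtype.ext
    change n ((s (g l x)).symm (linv l)) (g l x) = x
    rw [← h1, Equiv.symm_apply_apply, hj]
  let F : Fin 4 → Equiv.Perm A := fun l =>
    ⟨g l, g (linv l), hginv l, fun x => by simpa [linv_linv] using hginv (linv l) x⟩
  refine ⟨A, inter_subset_left, hC.inter (MeasurableSet.iInter fun w => measurable_dom h St w),
    Filter.inter_mem hCc (countable_iInter_mem.2 hres),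
    fun x y hxy => ⟨hAadj x y hxy, hAadj y x hxy.symm⟩, F, ?_, hgadj, ?_, ?_, ?_⟩
  · intro l B hB
    have : (fun x : A => (F l x : X)) ⁻¹' B =
        ⋃ σ : Equiv.Perm (Fin 4), {x : A | s x = σ} ∩ (fun x : A => n (σ.symm l) x) ⁻¹' B := by
      ext x
      simp only [mem_preimage, mem_iUnion, mem_inter_iff, mem_ofPred_eq]
      constructor
      · intro hx; exact ⟨s x, rfl, hx⟩
      · rintro ⟨_, rfl, hx⟩; exact hx
    rw [this]
    exact MeasurableSet.iUnion fun σ => (hsm σ).inter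
      (((h.meas _).comp measurable_subtype_coe) hB)
  · intro x l l' hll
    have h1 : n ((s x).symm l) x = n ((s x).symm l') x := congrArg Subtype.val hll
    exact (s x).symm.injective (h.inj x x.2.1 h1)
  · intro l
    ext x
    rfl
  · intro x y hxy
    obtain ⟨i, hi⟩ := h.surj _ _ hxy
    refine ⟨s x i, Subtype.ext ?_⟩
    change n ((s x).symm (s x i)) x = y
    rw [Equiv.symm_apply_apply, hi]

end
end MU
end


/-- **Lemma (Marks–Unger).** Suppose `G` is an acyclic `4`-regular Borel graph on a comeager
Borel subset `C` of a Polish space `X`. Then there is a `G`-invariant comeager Borel set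
`A ⊆ C` and a free Borel action of `F₂` on `A` generating `G ↾ A`: there are Borel
automorphisms `f₁, f₂` of `A` with `f₁ x ≠ f₂ x` for all `x ∈ A`, generating a free action of
`F₂`, such that the edges of `G ↾ A` are exactly the pairs `{x, f₁ x}` and `{x, f₂ x}`. -/
theorem free_F2_action_on_four_regular_tree {X : Type*} [TopologicalSpace X] [PolishSpace X]
    [MeasurableSpace X] [BorelSpace X]
    (C : Set X) (hCBorel : MeasurableSet C) (hCcomeager : C ∈ residual X)
    (G : SimpleGraph X)
    (hsupp : ∀ x y : X, G.Adj x y → x ∈ C ∧ y ∈ C)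
    (hGBorel : MeasurableSet {p : X × X | G.Adj p.1 p.2})
    (hreg : ∀ x ∈ C, (G.neighborSet x).ncard = 4)
    (hacyclic : G.IsAcyclic) :
    ∃ A : Set X, A ⊆ C ∧ MeasurableSet A ∧ A ∈ residual X ∧
      (∀ x y : X, G.Adj x y → (x ∈ A ↔ y ∈ A)) ∧
      ∃ f₁ f₂ : Equiv.Perm A,
        -- `f₁`, `f₂` and their inverses are Borel
        Measurable (fun x : A => (f₁ x : X)) ∧ Measurable (fun x : A => (f₁.symm x : X)) ∧
        Measurable (fun x : A => (f₂ x : X)) ∧ Measurable (fun x : A => (f₂.symm x : X)) ∧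
        -- `f₁ x` and `f₂ x` are distinct `G`-neighbors of `x`
        (∀ x : A, f₁ x ≠ f₂ x) ∧
        (∀ x : A, G.Adj (x : X) (f₁ x : X)) ∧
        (∀ x : A, G.Adj (x : X) (f₂ x : X)) ∧
        -- the action of `F₂` generated by `f₁` and `f₂` is free
        (∀ w : FreeGroup (Fin 2), w ≠ 1 → ∀ x : A, (FreeGroup.lift ![f₁, f₂]) w x ≠ x) ∧
        -- the edges of `G ↾ A` are exactly the pairs `{x, f₁ x}` and `{x, f₂ x}` for `x ∈ A`
        (∀ x y : A, G.Adj (x : X) (y : X) ↔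
          (f₁ x = y ∨ f₂ x = y ∨ f₁ y = x ∨ f₂ y = x)) := by
  obtain ⟨n, h⟩ := MU.exists_enum C hCBorel G hsupp hGBorel hreg
  obtain ⟨A, hAC, hAm, hAr, hAi, F, hm, hadj, hinj, hinv, hsurj⟩ :=
    MU.assemble hacyclic h hCBorel hCcomeager hsupp
  have h1 : F 1 = (F 0)⁻¹ := hinv 0
  have h3 : F 3 = (F 2)⁻¹ := hinv 2
  refine ⟨A, hAC, hAm, hAr, hAi, F 0, F 2, hm 0, ?_, hm 2, ?_, ?_, hadj 0, hadj 2,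
    MU.free_of_labels hacyclic F hadj hinj hinv, ?_⟩
  · have := hm 1; rw [h1] at this; exact this
  · have := hm 3; rw [h3] at this; exact this
  · intro x hx
    have := hinj x hx
    exact absurd this (by decide)
  · intro x y
    constructor
    · intro hxy
      obtain ⟨l, hl⟩ := hsurj x y hxy
      fin_cases l
      · exact Or.inl hl
      · right; right; left
        change F 1 x = y at hl
        rw [← hl, h1]; simp
      · exact Or.inr (Or.inl hl)
      · right; right; right
        change F 3 x = y at hl
        rw [← hl, h3]; simp
    · rintro (rfl | rfl | rfl | rfl)
      · exact hadj 0 x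
      · exact hadj 2 x
      · exact (hadj 0 y).symm
      · exact (hadj 2 y).symm
end

section
/- The closed unit ball B in ℝ³ admits a paradoxical decomposition, using the group of isometries of ℝ³, in which every piece has the Baire property: there is a partition of B into finitely many sets A₁, …, Aₙ, B₁, …, B_m, each having the Baire property, and isometries α₁, …, αₙ, β₁, …, β_m of ℝ³, such that the sets αᵢAᵢ are pairwise disjoint with union B and the sets βⱼBⱼ are pairwise disjoint with union B. -/
open scoped Pointwise
open scoped Classical in
theorem bt_hall_sb {Ω : Type*} (U V : Set Ω) (nb : Ω → Finset Ω)
    (hsym : ∀ x y, y ∈ nb x → x ∈ nb y)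
    (hU : ∀ F : Finset Ω, (∀ x ∈ F, x ∈ U) →
      F.card ≤ ((F.biUnion nb).filter (fun y => y ∈ V)).card)
    (hV : ∀ F : Finset Ω, (∀ x ∈ F, x ∈ V) →
      F.card ≤ ((F.biUnion nb).filter (fun y => y ∈ U)).card) :
    ∃ h : U → V, Function.Bijective h ∧ ∀ u : U, (h u : Ω) ∈ nb u := by
  have key : ∀ U V : Set Ω, (∀ F : Finset Ω, (∀ x ∈ F, x ∈ U) →
      F.card ≤ ((F.biUnion nb).filter (fun y => y ∈ V)).card) →
      ∃ f : U → V, Function.Injective f ∧ ∀ u : U, (f u : Ω) ∈ nb u := by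
    intro U V hU
    have := (Finset.all_card_le_biUnion_card_iff_exists_injective
      (fun u : U => (nb u).filter (fun y => y ∈ V))).1 ?_
    · obtain ⟨f, hf, hf2⟩ := this
      refine ⟨fun u => ⟨f u, (Finset.mem_filter.1 (hf2 u)).2⟩, ?_, ?_⟩
      · intro a b hab
        exact hf (congrArg Subtype.val hab)
      · intro u
        exact (Finset.mem_filter.1 (hf2 u)).1
    · intro s
      have := hU (s.map (Function.Embedding.subtype _)) (by
        intro x hx
        simp only [Finset.mem_map, Function.Embedding.subtype_apply] at hx
        obtain ⟨a, _, rfl⟩ := hx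
        exact a.2)
      rw [Finset.card_map] at this
      refine this.trans (Finset.card_le_card ?_)
      intro y hy
      simp only [Finset.mem_filter, Finset.mem_biUnion, Finset.mem_map,
        Function.Embedding.subtype_apply] at hy ⊢
      obtain ⟨⟨a, ⟨u, hu, rfl⟩, h⟩, hyV⟩ := hy
      exact ⟨u, hu, h, hyV⟩
  obtain ⟨f, hf, hf2⟩ := key U V hU
  obtain ⟨g, hg, hg2⟩ := key V U hV
  exact Function.Embedding.schroeder_bernstein_of_rel hf hg
    (fun u v => (v : Ω) ∈ nb u) hf2 (fun v => hsym _ _ (hg2 v))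

noncomputable section
open scoped Classical

def btN {Γ : Type*} [Group Γ] (S : Finset Γ) (p : Γ → Option Bool) (b : Bool) (F : Finset Γ) :
    Finset Γ := (S * F).filter (fun g => p g = some (!b))

def btHall {Γ : Type*} [Group Γ] (S : Finset Γ) (p : Γ → Option Bool) : Prop :=
  ∀ b (F : Finset Γ), (∀ g ∈ F, p g = some b) → F.card ≤ (btN S p b F).card

def btConn {Γ : Type*} [Group Γ] (S : Finset Γ) (F : Finset Γ) : Prop :=
  ∀ P ⊆ F, P.Nonempty → P ≠ F → ¬ Disjoint (S * P) (S * (F \ P))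

def btGood {Γ : Type*} [Group Γ] (S : Finset Γ) (k : ℕ) (p : Γ → Option Bool) : Prop :=
  ∀ b (F : Finset Γ), (∀ g ∈ F, p g = some b) → btConn S F →
    F.card ≤ (btN S p b F).card ∧ (k ≤ F.card → (k + 1) * F.card ≤ k * (btN S p b F).card)

def btRem {Γ : Type*} (p : Γ → Option Bool) (A : Set Γ) : Γ → Option Bool :=
  fun g => if g ∈ A then none else p g

variable {Γ : Type*} [Group Γ]

theorem btRem_some {Γ : Type*} {p : Γ → Option Bool} {A : Set Γ} {g : Γ} {b : Bool} :
    btRem p A g = some b ↔ g ∉ A ∧ p g = some b := by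
  unfold btRem; split_ifs with h <;> simp [h]

theorem btHall_of_conn {S : Finset Γ} {p : Γ → Option Bool}
    (h : ∀ b (F : Finset Γ), (∀ g ∈ F, p g = some b) → btConn S F →
      F.card ≤ (btN S p b F).card) : btHall S p := by
  intro b F
  induction F using Finset.strongInduction with
  | H F ih =>
    intro hF
    by_cases hc : btConn S F
    · exact h b F hF hc
    · unfold btConn at hc
      push Not at hc
      obtain ⟨P, hPF, hP, hne, hd⟩ := hc
      have h1 := ih P (hPF.ssubset_of_ne hne) (fun g hg => hF g (hPF hg))
      have h2 := ih (F \ P) (Finset.sdiff_ssubset hPF hP)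
        (fun g hg => hF g (Finset.sdiff_subset hg))
      have h3 : btN S p b P ∪ btN S p b (F \ P) ⊆ btN S p b F := by
        unfold btN
        rw [← Finset.filter_union]
        apply Finset.filter_subset_filter
        apply Finset.union_subset
        · exact Finset.mul_subset_mul_left hPF
        · exact Finset.mul_subset_mul_left Finset.sdiff_subset
      have h4 : Disjoint (btN S p b P) (btN S p b (F \ P)) :=
        Finset.disjoint_filter_filter hd
      have h5 := Finset.card_le_card h3
      rw [Finset.card_union_of_disjoint h4] at h5
      have h6 := Finset.card_sdiff_add_card_eq_card hPF
      omega

theorem btGood.hall {S : Finset Γ} {p : Γ → Option Bool} {k : ℕ} (h : btGood S k p) :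
    btHall S p := btHall_of_conn fun b F hF hc => (h b F hF hc).1

theorem bt_growth {S : Finset Γ} (hS : ∀ s ∈ S, s⁻¹ ∈ S) (h1 : (1 : Γ) ∈ S) {F : Finset Γ}
    (hF : btConn S F) {t : Γ} (ht : t ∈ S * F) (j : ℕ) :
    F ⊆ S ^ (2 * j + 1) * {t} ∨ j + 1 ≤ (F ∩ (S ^ (2 * j + 1) * {t})).card := by
  induction j with
  | zero =>
    right
    obtain ⟨s, hs, f, hf, rfl⟩ := Finset.mem_mul.1 ht
    simp only [mul_zero, zero_add, pow_one]
    apply Finset.card_pos.2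
    refine ⟨f, Finset.mem_inter.2 ⟨hf, Finset.mem_mul.2 ⟨s⁻¹, hS s hs, s * f, by simp, by simp⟩⟩⟩
  | succ j ih =>
    have hmono : S ^ (2 * j + 1) * {t} ⊆ S ^ (2 * (j + 1) + 1) * {t} :=
      Finset.mul_subset_mul_right (Finset.pow_subset_pow_right h1 (by omega))
    rcases ih with ih | ih
    · exact Or.inl (ih.trans hmono)
    · by_cases hsub : F ⊆ S ^ (2 * j + 1) * {t}
      · exact Or.inl (hsub.trans hmono)
      right
      set P := F ∩ (S ^ (2 * j + 1) * {t}) with hP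
      have := hF P Finset.inter_subset_left (Finset.card_pos.1 (by omega)) (by
        intro h
        apply hsub
        rw [← h]
        exact Finset.inter_subset_right)
      rw [Finset.not_disjoint_iff] at this
      obtain ⟨z, hz1, hz2⟩ := this
      obtain ⟨s, hs, f, hf, rfl⟩ := Finset.mem_mul.1 hz1
      obtain ⟨s', hs', f', hf', he⟩ := Finset.mem_mul.1 hz2
      have hf'F : f' ∈ F ∧ f' ∉ P := Finset.mem_sdiff.1 hf'
      obtain ⟨u, hu, v, hv, huv⟩ := Finset.mem_mul.1 (Finset.mem_inter.1 hf).2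
      have : insert f' P ⊆ F ∩ (S ^ (2 * (j + 1) + 1) * {t}) := by
        intro x hx
        rcases Finset.mem_insert.1 hx with rfl | hx
        · refine Finset.mem_inter.2 ⟨hf'F.1, Finset.mem_mul.2 ⟨s'⁻¹ * (s * u), ?_, v, hv, ?_⟩⟩
          · have : 2 * (j + 1) + 1 = (2 * j + 1) + 1 + 1 := by ring
            rw [this, pow_succ' S (2 * j + 1 + 1), pow_succ' S (2 * j + 1)]
            exact Finset.mul_mem_mul (hS _ hs') (Finset.mul_mem_mul hs hu)
          · rw [mul_assoc, mul_assoc, huv, ← he]; group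
        · exact Finset.mem_inter.2 ⟨(Finset.mem_inter.1 hx).1, hmono (Finset.mem_inter.1 hx).2⟩
      have h7 := Finset.card_le_card this
      rw [Finset.card_insert_of_notMem hf'F.2] at h7
      omega

theorem bt_inv_pow {S : Finset Γ} (hS : ∀ s ∈ S, s⁻¹ ∈ S) (n : ℕ) :
    ∀ s ∈ S ^ n, s⁻¹ ∈ S ^ n := by
  have : S⁻¹ = S := by
    ext x
    rw [Finset.mem_inv']
    exact ⟨fun h => by simpa using hS _ h, fun h => hS _ h⟩
  intro s hs
  have h2 : (S ^ n)⁻¹ = S ^ n := by rw [← inv_pow, this]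
  rw [← Finset.mem_inv', h2]; exact hs

theorem bt_ar1 {k f x t : ℕ} (h : (k + 1) * f ≤ k * (x + t)) (h2 : t * (2 * k) ≤ f) :
    (2 * k + 1) * f ≤ 2 * k * x := by nlinarith

theorem bt_ar2 {k f x t : ℕ} (h : (k + 1) * f ≤ k * (x + t)) (h2 : 2 * k ≤ f) (h3 : t ≤ 1) :
    (2 * k + 1) * f ≤ 2 * k * x := by nlinarith

/-- Removing a sparse family of pairs keeps goodness. -/
theorem bt_step {S : Finset Γ} (hS : ∀ s ∈ S, s⁻¹ ∈ S) (h1 : (1 : Γ) ∈ S) {k : ℕ} (hk : 1 ≤ k)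
    {p : Γ → Option Bool} (hp : btGood S k p) {a : Set Γ} {s : Γ} (hs : s ∈ S)
    (hdisc : ∀ g ∈ a, ∀ h ∈ a, h * g⁻¹ ∈ S ^ (8 * k) → g = h)
    (hne : ∀ g ∈ a, ∃ b, p g = some b ∧ p (s * g) = some (!b))
    (hmatch : ∀ g ∈ a, btHall S (btRem p {g, s * g})) :
    btGood S (2 * k) (btRem p (a ∪ {x | s⁻¹ * x ∈ a})) := by
  intro b F hF hc
  set A : Set Γ := a ∪ {x | s⁻¹ * x ∈ a} with hA
  have hFp : ∀ g ∈ F, g ∉ A ∧ p g = some b := fun g hg => btRem_some.1 (hF g hg)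
  obtain ⟨hp1, hp2⟩ := hp b F (fun g hg => (hFp g hg).2) hc
  set T := (btN S p b F).filter (fun g => g ∈ A) with hT
  have hN : btN S (btRem p A) b F = (btN S p b F) \ T := by
    ext x
    simp only [btN, hT, Finset.mem_filter, btRem_some, Finset.mem_sdiff]
    tauto
  have hcard : (btN S (btRem p A) b F).card + T.card = (btN S p b F).card := by
    rw [hN]; exact Finset.card_sdiff_add_card_eq_card (Finset.filter_subset _ _)
  -- root of removed vertices
  have hroot : ∀ t ∈ A, ∃ g ∈ a, ∃ u ∈ S, u * g = t ∧ t ∈ ({g, s * g} : Set Γ) := by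
    rintro t (ht | ht)
    · exact ⟨t, ht, 1, h1, by simp, by simp⟩
    · exact ⟨s⁻¹ * t, ht, s, hs, by simp, by simp⟩
  have hsep : ∀ t ∈ T, ∀ t' ∈ T, t' * t⁻¹ ∈ S ^ (8 * k - 2) → t = t' := by
    intro t ht t' ht' h
    obtain ⟨g, hg, u, hu, rfl, hgt⟩ := hroot t (Finset.mem_filter.1 ht).2
    obtain ⟨g', hg', u', hu', rfl, hgt'⟩ := hroot t' (Finset.mem_filter.1 ht').2
    have : g = g' := by
      apply hdisc g hg g' hg'
      have e : g' * g⁻¹ = u'⁻¹ * ((u' * g' * (u * g)⁻¹) * u) := by group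
      have e2 : 8 * k = (8 * k - 2) + 1 + 1 := by omega
      rw [e, e2, pow_succ', pow_succ]
      exact Finset.mul_mem_mul (hS _ hu') (Finset.mul_mem_mul h hu)
    subst this
    have q1 := (Finset.mem_filter.1 (Finset.mem_filter.1 ht).1).2
    have q2 := (Finset.mem_filter.1 (Finset.mem_filter.1 ht').1).2
    obtain ⟨b', hb1, hb2⟩ := hne g hg
    rcases hgt with h | h <;> rcases hgt' with h' | h'
    · rw [h, h']
    · rw [h, hb1] at q1; rw [h', hb2] at q2; cases b <;> cases b' <;> simp_all
    · rw [h, hb2] at q1; rw [h', hb1] at q2; cases b <;> cases b' <;> simp_all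
    · rw [h, h']
  rcases Nat.lt_or_ge 1 T.card with h2 | h2
  · -- at least two removed vertices
    have hball : ∀ t ∈ T, 2 * k ≤ (F ∩ (S ^ (4 * k - 1) * {t})).card := by
      intro t ht
      obtain ⟨t', ht', hne'⟩ := Finset.exists_mem_ne h2 t
      have hg := bt_growth hS h1 hc (t := t)
        (Finset.mem_filter.1 (Finset.mem_filter.1 ht).1).1 (2 * k - 1)
      have e : 2 * (2 * k - 1) + 1 = 4 * k - 1 := by omega
      rw [e] at hg
      rcases hg with hg | hg
      · exfalso
        obtain ⟨w, hw, f, hf, hwf⟩ := Finset.mem_mul.1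
          (Finset.mem_filter.1 (Finset.mem_filter.1 ht').1).1
        obtain ⟨v, hv, t0, ht0, hvt⟩ := Finset.mem_mul.1 (hg hf)
        rw [Finset.mem_singleton] at ht0
        subst ht0
        apply hne'
        refine (hsep _ ht _ ht' ?_).symm
        have : t' * t0⁻¹ = w * v := by rw [← hwf, ← hvt]; group
        rw [this]
        refine Finset.pow_subset_pow_right h1 (m := 4 * k - 1 + 1) (by omega) ?_
        rw [pow_succ']
        exact Finset.mul_mem_mul hw hv
      · omega
    have hdisj : (T : Set Γ).PairwiseDisjoint (fun t => F ∩ (S ^ (4 * k - 1) * {t})) := by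
      intro t ht t' ht' hne'
      refine Finset.disjoint_left.2 ?_
      intro x hx hx'
      apply hne'
      apply hsep t ht t' ht'
      obtain ⟨v, hv, t0, ht0, hvt⟩ := Finset.mem_mul.1 (Finset.mem_inter.1 hx).2
      obtain ⟨v', hv', t0', ht0', hvt'⟩ := Finset.mem_mul.1 (Finset.mem_inter.1 hx').2
      rw [Finset.mem_singleton] at ht0 ht0'
      subst ht0 ht0'
      have e : t0' * t0⁻¹ = v'⁻¹ * v := by
        have : v' * t0' = v * t0 := by rw [hvt, hvt']
        have e3 : t0' = v'⁻¹ * (v * t0) := by rw [← this]; group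
        rw [e3]; group
      rw [e]
      have e2 : 8 * k - 2 = (4 * k - 1) + (4 * k - 1) := by omega
      rw [e2, pow_add]
      exact Finset.mul_mem_mul (bt_inv_pow hS _ _ hv') hv
    have hTF : T.card * (2 * k) ≤ F.card := by
      calc T.card * (2 * k) ≤ ∑ t ∈ T, (F ∩ (S ^ (4 * k - 1) * {t})).card := by
            rw [← smul_eq_mul]; exact Finset.card_nsmul_le_sum _ _ _ hball
        _ = (T.biUnion (fun t => F ∩ (S ^ (4 * k - 1) * {t}))).card :=
            (Finset.card_biUnion hdisj).symm
        _ ≤ F.card := Finset.card_le_card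
            (Finset.biUnion_subset.2 fun t _ => Finset.inter_subset_left)
    have hkF : k ≤ F.card := by
      have := Nat.mul_le_mul_right (2 * k) h2.le
      omega
    have h3 := hp2 hkF
    have hmain : (2 * k + 1) * F.card ≤ 2 * k * (btN S (btRem p A) b F).card := by
      rw [← hcard] at h3
      exact bt_ar1 h3 hTF
    refine ⟨?_, fun _ => hmain⟩
    have h9 : 2 * k * F.card ≤ 2 * k * (btN S (btRem p A) b F).card :=
      le_trans (Nat.mul_le_mul_right _ (by omega)) hmain
    exact Nat.le_of_mul_le_mul_left h9 (by omega)
  · have hexp : 2 * k ≤ F.card →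
        (2 * k + 1) * F.card ≤ 2 * k * (btN S (btRem p A) b F).card := by
      intro hkF
      have h3 := hp2 (by omega)
      rw [← hcard] at h3
      exact bt_ar2 h3 hkF h2
    refine ⟨?_, hexp⟩
    rcases Nat.eq_zero_or_pos T.card with h0 | h0
    · omega
    · obtain ⟨t, ht⟩ := Finset.card_eq_one.1 (le_antisymm h2 h0)
      have htT : t ∈ T := by rw [ht]; simp
      obtain ⟨g, hg, u, hu, hug, hgt⟩ := hroot t (Finset.mem_filter.1 htT).2
      have hgA : ({g, s * g} : Set Γ) ⊆ A := by
        rintro x (rfl | rfl)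
        · exact Or.inl hg
        · right; simpa using hg
      have := hmatch g hg b F (fun x hx => btRem_some.2
        ⟨fun h => (hFp x hx).1 (hgA h), (hFp x hx).2⟩)
      refine this.trans (Finset.card_le_card ?_)
      intro x hx
      simp only [btN, Finset.mem_filter, btRem_some] at hx ⊢
      refine ⟨hx.1, fun hxA => ?_, hx.2.2⟩
      have hxT : x ∈ T := by
        simp only [hT, btN, Finset.mem_filter]
        exact ⟨⟨hx.1, hx.2.2⟩, hxA⟩
      rw [ht, Finset.mem_singleton] at hxT
      subst hxT
      exact hx.2.1 hgt

theorem bt_exists_edge {S : Finset Γ} (hS : ∀ s ∈ S, s⁻¹ ∈ S) {p : Γ → Option Bool}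
    (hp : btHall S p) {b : Bool} (h1 : p 1 = some b) :
    ∃ s ∈ S, p s = some (!b) ∧ btHall S (btRem p {1, s}) := by
  have hbu : ∀ F : Finset Γ, F.biUnion (fun g => S * {g}) = S * F := by
    intro F
    ext x
    simp only [Finset.mem_biUnion, Finset.mem_mul, Finset.mem_singleton]
    constructor
    · rintro ⟨a, ha, y, hy, z, rfl, rfl⟩; exact ⟨y, hy, z, ha, rfl⟩
    · rintro ⟨y, hy, z, hz, rfl⟩; exact ⟨z, hz, y, hy, z, rfl, rfl⟩
  obtain ⟨h, hb, hh⟩ := bt_hall_sb {g | p g = some b} {g | p g = some (!b)}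
    (fun g => S * {g}) (by
      intro x y hy
      obtain ⟨s, hs, z, hz, rfl⟩ := Finset.mem_mul.1 hy
      rw [Finset.mem_singleton] at hz
      subst hz
      exact Finset.mem_mul.2 ⟨s⁻¹, hS s hs, s * z, by simp, by simp⟩)
    (fun F hF => by rw [hbu]; simpa [btN] using hp b F hF)
    (fun F hF => by
      rw [hbu]
      have := hp (!b) F hF
      simpa [btN] using this)
  have hs1 : ∃ s ∈ S, s = (h ⟨1, h1⟩ : Γ) := by
    obtain ⟨s, hs, z, hz, e⟩ := Finset.mem_mul.1 (hh ⟨1, h1⟩)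
    rw [Finset.mem_singleton] at hz
    refine ⟨s, hs, ?_⟩
    rw [← e, hz]; simp
  obtain ⟨s, hs, hse⟩ := hs1
  refine ⟨s, hs, by rw [hse]; exact (h ⟨1, h1⟩).2, ?_⟩
  -- generic: matching restricted
  intro c F hF
  have hFp : ∀ g ∈ F, g ∉ ({1, s} : Set Γ) ∧ p g = some c := fun g hg => btRem_some.1 (hF g hg)
  by_cases hcb : c = b
  · subst hcb
    apply Finset.card_le_card_of_injOn (fun g => if hg : p g = some c then (h ⟨g, hg⟩ : Γ) else 1)
    · intro g hg
      have hg' := hFp g hg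
      simp only [dif_pos hg'.2, btN, Finset.coe_filter, Set.mem_ofPred_eq, btRem_some]
      refine ⟨Finset.mul_subset_mul_left (Finset.singleton_subset_iff.2 hg) (hh ⟨g, hg'.2⟩), ?_,
        (h ⟨g, hg'.2⟩).2⟩
      rintro (h3 | h3)
      · have := (h ⟨g, hg'.2⟩).2
        rw [h3] at this
        simp [h1] at this
      · have := hb.1 (Subtype.ext (h3.trans hse))
        simp only [Subtype.mk.injEq] at this
        exact hg'.1 (by simp [this])
    · intro g hg g' hg' e
      simp only [dif_pos (hFp g hg).2, dif_pos (hFp g' hg').2] at e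
      have := hb.1 (Subtype.ext e)
      simpa using this
  · have hcb' : c = !b := by cases c <;> cases b <;> simp_all
    subst hcb'
    have hsurj := fun y => hb.2 y
    choose k hk using hsurj
    have hkinj : Function.Injective k := fun y y' e => by rw [← hk y, ← hk y', e]
    apply Finset.card_le_card_of_injOn
      (fun g => if hg : p g = some (!b) then (k ⟨g, hg⟩ : Γ) else 1)
    · intro g hg
      have hg' := hFp g hg
      simp only [dif_pos hg'.2, btN, Finset.coe_filter, Set.mem_ofPred_eq, btRem_some,
        Bool.not_not]
      refine ⟨?_, ?_, (k ⟨g, hg'.2⟩).2⟩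
      · have := hh (k ⟨g, hg'.2⟩)
        rw [hk] at this
        obtain ⟨w, hw, z, hz, e⟩ := Finset.mem_mul.1 this
        rw [Finset.mem_singleton] at hz
        refine Finset.mem_mul.2 ⟨w⁻¹, hS w hw, g, hg, ?_⟩
        change w * z = g at e
        rw [← hz]; exact inv_mul_eq_of_eq_mul e.symm
      · rintro (h3 | h3)
        · have e : k ⟨g, hg'.2⟩ = ⟨1, h1⟩ := Subtype.ext h3
          have := hk ⟨g, hg'.2⟩
          rw [e] at this
          rw [this] at hse
          exact hg'.1 (by simp [hse])
        · have := (k ⟨g, hg'.2⟩).2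
          rw [h3] at this
          have e2 := (h ⟨1, h1⟩).2
          rw [← hse] at e2
          simp only [Set.mem_ofPred_eq] at this e2
          rw [this] at e2
          simp at e2
    · intro g hg g' hg' e
      simp only [dif_pos (hFp g hg).2, dif_pos (hFp g' hg').2] at e
      have := hkinj (Subtype.ext e)
      simpa using this
end

noncomputable section
open scoped Classical
open Topology Filter

variable {Γ : Type*} [Group Γ] {E : Type*} [MulAction Γ E]

def btPat (c : E → Option Bool) (x : E) : Γ → Option Bool := fun g => c (g • x)

theorem btHall_trans {S : Finset Γ} {p : Γ → Option Bool} (g : Γ)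
    (h : btHall S (fun x => p (x * g))) : btHall S p := by
  intro b F hF
  have h1 := h b (F * {g⁻¹}) (by
    intro x hx
    obtain ⟨y, hy, z, hz, rfl⟩ := Finset.mem_mul.1 hx
    rw [Finset.mem_singleton] at hz
    subst hz
    simpa using hF y hy)
  rw [Finset.card_mul_singleton] at h1
  refine h1.trans ?_
  apply Finset.card_le_card_of_injOn (fun x => x * g)
  · intro x hx
    simp only [btN, Finset.coe_filter, Set.mem_ofPred_eq] at hx ⊢
    refine ⟨?_, hx.2⟩
    obtain ⟨s, hs, y, hy, rfl⟩ := Finset.mem_mul.1 hx.1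
    obtain ⟨y, hy', z, hz, rfl⟩ := Finset.mem_mul.1 hy
    rw [Finset.mem_singleton] at hz
    subst hz
    refine Finset.mem_mul.2 ⟨s, hs, y, hy', by group⟩
  · intro x _ y _ e
    exact mul_right_cancel e

theorem btHall_pat {S : Finset Γ} {c : E → Option Bool} {x : E} {g s : Γ}
    (h : btHall S (btRem (btPat c (g • x)) {1, s})) :
    btHall S (btRem (btPat c x) {g, s * g}) := by
  apply btHall_trans g
  convert h using 1
  funext y
  simp only [btRem, btPat, Set.mem_insert_iff, Set.mem_singleton_iff, mul_smul,
    mul_left_inj, mul_eq_right]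

variable [TopologicalSpace E]

def btInv (S : Finset Γ) (D : Set E) (c : E → Option Bool) (k : ℕ) : Prop :=
  (∀ x ∉ D, ∀ᶠ x' in 𝓝 x, c x' = c x) ∧ 1 ≤ k ∧ ∀ x ∉ D, btGood S k (btPat c x)

variable [ContinuousConstSMul Γ E]

theorem bt_loc {D : Set E} {c : E → Option Bool} (hD : ∀ (g : Γ) (x : E), g • x ∈ D → x ∈ D)
    (hc : ∀ x ∉ D, ∀ᶠ x' in 𝓝 x, c x' = c x) (K : Finset Γ) {x : E} (hx : x ∉ D) :
    ∀ᶠ x' in 𝓝 x, ∀ g ∈ K, c (g • x') = c (g • x) := by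
  rw [Filter.eventually_all_finset]
  intro g _
  have h1 := hc (g • x) (fun h => hx (hD g x h))
  exact ((continuous_const_smul g).tendsto x).eventually h1

def btP (S : Finset Γ) (c : E → Option Bool) (b : Bool) (s : Γ) (x : E) : Prop :=
  c (s • x) = some (!b) ∧ btHall S (btRem (btPat c x) {1, s})

theorem bt_open {S : Finset Γ} {D : Set E} {c : E → Option Bool}
    (hD : ∀ (g : Γ) (x : E), g • x ∈ D → x ∈ D)
    (hc : ∀ x ∉ D, ∀ᶠ x' in 𝓝 x, c x' = c x) {b : Bool} {s : Γ} {x : E} (hx : x ∉ D)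
    (h : ¬ btP S c b s x) : ∀ᶠ x' in 𝓝 x, ¬ btP S c b s x' := by
  unfold btP at h ⊢
  by_cases h1 : c (s • x) = some (!b)
  · have h2 : ¬ btHall S (btRem (btPat c x) {1, s}) := fun h3 => h ⟨h1, h3⟩
    unfold btHall at h2
    push Not at h2
    obtain ⟨b', F, hF, hcard⟩ := h2
    filter_upwards [bt_loc hD hc (F ∪ S * F) hx] with x' hx' hP
    have h4 := hP.2 b' F (by
      intro g hg
      have := hF g hg
      simp only [btRem_some, btPat] at this ⊢
      rwa [hx' g (Finset.mem_union_left _ hg)])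
    have h5 : btN S (btRem (btPat c x') {1, s}) b' F = btN S (btRem (btPat c x) {1, s}) b' F := by
      apply Finset.filter_congr
      intro g hg
      simp only [btRem_some, btPat]
      rw [hx' g (Finset.mem_union_right _ hg)]
    rw [h5] at h4
    omega
  · filter_upwards [bt_loc hD hc {s} hx] with x' hx' hP
    apply h1
    rw [← hx' s (by simp)]
    exact hP.1

theorem bt_choose {S : Finset Γ} (hS : ∀ s ∈ S, s⁻¹ ∈ S) {D : Set E} {c : E → Option Bool}
    {B : Set (Set E)} (hB : TopologicalSpace.IsTopologicalBasis B)
    (hD : ∀ (g : Γ) (x : E), g • x ∈ D → x ∈ D)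
    (hc : ∀ x ∉ D, ∀ᶠ x' in 𝓝 x, c x' = c x)
    (hH : ∀ x ∉ D, btHall S (btPat (Γ := Γ) c x)) {b : Bool} {A0 : Set E} (hA0 : IsOpen A0)
    (hcA : ∀ x ∈ A0, c x = some b) {x0 : E} (hx0 : x0 ∈ A0) (hx0D : x0 ∉ D) :
    ∃ s ∈ S, ∃ A ∈ B, A ⊆ A0 ∧ (∃ x ∈ A, x ∉ D) ∧ ∀ x ∈ A, x ∉ D → btP S c b s x := by
  by_contra hcon
  push Not at hcon
  have key : ∀ T : Finset Γ, T ⊆ S → ∃ A ∈ B, A ⊆ A0 ∧ (∃ x ∈ A, x ∉ D) ∧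
      ∀ s ∈ T, ∀ x ∈ A, ¬ btP S c b s x := by
    intro T
    induction T using Finset.induction_on with
    | empty =>
      intro _
      obtain ⟨A, hA, hxA, hAA⟩ := hB.exists_subset_of_mem_open hx0 hA0
      exact ⟨A, hA, hAA, ⟨x0, hxA, hx0D⟩, by simp⟩
    | insert s T _ ih =>
      intro hTS
      obtain ⟨A, hA, hAA, hAx, hAT⟩ := ih (fun t ht => hTS (Finset.mem_insert_of_mem ht))
      obtain ⟨x, hxA, hxD, hxP⟩ := hcon s (hTS (Finset.mem_insert_self _ _)) A hA hAA hAx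
      have h1 := (bt_open hD hc hxD hxP).and ((hB.isOpen hA).mem_nhds hxA)
      obtain ⟨V, hV, hxV, hVs⟩ := hB.mem_nhds_iff.1 h1
      refine ⟨V, hV, fun y hy => hAA (hVs hy).2, ⟨x, hxV, hxD⟩, ?_⟩
      intro t ht y hy
      rcases Finset.mem_insert.1 ht with rfl | ht
      · exact (hVs hy).1
      · exact hAT t ht y (hVs hy).2
  obtain ⟨A, hA, hAA, ⟨x, hxA, hxD⟩, hAT⟩ := key S subset_rfl
  obtain ⟨s, hs, h1, h2⟩ := bt_exists_edge hS (hH x hxD) (b := b) (by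
    simp only [btPat, one_smul]; exact hcA x (hAA hxA))
  exact hAT s hs x hxA ⟨h1, h2⟩

def btUpd (c : E → Option Bool) (Q : Set E) (σ : Γ) : E → Option Bool :=
  fun z => if z ∈ Q ∨ σ⁻¹ • z ∈ Q then none else c z

theorem bt_locset {D A : Set E} (hA : frontier A ⊆ D) {x : E} (hx : x ∉ D) :
    ∀ᶠ x' in 𝓝 x, (x' ∈ A ↔ x ∈ A) := by
  by_cases h : x ∈ interior A
  · filter_upwards [isOpen_interior.mem_nhds h] with y hy
    exact ⟨fun _ => interior_subset h, fun _ => interior_subset hy⟩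
  · have h2 : x ∉ closure A := fun h3 => hx (hA ⟨h3, h⟩)
    filter_upwards [isClosed_closure.isOpen_compl.mem_nhds h2] with y hy
    exact ⟨fun h4 => absurd (subset_closure h4) hy, fun h4 => absurd (subset_closure h4) h2⟩

theorem bt_upd {S : Finset Γ} (hS : ∀ s ∈ S, s⁻¹ ∈ S) (h1 : (1 : Γ) ∈ S) {D : Set E}
    {c : E → Option Bool} {k : ℕ} (hD : ∀ (g : Γ) (x : E), g • x ∈ D → x ∈ D)
    (hinv : btInv S D c k) {A : Set E} (hA : frontier A ⊆ D) {b : Bool} {s : Γ} (hs : s ∈ S)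
    (hcA : ∀ x ∈ A, c x = some b) (hAP : ∀ x ∈ A, x ∉ D → btP S c b s x)
    (hdisc : ∀ g ∈ S ^ (8 * k), g ≠ 1 → ∀ x ∈ A, g • x ∉ A) :
    btInv S D (btUpd c A s) (2 * k) := by
  obtain ⟨hc, hk, hgood⟩ := hinv
  refine ⟨?_, by omega, ?_⟩
  · intro x hx
    have hx' : s⁻¹ • x ∉ D := fun h => hx (hD _ _ h)
    filter_upwards [bt_locset hA hx,
      ((continuous_const_smul s⁻¹).tendsto x).eventually (bt_locset hA hx'), hc x hx] with y a1 a2 a3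
    simp only [btUpd, a1, a2, a3]
  · intro x hx
    have hst := bt_step hS h1 hk (hgood x hx) (a := {g | g • x ∈ A}) hs ?_ ?_ ?_
    · convert hst using 1
      funext g
      simp only [btPat, btUpd, btRem, Set.mem_union, Set.mem_ofPred_eq, mul_smul]
    · intro g hg h hh hgh
      by_contra hne
      refine hdisc _ hgh (fun e => hne ?_) (g • x) hg ?_
      · exact (mul_inv_eq_one.1 e).symm
      · rw [← mul_smul]; simpa using hh
    · intro g hg
      refine ⟨b, hcA _ hg, ?_⟩
      have := (hAP _ hg (fun h => hx (hD _ _ h))).1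
      simpa [btPat, mul_smul] using this
    · intro g hg
      exact btHall_pat (hAP _ hg (fun h => hx (hD _ _ h))).2

theorem bt_extend [T2Space E] {S : Finset Γ} (hS : ∀ s ∈ S, s⁻¹ ∈ S) (h1 : (1 : Γ) ∈ S) {D : Set E}
    {c : E → Option Bool} {k : ℕ} {B : Set (Set E)} (hB : TopologicalSpace.IsTopologicalBasis B)
    (hBD : ∀ U ∈ B, frontier U ⊆ D)
    (hD : ∀ (g : Γ) (x : E), g • x ∈ D → x ∈ D)
    (hfree : ∀ x ∉ D, ∀ g : Γ, g ≠ 1 → g • x ≠ x)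
    (hinv : btInv S D c k) (U : Set E) (hU : IsOpen U) (hUD : ∃ x ∈ U, x ∉ D) :
    ∃ (Q : Set E) (σ : Γ) (k' : ℕ), σ ∈ S ∧ IsOpen Q ∧ btInv S D (btUpd c Q σ) k' ∧
      (∀ x ∈ Q, x ∉ D → c x = some true ∧ c (σ • x) = some false) ∧
      ∃ x ∈ U, x ∉ D ∧ btUpd c Q σ x = none := by
  by_cases hcase : ∀ x ∈ U, x ∉ D → c x = none
  · obtain ⟨x, hxU, hxD⟩ := hUD
    have e : btUpd c (∅ : Set E) (1 : Γ) = c := by funext z; simp [btUpd]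
    refine ⟨∅, 1, k, h1, isOpen_empty, by rwa [e], by simp, x, hxU, hxD, ?_⟩
    rw [e]; exact hcase x hxU hxD
  push Not at hcase
  obtain ⟨x0, hx0U, hx0D, hx0c⟩ := hcase
  obtain ⟨b, hb⟩ := Option.ne_none_iff_exists'.1 hx0c
  have hev : ∀ᶠ A in (𝓝 x0).smallSets, A ⊆ U ∧ (∀ x ∈ A, c x = some b) ∧
      ∀ g ∈ S ^ (8 * k), g ≠ 1 → ∀ x ∈ A, g • x ∉ A := by
    refine Filter.Eventually.and ?_ (Filter.Eventually.and ?_ ?_)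
    · exact Filter.eventually_smallSets_subset.2 (hU.mem_nhds hx0U)
    · rw [Filter.eventually_smallSets_forall, ← hb]
      exact hinv.1 x0 hx0D
    · rw [Filter.eventually_all_finset]
      intro g _
      by_cases hg : g = 1
      · simp [hg]
      have hne := hfree x0 hx0D g hg
      obtain ⟨V, W, hV, hW, hgV, hxW, hVW⟩ := t2_separation hne
      have : W ∩ (fun x => g • x) ⁻¹' V ∈ 𝓝 x0 :=
        Filter.inter_mem (hW.mem_nhds hxW)
          ((continuous_const_smul g).tendsto x0 (hV.mem_nhds hgV))
      filter_upwards [Filter.eventually_smallSets_subset.2 this] with A hA _ x hx hgx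
      exact Set.disjoint_left.1 hVW (hA hx).2 (hA hgx).1
  obtain ⟨A1, hA1, hP⟩ := Filter.eventually_smallSets.1 hev
  obtain ⟨A0, hA0B, hx0, hA0A⟩ := hB.mem_nhds_iff.1 hA1
  obtain ⟨hA0U, hA0c, hA0d⟩ := hP A0 hA0A
  obtain ⟨s, hs, A, hAB, hAA, ⟨x, hxA, hxD⟩, hAP⟩ := bt_choose hS hB hD hinv.1
    (fun x hx => (hinv.2.2 x hx).hall) (hB.isOpen hA0B) hA0c hx0 hx0D
  have hupd := bt_upd hS h1 hD hinv (hBD A hAB) hs (fun x hx => hA0c x (hAA hx)) hAP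
    (fun g hg hg1 x hx hgx => hA0d g hg hg1 x (hAA hx) (hAA hgx))
  cases b with
  | true =>
    refine ⟨A, s, 2 * k, hs, hB.isOpen hAB, hupd, ?_, x, hA0U (hAA hxA), hxD, ?_⟩
    · intro y hy hyD
      exact ⟨hA0c y (hAA hy), (hAP y hy hyD).1⟩
    · simp [btUpd, hxA]
  | false =>
    have e : btUpd c ((fun x => s⁻¹ • x) ⁻¹' A) s⁻¹ = btUpd c A s := by
      funext z
      simp only [btUpd, Set.mem_preimage, inv_inv, inv_smul_smul]
      congr 1
      rw [or_comm]
    refine ⟨(fun x => s⁻¹ • x) ⁻¹' A, s⁻¹, 2 * k, hS s hs,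
      (hB.isOpen hAB).preimage (continuous_const_smul _), by rwa [e], ?_,
      x, hA0U (hAA hxA), hxD, ?_⟩
    · intro y hy hyD
      refine ⟨?_, hA0c _ (hAA hy)⟩
      have := (hAP _ hy (fun h => hyD (hD _ _ h))).1
      simpa using this
    · rw [e]; simp [btUpd, hxA]
end

noncomputable section
open scoped Classical
open Topology Filter

variable {Γ : Type*} [Group Γ] {E : Type*} [MulAction Γ E] [TopologicalSpace E]
  [ContinuousConstSMul Γ E]

theorem bt_seq [T2Space E] {S : Finset Γ} (hS : ∀ s ∈ S, s⁻¹ ∈ S) (h1 : (1 : Γ) ∈ S) {D : Set E}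
    {c0 : E → Option Bool} {k : ℕ} {B : Set (Set E)} (hB : TopologicalSpace.IsTopologicalBasis B)
    (hBD : ∀ U ∈ B, frontier U ⊆ D)
    (hD : ∀ (g : Γ) (x : E), g • x ∈ D → x ∈ D)
    (hfree : ∀ x ∉ D, ∀ g : Γ, g ≠ 1 → g • x ≠ x)
    (hinv : btInv S D c0 k) (U : ℕ → Set E) (hU : ∀ n, IsOpen (U n))
    (hUD : ∀ n, ∃ x ∈ U n, x ∉ D) :
    ∃ (c : ℕ → E → Option Bool) (Q : ℕ → Set E) (σ : ℕ → Γ), c 0 = c0 ∧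
      (∀ n, ∀ x ∉ D, ∀ᶠ x' in 𝓝 x, c n x' = c n x) ∧ ∀ n, σ n ∈ S ∧ IsOpen (Q n) ∧
      c (n + 1) = btUpd (c n) (Q n) (σ n) ∧
      (∀ x ∈ Q n, x ∉ D → c n x = some true ∧ c n (σ n • x) = some false) ∧
      ∃ x ∈ U n, x ∉ D ∧ c (n + 1) x = none := by
  have ext := fun (n : ℕ) (st : {q : (E → Option Bool) × ℕ // btInv S D q.1 q.2}) =>
    bt_extend hS h1 hB hBD hD hfree st.2 (U n) (hU n) (hUD n)
  choose Q σ k' hσ hQ hI hQc hx using ext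
  let st : ℕ → {q : (E → Option Bool) × ℕ // btInv S D q.1 q.2} := fun n =>
    Nat.rec ⟨(c0, k), hinv⟩ (fun n st => ⟨(btUpd st.1.1 (Q n st) (σ n st), k' n st), hI n st⟩) n
  refine ⟨fun n => (st n).1.1, fun n => Q n (st n), fun n => σ n (st n), rfl,
    fun n => (st n).2.1, fun n => ⟨hσ n _, hQ n _, rfl, hQc n _, hx n _⟩⟩

theorem bt_c0 {X Y : Set E} (hXY : Disjoint X Y) : ∃ c0 : E → Option Bool,
    (∀ x, c0 x = some true ↔ x ∈ X) ∧ (∀ x, c0 x = some false ↔ x ∈ Y) ∧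
    ∀ x y, (x ∈ X ↔ y ∈ X) → (x ∈ Y ↔ y ∈ Y) → c0 x = c0 y := by
  refine ⟨fun x => if x ∈ X then some true else if x ∈ Y then some false else none, ?_, ?_, ?_⟩
  · intro x
    by_cases h : x ∈ X
    · simp [h]
    · by_cases h' : x ∈ Y <;> simp [h, h']
  · intro x
    by_cases h : x ∈ X
    · have := Set.disjoint_left.1 hXY h
      simp [h, this]
    · by_cases h' : x ∈ Y <;> simp [h, h']
  · intro x y h h'
    simp only [h, h']

set_option maxHeartbeats 1000000 in
theorem bt_generic [T2Space E] [SecondCountableTopology E] [BaireSpace E] [Nonempty E] [Countable Γ]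
    {S : Finset Γ} (hS : ∀ s ∈ S, s⁻¹ ∈ S)
    (h1 : (1 : Γ) ∈ S) (hfix : ∀ g : Γ, g ≠ 1 → interior {x : E | g • x = x} = ∅)
    {X Y : Set E} (hXc : IsClosed X) (hYc : IsClosed Y) (hXY : Disjoint X Y)
    (hX : ∀ F : Finset E, (∀ x ∈ F, x ∈ X) → 2 * F.card ≤ ((S • F).filter (fun y => y ∈ Y)).card)
    (hY : ∀ F : Finset E, (∀ x ∈ F, x ∈ Y) → 2 * F.card ≤ ((S • F).filter (fun y => y ∈ X)).card) :
    ∃ (C : Set E) (Q : ℕ → Set E) (σ : ℕ → Γ), IsMeagre Cᶜ ∧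
      (∀ (g : Γ) (x : E), x ∈ C → g • x ∈ C) ∧ (∀ n, σ n ∈ S) ∧ (∀ n, IsOpen (Q n)) ∧
      (∀ n, ∀ x ∈ C, x ∈ Q n → x ∈ X ∧ σ n • x ∈ Y) ∧
      (∀ x ∈ C, x ∈ X → ∃ n, x ∈ Q n) ∧
      (∀ x ∈ C, x ∈ Y → ∃ n, (σ n)⁻¹ • x ∈ Q n) ∧
      (∀ n m, ∀ x ∈ C, x ∈ Q n → x ∈ Q m → n = m) ∧
      (∀ n m, ∀ x ∈ C, ∀ y ∈ C, x ∈ Q n → y ∈ Q m → σ n • x = σ m • y → n = m) := by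
  set B := TopologicalSpace.countableBasis E with hBdef
  have hB : TopologicalSpace.IsTopologicalBasis B := TopologicalSpace.isBasis_countableBasis E
  have hBc : B.Countable := TopologicalSpace.countable_countableBasis E
  set D1 : Set E := (⋃ V ∈ B, frontier V) ∪ (frontier X ∪ frontier Y) with hD1
  have nd : ∀ V : Set E, IsClosed V → interior V = ∅ → IsMeagre V := by
    intro V hV hi
    exact (hV.isNowhereDense_iff.2 hi).isMeagre
  have hD1m : IsMeagre D1 := by
    apply IsMeagre.union
    · apply isMeagre_biUnion hBc
      intro V hV
      exact nd _ isClosed_frontier (by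
        rw [← frontier_compl]; exact interior_frontier (hB.isOpen hV).isClosed_compl)
    · apply IsMeagre.union
      · exact nd _ isClosed_frontier (interior_frontier hXc)
      · exact nd _ isClosed_frontier (interior_frontier hYc)
  have hpre : ∀ (g : Γ) (V : Set E), IsMeagre V → IsMeagre {x | g • x ∈ V} := by
    intro g V hV
    exact hV.preimage_of_isOpenMap (continuous_const_smul g) (isOpenMap_smul g)
  set D : Set E := {x | (∃ g : Γ, g • x ∈ D1) ∨ ∃ g : Γ, g ≠ 1 ∧ g • x = x} with hDdef
  have hDm : IsMeagre D := by
    have : D = (⋃ g : Γ, {x | g • x ∈ D1}) ∪ ⋃ g ∈ {g : Γ | g ≠ 1}, {x | g • x = x} := by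
      ext x; simp [hDdef]
    rw [this]
    apply IsMeagre.union
    · exact isMeagre_iUnion fun g => hpre g _ hD1m
    · apply isMeagre_biUnion (Set.to_countable _)
      intro g hg
      exact nd _ (isClosed_eq (continuous_const_smul g) continuous_id) (hfix g hg)
  have hD : ∀ (g : Γ) (x : E), g • x ∈ D → x ∈ D := by
    rintro g x (⟨h, hh⟩ | ⟨h, hne, hh⟩)
    · left; exact ⟨h * g, by rwa [mul_smul]⟩
    · right
      refine ⟨g⁻¹ * h * g, ?_, ?_⟩
      · intro e
        apply hne
        have : h = g * (g⁻¹ * h * g) * g⁻¹ := by group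
        rw [this, e]; group
      · rw [mul_smul, mul_smul, hh, inv_smul_smul]
  have hfree : ∀ x ∉ D, ∀ g : Γ, g ≠ 1 → g • x ≠ x :=
    fun x hx g hg e => hx (Or.inr ⟨g, hg, e⟩)
  have hD1D : D1 ⊆ D := fun x hx => Or.inl ⟨1, by simpa using hx⟩
  have hBD : ∀ U ∈ B, frontier U ⊆ D := fun U hU x hx =>
    hD1D (Or.inl (Set.mem_biUnion hU hx))
  have hXD : frontier X ⊆ D := fun x hx => hD1D (Or.inr (Or.inl hx))
  have hYD : frontier Y ⊆ D := fun x hx => hD1D (Or.inr (Or.inr hx))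
  have hdense : Dense Dᶜ := dense_of_mem_residual hDm
  obtain ⟨c0, hc0X, hc0Y, hc0⟩ := bt_c0 hXY
  have hinv : btInv S D c0 1 := by
    refine ⟨?_, le_rfl, ?_⟩
    · intro x hx
      filter_upwards [bt_locset hXD hx, bt_locset hYD hx] with y a1 a2
      exact hc0 _ _ a1 a2
    · intro x hx b F hF _
      have hinj : Function.Injective (fun g : Γ => g • x) := by
        intro g h e
        by_contra hne
        refine hfree x hx (h⁻¹ * g) (fun e2 => hne (inv_mul_eq_one.1 e2).symm) ?_
        rw [mul_smul]
        exact inv_smul_eq_iff.2 e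
      have hsub : ∀ Z : Set E, (∀ z, c0 z = some (!b) ↔ z ∈ Z) →
          ((S • (F.image (fun g : Γ => g • x))).filter (fun y => y ∈ Z)).card ≤
          (btN S (btPat c0 x) b F).card := by
        intro Z hZ
        refine (Finset.card_le_card ?_).trans
          (Finset.card_image_le (s := btN S (btPat c0 x) b F) (f := fun g : Γ => g • x))
        intro y hy
        obtain ⟨hy1, hy2⟩ := Finset.mem_filter.1 hy
        obtain ⟨s, hs, z, hz, rfl⟩ := Finset.mem_smul.1 hy1
        obtain ⟨g, hg, rfl⟩ := Finset.mem_image.1 hz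
        refine Finset.mem_image.2 ⟨s * g, ?_, mul_smul _ _ _⟩
        refine Finset.mem_filter.2 ⟨Finset.mul_mem_mul hs hg, ?_⟩
        simp only [btPat, mul_smul]
        exact (hZ _).2 hy2
      have h2 : 2 * F.card ≤ (btN S (btPat c0 x) b F).card := by
        rw [← Finset.card_image_of_injective F hinj]
        cases b with
        | true =>
          refine (hX _ ?_).trans (hsub Y (by simpa using hc0Y))
          intro z hz
          obtain ⟨g, hg, rfl⟩ := Finset.mem_image.1 hz
          exact (hc0X _).1 (hF g hg)
        | false =>
          refine (hY _ ?_).trans (hsub X (by simpa using hc0X))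
          intro z hz
          obtain ⟨g, hg, rfl⟩ := Finset.mem_image.1 hz
          exact (hc0Y _).1 (hF g hg)
      exact ⟨by omega, fun _ => by omega⟩
  -- enumerate the basis
  have hUex : ∃ U : ℕ → Set E, (∀ n, IsOpen (U n)) ∧ (∀ n, ∃ x ∈ U n, x ∉ D) ∧
      ∀ V ∈ B, V.Nonempty → ∃ n, U n = V := by
    have hne : Nonempty E := inferInstance
    · obtain ⟨V0, hV0, x0, hx0⟩ : ∃ V0 ∈ B, V0.Nonempty := by
        obtain ⟨x⟩ := hne
        obtain ⟨V, hV, hxV, _⟩ := hB.exists_subset_of_mem_open (Set.mem_univ x) isOpen_univ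
        exact ⟨V, hV, x, hxV⟩
      have hc2 : {V ∈ B | V.Nonempty}.Countable := hBc.mono (Set.sep_subset _ _)
      obtain ⟨U, hU⟩ := hc2.exists_eq_range ⟨V0, hV0, x0, hx0⟩
      have hUm : ∀ n, U n ∈ {V ∈ B | V.Nonempty} := fun n => by rw [hU]; exact ⟨n, rfl⟩
      refine ⟨U, fun n => hB.isOpen (hUm n).1, fun n => ?_, fun V hV hVn => ?_⟩
      · obtain ⟨x, hx, hx'⟩ := hdense.inter_open_nonempty _ (hB.isOpen (hUm n).1) (hUm n).2
        exact ⟨x, hx, hx'⟩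
      · have : V ∈ {V ∈ B | V.Nonempty} := ⟨hV, hVn⟩
        rw [hU] at this
        exact this
  obtain ⟨U, hUo, hUD, hUB⟩ := hUex
  obtain ⟨c, Q, σ, hcz, hcloc, hstage⟩ := bt_seq hS h1 hB hBD hD hfree hinv U hUo hUD
  set O : Set E := interior {x | ∃ n, c n x = none} with hO
  have hOd : Dense O := by
    rw [hB.dense_iff]
    intro V hV hVn
    obtain ⟨n, rfl⟩ := hUB V hV hVn
    obtain ⟨x, hxU, hxD, hxc⟩ := (hstage n).2.2.2.2
    refine ⟨x, hxU, mem_interior_iff_mem_nhds.2 ?_⟩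
    filter_upwards [hcloc (n + 1) x hxD] with y hy
    exact ⟨n + 1, by rw [hy, hxc]⟩
  have hOm : IsMeagre Oᶜ := by
    rw [IsMeagre, compl_compl]
    exact residual_of_dense_open isOpen_interior hOd
  set C : Set E := {x | ∀ g : Γ, g • x ∈ O ∧ g • x ∉ D} with hC
  have hCD : ∀ x ∈ C, x ∉ D := fun x hx => by simpa using (hx 1).2
  have hCO : ∀ x ∈ C, ∃ n, c n x = none := fun x hx => by
    have := (hx 1).1
    rw [one_smul] at this
    have h2 : x ∈ {x | ∃ n, c n x = none} := interior_subset this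
    exact h2
  have hCinv : ∀ (g : Γ) (x : E), x ∈ C → g • x ∈ C := fun g x hx h => by
    rw [← mul_smul]; exact hx _
  have hup : ∀ n x, c (n + 1) x = if x ∈ Q n ∨ (σ n)⁻¹ • x ∈ Q n then none else c n x := by
    intro n x; rw [(hstage n).2.2.1, btUpd]
  have hnone : ∀ n m x, n ≤ m → c n x = none → c m x = none := by
    intro n m x hnm hn
    induction m, hnm using Nat.le_induction with
    | base => exact hn
    | succ m _ ih => rw [hup, ih]; simp
  have hsome : ∀ n x b, c n x = some b → c0 x = some b := by
    intro n x b
    induction n with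
    | zero => rw [hcz]; exact id
    | succ n ih =>
      intro h
      rw [hup] at h
      split_ifs at h
      exact ih h
  have hlast : ∀ x ∈ C, c0 x ≠ none → ∃ n, c n x = c0 x ∧ (x ∈ Q n ∨ (σ n)⁻¹ • x ∈ Q n) := by
    intro x hx h0
    have hex := hCO x hx
    obtain ⟨n, hn⟩ : ∃ n, Nat.find hex = n + 1 := by
      apply Nat.exists_eq_succ_of_ne_zero
      intro e
      have := Nat.find_spec hex
      rw [e, hcz] at this
      exact h0 this
    have h2 := Nat.find_spec hex
    rw [hn] at h2
    have h3 : c n x ≠ none := Nat.find_min hex (by omega)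
    refine ⟨n, ?_, ?_⟩
    · obtain ⟨b, hb⟩ := Option.ne_none_iff_exists'.1 h3
      rw [hb, hsome n x b hb]
    · by_contra h4
      rw [hup, if_neg h4] at h2
      exact h3 h2
  have hQ1 : ∀ n, ∀ x ∈ C, x ∈ Q n → c n x = some true ∧ c n (σ n • x) = some false :=
    fun n x hx hxQ => (hstage n).2.2.2.1 x hxQ (hCD x hx)
  refine ⟨C, Q, σ, ?_, hCinv, fun n => (hstage n).1, fun n => (hstage n).2.1, ?_, ?_, ?_, ?_, ?_⟩
  · have : Cᶜ = ⋃ g : Γ, ({x | g • x ∈ Oᶜ} ∪ {x | g • x ∈ D}) := by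
      ext x
      simp only [hC, Set.mem_compl_iff, Set.mem_ofPred_eq, Set.mem_iUnion, Set.mem_union,
        not_forall]
      refine exists_congr fun g => ?_
      rw [not_and_or, not_not]
    rw [this]
    exact isMeagre_iUnion fun g => (hpre g _ hOm).union (hpre g _ hDm)
  · intro n x hx hxQ
    obtain ⟨a1, a2⟩ := hQ1 n x hx hxQ
    exact ⟨(hc0X _).1 (hsome _ _ _ a1), (hc0Y _).1 (hsome _ _ _ a2)⟩
  · intro x hx hxX
    have h0 := (hc0X x).2 hxX
    obtain ⟨n, hn, hn2⟩ := hlast x hx (by simp [h0])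
    refine ⟨n, hn2.resolve_right fun h => ?_⟩
    have := (hQ1 n _ (hCinv _ _ hx) h).2
    rw [smul_inv_smul, hn, h0] at this
    simp at this
  · intro x hx hxY
    have h0 := (hc0Y x).2 hxY
    obtain ⟨n, hn, hn2⟩ := hlast x hx (by simp [h0])
    refine ⟨n, hn2.resolve_left fun h => ?_⟩
    have := (hQ1 n _ hx h).1
    rw [hn, h0] at this
    simp at this
  · have key : ∀ n m, ∀ x ∈ C, x ∈ Q n → x ∈ Q m → ¬ n < m := by
      intro n m x hx hn hm hlt
      have e1 : c (n + 1) x = none := by rw [hup]; simp [hn]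
      have e2 := hnone _ m x hlt e1
      rw [(hQ1 m x hx hm).1] at e2
      simp at e2
    intro n m x hx hn hm
    exact le_antisymm (not_lt.1 (key m n x hx hm hn)) (not_lt.1 (key n m x hx hn hm))
  · have key : ∀ n m, ∀ x ∈ C, ∀ y ∈ C, x ∈ Q n → y ∈ Q m → σ n • x = σ m • y → ¬ n < m := by
      intro n m x hx y hy hn hm he hlt
      have e1 : c (n + 1) (σ n • x) = none := by rw [hup]; simp [hn]
      have e2 := hnone _ m _ hlt e1
      rw [he, (hQ1 m y hy hm).2] at e2
      simp at e2
    intro n m x hx y hy hn hm he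
    exact le_antisymm (not_lt.1 (key m n y hy x hx hm hn he.symm))
      (not_lt.1 (key n m x hx y hy hn hm he))

theorem bt_equi [T2Space E] [SecondCountableTopology E] [BaireSpace E] [Nonempty E] [Countable Γ]
    {S : Finset Γ} (hS : ∀ s ∈ S, s⁻¹ ∈ S)
    (h1 : (1 : Γ) ∈ S) (hfix : ∀ g : Γ, g ≠ 1 → interior {x : E | g • x = x} = ∅)
    {X Y : Set E} (hXc : IsClosed X) (hYc : IsClosed Y) (hXY : Disjoint X Y)
    (hX : ∀ F : Finset E, (∀ x ∈ F, x ∈ X) → 2 * F.card ≤ ((S • F).filter (fun y => y ∈ Y)).card)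
    (hY : ∀ F : Finset E, (∀ x ∈ F, x ∈ Y) → 2 * F.card ≤ ((S • F).filter (fun y => y ∈ X)).card) :
    ∃ φ : E → Γ, (∀ x ∈ X, φ x ∈ S) ∧ (∀ s, BaireMeasurableSet {x | x ∈ X ∧ φ x = s}) ∧
      Set.BijOn (fun x => φ x • x) X Y := by
  obtain ⟨C, Q, σ, hCm, hCinv, hσ, hQo, hQ1, hQX, hQY, hu, hi⟩ :=
    bt_generic hS h1 hfix hXc hYc hXY hX hY
  have hCinv' : ∀ (g : Γ) (x : E), g • x ∈ C → x ∈ C := fun g x h => by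
    simpa using hCinv g⁻¹ _ h
  have hbu : ∀ F : Finset E, F.biUnion (fun g => S • ({g} : Finset E)) = S • F := by
    intro F
    ext x
    simp only [Finset.mem_biUnion, Finset.mem_smul, Finset.mem_singleton]
    constructor
    · rintro ⟨a, ha, y, hy, z, rfl, rfl⟩; exact ⟨y, hy, z, ha, rfl⟩
    · rintro ⟨y, hy, z, hz, rfl⟩; exact ⟨z, hz, y, hy, z, rfl, rfl⟩
  have aux : ∀ X Y : Set E, (∀ F : Finset E, (∀ x ∈ F, x ∈ X) →
      2 * F.card ≤ ((S • F).filter (fun y => y ∈ Y)).card) → ∀ F : Finset E,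
      (∀ x ∈ F, x ∈ X \ C) → F.card ≤
        ((F.biUnion (fun g => S • ({g} : Finset E))).filter (fun y => y ∈ Y \ C)).card := by
    intro X Y hX F hF
    have h2 := hX F (fun x hx => (hF x hx).1)
    rw [hbu]
    have : (S • F).filter (fun y => y ∈ Y) ⊆ (S • F).filter (fun y => y ∈ Y \ C) := by
      intro y hy
      obtain ⟨hy1, hy2⟩ := Finset.mem_filter.1 hy
      refine Finset.mem_filter.2 ⟨hy1, hy2, ?_⟩
      obtain ⟨s, hs, z, hz, rfl⟩ := Finset.mem_smul.1 hy1
      exact fun h => (hF z hz).2 (hCinv' _ _ h)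
    have := Finset.card_le_card this
    omega
  obtain ⟨h, hb, hh⟩ := bt_hall_sb (X \ C) (Y \ C) (fun g => S • ({g} : Finset E)) (by
      intro x y hy
      obtain ⟨s, hs, z, hz, rfl⟩ := Finset.mem_smul.1 hy
      rw [Finset.mem_singleton] at hz
      subst hz
      exact Finset.mem_smul.2 ⟨s⁻¹, hS s hs, s • z, by simp, by simp⟩) 
      (fun F hF => by convert aux X Y hX F hF) (fun F hF => by convert aux Y X hY F hF)
  have hh2 : ∀ u : ↥(X \ C), ∃ s ∈ S, s • (u : E) = h u := by
    intro u
    obtain ⟨s, hs, z, hz, e⟩ := Finset.mem_smul.1 (hh u)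
    rw [Finset.mem_singleton] at hz
    exact ⟨s, hs, by rw [← hz, e]⟩
  choose τ hτS hτ using hh2
  set φ : E → Γ := fun x => if hx : x ∈ X \ C then τ ⟨x, hx⟩ else
    if hx : ∃ n, x ∈ Q n then σ hx.choose else 1 with hφ
  have hφ1 : ∀ x (hx : x ∈ X \ C), φ x = τ ⟨x, hx⟩ := fun x hx => by simp only [hφ, dif_pos hx]
  have hφ2 : ∀ n, ∀ x ∈ C, x ∈ Q n → φ x = σ n := by
    intro n x hx hxQ
    have hex : ∃ n, x ∈ Q n := ⟨n, hxQ⟩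
    have hx' : ¬ x ∈ X \ C := fun h => h.2 hx
    simp only [hφ, dif_neg hx', dif_pos hex]
    rw [hu _ n x hx hex.choose_spec hxQ]
  have hφC : ∀ x ∈ X, x ∈ C → φ x • x ∈ Y ∧ φ x • x ∈ C := by
    intro x hx hxC
    obtain ⟨n, hn⟩ := hQX x hxC hx
    rw [hφ2 n x hxC hn]
    exact ⟨(hQ1 n x hxC hn).2, hCinv _ _ hxC⟩
  have hφD : ∀ x (hx : x ∈ X \ C), φ x • x = h ⟨x, hx⟩ := by
    intro x hx
    rw [hφ1 x hx, hτ]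
  refine ⟨φ, ?_, ?_, ?_, ?_, ?_⟩
  · intro x hx
    by_cases hxC : x ∈ C
    · obtain ⟨n, hn⟩ := hQX x hxC hx
      rw [hφ2 n x hxC hn]; exact hσ n
    · rw [hφ1 x ⟨hx, hxC⟩]; exact hτS _
  · intro s
    have e : {x | x ∈ X ∧ φ x = s} = ((⋃ n ∈ {n | σ n = s}, Q n) \ Cᶜ) ∪
        ({x | x ∈ X ∧ φ x = s} ∩ Cᶜ) := by
      ext x
      by_cases hxC : x ∈ C
      · simp only [Set.mem_ofPred_eq, Set.mem_union, Set.mem_sdiff, Set.mem_iUnion,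
          Set.mem_compl_iff, hxC, not_true, not_false_iff, Set.mem_inter_iff, and_true,
          and_false, or_false, exists_prop]
        constructor
        · rintro ⟨hx, hs⟩
          obtain ⟨n, hn⟩ := hQX x hxC hx
          exact ⟨n, by rw [← hφ2 n x hxC hn, hs], hn⟩
        · rintro ⟨n, hn, hxn⟩
          exact ⟨(hQ1 n x hxC hxn).1, by rw [hφ2 n x hxC hxn, hn]⟩
      · simp [hxC]
    rw [e]
    apply BaireMeasurableSet.union
    · apply BaireMeasurableSet.diff
      · exact (isOpen_biUnion fun n _ => hQo n).baireMeasurableSet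
      · exact hCm.baireMeasurableSet
    · exact (hCm.mono Set.inter_subset_right).baireMeasurableSet
  · intro x hx
    by_cases hxC : x ∈ C
    · exact (hφC x hx hxC).1
    · change φ x • x ∈ Y
      rw [hφD x ⟨hx, hxC⟩]; exact (h _).2.1
  · intro x hx y hy e
    change φ x • x = φ y • y at e
    by_cases hxC : x ∈ C
    · by_cases hyC : y ∈ C
      · obtain ⟨n, hn⟩ := hQX x hxC hx
        obtain ⟨m, hm⟩ := hQX y hyC hy
        rw [hφ2 n x hxC hn, hφ2 m y hyC hm] at e
        have := hi n m x hxC y hyC hn hm e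
        subst this
        exact smul_left_cancel _ e
      · exfalso
        have := (hφC x hx hxC).2
        rw [e, hφD y ⟨hy, hyC⟩] at this
        exact (h _).2.2 this
    · by_cases hyC : y ∈ C
      · exfalso
        have := (hφC y hy hyC).2
        rw [← e, hφD x ⟨hx, hxC⟩] at this
        exact (h _).2.2 this
      · rw [hφD x ⟨hx, hxC⟩, hφD y ⟨hy, hyC⟩] at e
        have := hb.1 (Subtype.ext e)
        exact congrArg Subtype.val this
  · intro y hy
    by_cases hyC : y ∈ C
    · obtain ⟨n, hn⟩ := hQY y hyC hy
      have hxC := hCinv (σ n)⁻¹ y hyC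
      refine ⟨(σ n)⁻¹ • y, (hQ1 n _ hxC hn).1, ?_⟩
      change φ _ • _ = y
      rw [hφ2 n _ hxC hn, smul_inv_smul]
    · obtain ⟨x, hx⟩ := hb.2 ⟨y, hy, hyC⟩
      refine ⟨x, x.2.1, ?_⟩
      change φ _ • _ = y
      rw [hφD x x.2, hx]
end

noncomputable section
open scoped Classical
open Topology Filter

section expand
variable {K : Type*} [Group K] {Ω : Type*} [MulAction K Ω]

def btExp (S : Finset K) (X Y : Set Ω) (n : ℕ) : Prop :=
  ∀ F : Finset Ω, (∀ x ∈ F, x ∈ X) → n * F.card ≤ ((S • F).filter (fun y => y ∈ Y)).card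

theorem btExp.mono {S S' : Finset K} {X X' Y Y' : Set Ω} {n : ℕ} (h : btExp S X Y n) (hS : S ⊆ S')
    (hX : X' ⊆ X) (hY : Y ⊆ Y') : btExp S' X' Y' n := by
  intro F hF
  refine (h F fun x hx => hX (hF x hx)).trans (Finset.card_le_card ?_)
  intro y hy
  obtain ⟨h1, h2⟩ := Finset.mem_filter.1 hy
  exact Finset.mem_filter.2 ⟨Finset.smul_subset_smul_right hS h1, hY h2⟩

theorem btExp.comp {S T : Finset K} {X Y Z : Set Ω} {m n : ℕ} (h : btExp S X Y m)
    (h' : btExp T Y Z n) : btExp (T * S) X Z (n * m) := by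
  intro F hF
  have h1 := h F hF
  have h2 := h' ((S • F).filter (fun y => y ∈ Y)) (fun x hx => (Finset.mem_filter.1 hx).2)
  calc n * m * F.card = n * (m * F.card) := by ring
    _ ≤ n * ((S • F).filter (fun y => y ∈ Y)).card := Nat.mul_le_mul_left _ h1
    _ ≤ _ := h2
    _ ≤ _ := by
      apply Finset.card_le_card
      apply Finset.filter_subset_filter
      rw [mul_smul]
      exact Finset.smul_subset_smul_left (Finset.filter_subset _ _)

theorem btExp.single {t : K} {X Y : Set Ω} (h : ∀ x ∈ X, t • x ∈ Y) :
    btExp {t} X Y 1 := by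
  intro F hF
  rw [one_mul, ← Finset.card_image_of_injective F (MulAction.injective t)]
  apply Finset.card_le_card
  intro y hy
  obtain ⟨x, hx, rfl⟩ := Finset.mem_image.1 hy
  exact Finset.mem_filter.2 ⟨Finset.mem_smul.2 ⟨t, by simp, x, hx, rfl⟩, h x (hF x hx)⟩

theorem btExp.union {S : Finset K} {X X' Y : Set Ω} {n : ℕ} (h : btExp S X Y (2 * n))
    (h' : btExp S X' Y (2 * n)) : btExp S (X ∪ X') Y n := by
  have sub : ∀ F F' : Finset Ω, F' ⊆ F → ((S • F').filter (fun y => y ∈ Y)).card ≤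
      ((S • F).filter (fun y => y ∈ Y)).card := fun F F' hF =>
    Finset.card_le_card (Finset.filter_subset_filter _ (Finset.smul_subset_smul_left hF))
  intro F hF
  have h1 := h (F.filter (fun x => x ∈ X)) (fun x hx => (Finset.mem_filter.1 hx).2)
  have h2 := h' (F.filter (fun x => ¬ x ∈ X)) (fun x hx => by
    obtain ⟨a, b⟩ := Finset.mem_filter.1 hx
    exact (hF x a).resolve_left b)
  have h3 := sub F _ (Finset.filter_subset (fun x => x ∈ X) F)
  have h4 := sub F _ (Finset.filter_subset (fun x => ¬ x ∈ X) F)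
  have h5 := Finset.card_filter_add_card_filter_not (s := F) (fun x => x ∈ X)
  nlinarith

theorem btExp.point {S : Finset K} {x : Ω} {Y : Set Ω} {n : ℕ} (f : Fin n → K)
    (hf : ∀ i, f i ∈ S) (hinj : Function.Injective fun i => f i • x) (hY : ∀ i, f i • x ∈ Y) :
    btExp S {x} Y n := by
  intro F hF
  rcases Finset.eq_empty_or_nonempty F with rfl | ⟨y, hy⟩
  · simp
  have hFx : F = {x} := by
    apply Finset.eq_singleton_iff_unique_mem.2
    have := hF y hy
    rw [Set.mem_singleton_iff] at this
    subst this
    exact ⟨hy, fun z hz => hF z hz⟩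
  rw [hFx, Finset.card_singleton, mul_one]
  calc n = (Finset.univ.image (fun i => f i • x)).card := by
        rw [Finset.card_image_of_injective _ hinj, Finset.card_univ, Fintype.card_fin]
    _ ≤ _ := by
      apply Finset.card_le_card
      intro z hz
      obtain ⟨i, -, rfl⟩ := Finset.mem_image.1 hz
      exact Finset.mem_filter.2 ⟨Finset.mem_smul.2 ⟨f i, hf i, x, by simp, rfl⟩, hY i⟩

theorem btExp.map {G : Type*} [Group G] [MulAction G Ω] (f : G →* K)
    (hf : ∀ g (x : Ω), f g • x = g • x) {S : Finset G} {X Y : Set Ω} {n : ℕ}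
    (h : btExp S X Y n) : btExp (S.image f) X Y n := by
  intro F hF
  refine (h F hF).trans (Finset.card_le_card (Finset.filter_subset_filter _ ?_))
  intro y hy
  obtain ⟨s, hs, z, hz, rfl⟩ := Finset.mem_smul.1 hy
  exact Finset.mem_smul.2 ⟨f s, Finset.mem_image_of_mem _ hs, z, hz, hf s z⟩

end expand

section free
open FreeGroup

def btF (i : Bool) (g : FreeGroup Bool) : FreeGroup Bool :=
  if g ∈ startsWith (i, true) then 1 else mk [(i, false)]

theorem btF_mem (i : Bool) (g : FreeGroup Bool) :
    btF i g * g ∈ startsWith (i, true) ∨ btF i g * g ∈ startsWith (i, false) := by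
  unfold btF
  split_ifs with h
  · left; simpa using h
  · right; exact startsWith_mk_mul (w := (i, false)) g (by simpa using h)

theorem bt_sw {w w' : Bool × Bool} {g : FreeGroup Bool} (h : g ∈ startsWith w)
    (h' : g ∈ startsWith w') : w = w' := by
  by_contra hne
  exact Set.disjoint_left.1 (startsWith.disjoint_iff_ne.2 hne) h h'

theorem btF_inj (i : Bool) (g h : FreeGroup Bool) (e : btF i g * g = btF i h * h) : g = h := by
  unfold btF at e
  split_ifs at e with h1 h2 h2
  · simpa using e
  · have := startsWith_mk_mul (w := (i, false)) h (by simpa using h2)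
    rw [← e, one_mul] at this
    simpa using bt_sw h1 this
  · have := startsWith_mk_mul (w := (i, false)) g (by simpa using h1)
    rw [e, one_mul] at this
    simpa using bt_sw h2 this
  · simpa using e

theorem bt_free_exp {Ω : Type*} [MulAction (FreeGroup Bool) Ω] :
    btExp ({1, mk [(true, false)], mk [(false, false)]} : Finset (FreeGroup Bool))
      {x : Ω | ∀ g : FreeGroup Bool, g ≠ 1 → g • x ≠ x}
      {x : Ω | ∀ g : FreeGroup Bool, g ≠ 1 → g • x ≠ x} 2 := by
  intro F hF
  have hrep : ∀ x : Ω, ∃ g : FreeGroup Bool,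
      g • (Quotient.out (⟦x⟧ : MulAction.orbitRel.Quotient (FreeGroup Bool) Ω)) = x := by
    intro x
    have : (MulAction.orbitRel (FreeGroup Bool) Ω).r x (Quotient.out
      (⟦x⟧ : MulAction.orbitRel.Quotient (FreeGroup Bool) Ω)) :=
      (MulAction.orbitRel (FreeGroup Bool) Ω).symm (Quotient.mk_out (s := MulAction.orbitRel (FreeGroup Bool) Ω) x)
    exact MulAction.mem_orbit_iff.1 (MulAction.orbitRel_apply.1 this)
  choose γ hγ using hrep
  set f : Bool → Ω → Ω := fun i x => btF i (γ x) • x with hf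
  have hS : ∀ i g, btF i g ∈
      ({1, mk [(true, false)], mk [(false, false)]} : Finset (FreeGroup Bool)) := by
    intro i g
    unfold btF
    split_ifs
    · simp
    · cases i <;> simp
  have hfr : ∀ (g : FreeGroup Bool) (x : Ω), (∀ g : FreeGroup Bool, g ≠ 1 → g • x ≠ x) →
      ∀ h : FreeGroup Bool, h ≠ 1 → h • g • x ≠ g • x := by
    intro g x hx h hne e
    refine hx (g⁻¹ * h * g) ?_ ?_
    · intro e2
      apply hne
      have : h = g * (g⁻¹ * h * g) * g⁻¹ := by group
      rw [this, e2]; group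
    · rw [mul_smul, mul_smul, e, inv_smul_smul]
  -- key
  have key : ∀ i j, ∀ x ∈ F, ∀ y ∈ F, f i x = f j y →
      btF i (γ x) * γ x = btF j (γ y) * γ y ∧
        (γ x = γ y → x = y) := by
    intro i j x hx y hy e
    have ho : (⟦x⟧ : MulAction.orbitRel.Quotient (FreeGroup Bool) Ω) = ⟦y⟧ := by
      apply Quotient.sound
      change x ∈ MulAction.orbit _ y
      refine ⟨(btF i (γ x))⁻¹ * btF j (γ y), ?_⟩
      change ((btF i (γ x))⁻¹ * btF j (γ y)) • y = x
      rw [mul_smul]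
      exact inv_smul_eq_iff.2 e.symm
    have hx2 := hγ x
    have hy2 := hγ y
    rw [← ho] at hy2
    set r := Quotient.out (⟦x⟧ : MulAction.orbitRel.Quotient (FreeGroup Bool) Ω) with hr
    constructor
    · by_contra hne
      have hr' : ∀ g : FreeGroup Bool, g ≠ 1 → g • r ≠ r := by
        have := hfr (γ x)⁻¹ x (hF x hx)
        have e3 : (γ x)⁻¹ • x = r := inv_smul_eq_iff.2 hx2.symm
        rwa [e3] at this
      refine hr' ((btF i (γ x) * γ x)⁻¹ * (btF j (γ y) * γ y))
        (fun h => hne (inv_mul_eq_one.1 h)) ?_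
      rw [mul_smul, inv_smul_eq_iff, mul_smul, mul_smul, hx2, hy2]
      exact e.symm
    · intro h
      rw [← hx2, ← hy2, h]
  have hinj : ∀ i, Set.InjOn (f i) F := by
    intro i x hx y hy e
    obtain ⟨a, b⟩ := key i i x hx y hy e
    exact b (btF_inj i _ _ a)
  have hdis : Disjoint (F.image (f true)) (F.image (f false)) := by
    rw [Finset.disjoint_left]
    intro z hz hz'
    obtain ⟨x, hx, rfl⟩ := Finset.mem_image.1 hz
    obtain ⟨y, hy, e⟩ := Finset.mem_image.1 hz'
    obtain ⟨a, -⟩ := key false true y hy x hx e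
    have h1 := btF_mem false (γ y)
    have h2 := btF_mem true (γ x)
    rw [a] at h1
    rcases h1 with h1 | h1 <;> rcases h2 with h2 | h2 <;>
      · have := bt_sw h1 h2
        simp at this
  calc 2 * F.card = (F.image (f true) ∪ F.image (f false)).card := by
        rw [Finset.card_union_of_disjoint hdis, Finset.card_image_of_injOn (hinj _),
          Finset.card_image_of_injOn (hinj _)]
        ring
    _ ≤ _ := by
      apply Finset.card_le_card
      intro z hz
      have : ∃ i, ∃ x ∈ F, f i x = z := by
        rcases Finset.mem_union.1 hz with h | h
        · exact ⟨true, Finset.mem_image.1 h⟩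
        · exact ⟨false, Finset.mem_image.1 h⟩
      obtain ⟨i, x, hx, rfl⟩ := this
      exact Finset.mem_filter.2 ⟨Finset.mem_smul.2 ⟨_, hS i _, x, hx, rfl⟩, hfr _ x (hF x hx)⟩

end free
end

noncomputable section
open scoped Classical
open Topology Filter FreeGroup

def btM : Bool × Bool → Matrix (Fin 3) (Fin 3) ℤ
  | (true, true) => !![3, -4, 0; 4, 3, 0; 0, 0, 5]
  | (true, false) => !![3, 4, 0; -4, 3, 0; 0, 0, 5]
  | (false, true) => !![5, 0, 0; 0, 3, -4; 0, 4, 3]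
  | (false, false) => !![5, 0, 0; 0, 3, 4; 0, -4, 3]

def btMR (s : Bool × Bool) : Matrix (Fin 3) (Fin 3) ℝ := (btM s).map (Int.cast : ℤ → ℝ)

def btMap (s : Bool × Bool) (x : EuclideanSpace ℝ (Fin 3)) : EuclideanSpace ℝ (Fin 3) :=
  WithLp.toLp 2 ((1 / 5 : ℝ) • (btMR s).mulVec x.ofLp)

theorem btMap_inv (i b : Bool) (x : EuclideanSpace ℝ (Fin 3)) :
    btMap (i, !b) (btMap (i, b) x) = x := by
  ext j
  cases i <;> cases b <;> fin_cases j <;>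
    simp [btMap, btMR, btM, Matrix.mulVec, dotProduct, Fin.sum_univ_three] <;> ring

theorem btMap_iso (s : Bool × Bool) : Isometry (btMap s) := by
  apply Isometry.of_dist_eq
  intro x y
  rw [EuclideanSpace.dist_eq, EuclideanSpace.dist_eq]
  congr 1
  obtain ⟨i, b⟩ := s
  cases i <;> cases b <;>
    simp [btMap, btMR, btM, Matrix.mulVec, dotProduct, Fin.sum_univ_three, Real.dist_eq, sq_abs]
      <;> ring

def btGen (i : Bool) : EuclideanSpace ℝ (Fin 3) ≃ᵢ EuclideanSpace ℝ (Fin 3) :=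
  { toFun := btMap (i, true)
    invFun := btMap (i, false)
    left_inv := fun x => btMap_inv i true x
    right_inv := fun x => btMap_inv i false x
    isometry_toFun := btMap_iso _ }

def btPhi : FreeGroup Bool →* (EuclideanSpace ℝ (Fin 3) ≃ᵢ EuclideanSpace ℝ (Fin 3)) :=
  FreeGroup.lift btGen

theorem btPhi_letter (s : Bool × Bool) (x : EuclideanSpace ℝ (Fin 3)) :
    btPhi (mk [s]) x = btMap s x := by
  obtain ⟨i, b⟩ := s
  cases b <;> simp [btPhi] <;> rfl

def btW (l : List (Bool × Bool)) : Matrix (Fin 3) (Fin 3) ℤ := (l.map btM).prod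

theorem btPhi_word (l : List (Bool × Bool)) (x : EuclideanSpace ℝ (Fin 3)) :
    (5 : ℝ) ^ l.length • (btPhi (mk l) x).ofLp =
      ((btW l).map (Int.cast : ℤ → ℝ)).mulVec x.ofLp := by
  induction l with
  | nil =>
    have : (mk [] : FreeGroup Bool) = 1 := rfl
    rw [this]
    simp [btW]
  | cons s l ih =>
    have : (mk (s :: l) : FreeGroup Bool) = mk [s] * mk l := rfl
    have e : (btW (s :: l)).map (Int.cast : ℤ → ℝ) = btMR s * (btW l).map (Int.cast : ℤ → ℝ) := by
      have : btW (s :: l) = btM s * btW l := by simp [btW]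
      rw [this]
      exact Matrix.map_mul (f := Int.castRingHom ℝ)
    rw [this, _root_.map_mul, IsometryEquiv.mul_apply, btPhi_letter, e, ← Matrix.mulVec_mulVec, ← ih,
      Matrix.mulVec_smul, btMap, List.length_cons, pow_succ, smul_smul]
    congr 1
    ring

theorem btM_transpose (i b : Bool) : btM (i, !b) = (btM (i, b)).transpose := by
  cases i <;> cases b <;> decide

theorem btW_transpose (l : List (Bool × Bool)) : btW (invRev l) = (btW l).transpose := by
  induction l with
  | nil => simp [btW]
  | cons s l ih =>
    have e1 : invRev (s :: l) = invRev l ++ [(s.1, !s.2)] := by simp [invRev]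
    have e2 : btW (s :: l) = btM s * btW l := by simp [btW]
    have e3 : btW (invRev l ++ [(s.1, !s.2)]) = btW (invRev l) * btM (s.1, !s.2) := by
      simp [btW]
    rw [e1, e2, e3, ih, Matrix.transpose_mul, btM_transpose]

def btu : Bool × Bool → Fin 3 → ZMod 5
  | (true, true) => ![1, 3, 0]
  | (true, false) => ![1, 2, 0]
  | (false, true) => ![0, 1, 3]
  | (false, false) => ![0, 1, 2]

theorem btM_mod : ∀ s t : Bool × Bool, (s.1 = t.1 → s.2 = t.2) → ∃ d : ZMod 5, d ≠ 0 ∧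
    ((btM s).map (Int.cast : ℤ → ZMod 5)).mulVec (btu t) = d • btu s := by
  decide

theorem btu_ne : ∀ s, btu s ≠ 0 := by decide

theorem btW_mod (l : List (Bool × Bool)) : ∀ s, IsReduced (s :: l) → ∃ (x : Fin 3 → ZMod 5)
    (c : ZMod 5), c ≠ 0 ∧
      ((btW (s :: l)).map (Int.cast : ℤ → ZMod 5)).mulVec x = c • btu s := by
  have e : ∀ s l, (btW (s :: l)).map (Int.cast : ℤ → ZMod 5) =
      (btM s).map (Int.cast : ℤ → ZMod 5) * (btW l).map (Int.cast : ℤ → ZMod 5) := by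
    intro s l
    have : btW (s :: l) = btM s * btW l := by simp [btW]
    rw [this]
    exact Matrix.map_mul (f := Int.castRingHom (ZMod 5))
  have : Fact (Nat.Prime 5) := ⟨by norm_num⟩
  induction l with
  | nil =>
    intro s _
    obtain ⟨d, hd, h⟩ := btM_mod s s (fun _ => rfl)
    refine ⟨btu s, d, hd, ?_⟩
    have : btW [s] = btM s := by simp [btW]
    rw [this, h]
  | cons t l ih =>
    intro s hs
    obtain ⟨h1, h2⟩ := isReduced_cons_cons.1 hs
    obtain ⟨x, c, hc, hx⟩ := ih t h2
    obtain ⟨d, hd, h⟩ := btM_mod s t h1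
    refine ⟨x, c * d, mul_ne_zero hc hd, ?_⟩
    rw [e, ← Matrix.mulVec_mulVec, hx, Matrix.mulVec_smul, h, smul_smul]

theorem btM_eq {A B : Matrix (Fin 3) (Fin 3) ℤ}
    (h : ∀ x : EuclideanSpace ℝ (Fin 3), (A.map (Int.cast : ℤ → ℝ)).mulVec x.ofLp =
      (B.map (Int.cast : ℤ → ℝ)).mulVec x.ofLp) : A = B := by
  have h2 : A.map (Int.cast : ℤ → ℝ) = B.map (Int.cast : ℤ → ℝ) := by
    apply Matrix.mulVec_injective
    funext v
    exact h (WithLp.toLp 2 v)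
  exact Matrix.map_injective Int.cast_injective h2

theorem btPhi_inj (g : FreeGroup Bool) (hg : btPhi g = 1) : g = 1 := by
  by_contra hne
  have hw : g.toWord ≠ [] := fun h => hne (toWord_eq_nil_iff.1 h)
  obtain ⟨s, l, hl⟩ := List.exists_cons_of_ne_nil hw
  have hred : IsReduced (s :: l) := hl ▸ isReduced_toWord
  obtain ⟨x, c, hc, hx⟩ := btW_mod l s hred
  have hg2 : mk (s :: l) = g := by rw [← hl, mk_toWord]
  have e : btW (s :: l) = (5 : ℤ) ^ (s :: l).length • (1 : Matrix (Fin 3) (Fin 3) ℤ) := by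
    apply btM_eq
    intro x
    rw [← btPhi_word, hg2, hg]
    have : ((5 : ℤ) ^ (s :: l).length • (1 : Matrix (Fin 3) (Fin 3) ℤ)).map (Int.cast : ℤ → ℝ) =
      (5 : ℝ) ^ (s :: l).length • (1 : Matrix (Fin 3) (Fin 3) ℝ) := by
      ext i j
      rw [Matrix.map_apply, Matrix.smul_apply, Matrix.smul_apply, Matrix.one_apply,
        Matrix.one_apply]
      by_cases h : i = j <;> simp [h]
    rw [this, Matrix.smul_mulVec, Matrix.one_mulVec]
    rfl
  rw [e] at hx
  have : ((5 : ℤ) ^ (s :: l).length • (1 : Matrix (Fin 3) (Fin 3) ℤ)).map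
      (Int.cast : ℤ → ZMod 5) = 0 := by
    have h5 : (5 : ZMod 5) = 0 := by decide
    ext i j
    rw [Matrix.map_apply, Matrix.smul_apply, smul_eq_mul, Int.cast_mul, Int.cast_pow,
      List.length_cons, pow_succ]
    have h6 : ((5 : ℤ) : ZMod 5) = 0 := by exact_mod_cast h5
    rw [h6]
    simp
  rw [this, Matrix.zero_mulVec] at hx
  have : Fact (Nat.Prime 5) := ⟨by norm_num⟩
  exact (smul_ne_zero hc (btu_ne s)) hx.symm

/-- points on a rational line -/
def btD : Set (EuclideanSpace ℝ (Fin 3)) :=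
  {x | ∃ w : Fin 3 → ℤ, w ≠ 0 ∧ ∃ c : ℝ, ∀ i, x i = c * w i}

theorem bt_cross {w : Fin 3 → ℤ} {x : EuclideanSpace ℝ (Fin 3)} (hw : w ≠ 0)
    (h1 : w 0 * x 1 = w 1 * x 0) (h2 : w 0 * x 2 = w 2 * x 0) (h3 : w 1 * x 2 = w 2 * x 1) :
    x ∈ btD := by
  obtain ⟨k, hk⟩ : ∃ k, w k ≠ 0 := by
    by_contra h; push Not at h; exact hw (funext h)
  have hk' : (w k : ℝ) ≠ 0 := by exact_mod_cast hk
  refine ⟨w, hw, x k / w k, ?_⟩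
  intro i
  rw [div_mul_eq_mul_div, eq_div_iff hk']
  fin_cases k <;> fin_cases i <;> simp at * <;> linarith

theorem bt_stab (g : FreeGroup Bool) (hg : g ≠ 1) (x : EuclideanSpace ℝ (Fin 3))
    (hx : btPhi g x = x) : x ∈ btD := by
  set l := g.toWord with hl
  have hgl : mk l = g := mk_toWord
  have hgi : mk (invRev l) = g⁻¹ := by rw [← inv_mk, hgl]
  have hx' : btPhi g⁻¹ x = x := by
    rw [_root_.map_inv]
    nth_rewrite 1 [← hx]
    exact IsometryEquiv.inv_apply_self _ _
  have e1 := btPhi_word l x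
  have e2 := btPhi_word (invRev l) x
  rw [hgl, hx] at e1
  rw [hgi, hx', invRev_length, btW_transpose] at e2
  have hns : btW l ≠ (btW l).transpose := by
    intro h
    apply hg
    have hgg : btPhi (g ^ 2) = 1 := by
      ext1 y
      have f1 := btPhi_word l (btPhi g y)
      have f2 := btPhi_word (invRev l) (btPhi g y)
      rw [invRev_length, btW_transpose, ← h, ← f1, hgl, hgi] at f2
      have h5 : (5 : ℝ) ^ l.length ≠ 0 := by positivity
      have f3 := smul_right_injective _ h5 f2
      have f4 := WithLp.ofLp_injective 2 f3
      rw [pow_two, _root_.map_mul, IsometryEquiv.mul_apply, ← f4, _root_.map_inv]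
      exact IsometryEquiv.inv_apply_self _ _
    have := btPhi_inj _ hgg
    exact (pow_eq_one_iff_left (two_ne_zero)).1 this
  have e3 := e1.symm.trans e2
  have c0 := congrFun e3 0
  have c1 := congrFun e3 1
  have c2 := congrFun e3 2
  simp [Matrix.mulVec, dotProduct, Fin.sum_univ_three] at c0 c1 c2
  set A := btW l
  refine bt_cross (w := ![A 1 2 - A 2 1, A 2 0 - A 0 2, A 0 1 - A 1 0]) ?_ ?_ ?_ ?_
  · intro h
    have h0 := congrFun h 0
    have h1 := congrFun h 1
    have h2 := congrFun h 2
    simp at h0 h1 h2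
    apply hns
    ext i j
    fin_cases i <;> fin_cases j <;> simp <;> omega
  · simp; linarith
  · simp; linarith
  · simp; linarith
end

noncomputable section
open scoped Classical
open Topology Filter

theorem btExp.inter {K : Type*} [Group K] {Ω : Type*} [MulAction K Ω] {S : Finset K}
    {X Y B : Set Ω} {n : ℕ} (h : btExp S X Y n) (hB : ∀ s ∈ S, ∀ x ∈ B, s • x ∈ B) :
    btExp S (X ∩ B) (Y ∩ B) n := by
  intro F hF
  refine (h F fun x hx => (hF x hx).1).trans (Finset.card_le_card ?_)
  intro y hy
  obtain ⟨h1, h2⟩ := Finset.mem_filter.1 hy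
  obtain ⟨s, hs, z, hz, rfl⟩ := Finset.mem_smul.1 h1
  simp only [Finset.mem_filter]
  exact ⟨h1, h2, hB s hs z (hF z hz).2⟩

theorem bt_equi2 {K : Type*} [Group K] {E : Type*} [MulAction K E] [TopologicalSpace E]
    [ContinuousConstSMul K E] [T2Space E] [SecondCountableTopology E] [BaireSpace E] [Nonempty E]
    (hfix : ∀ g : K, g ≠ 1 → interior {x : E | g • x = x} = ∅) (S : Finset K)
    {X Y : Set E} (hXc : IsClosed X) (hYc : IsClosed Y) (hXY : Disjoint X Y)
    (hX : btExp S X Y 2) (hY : btExp S Y X 2) :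
    ∃ (T : Finset K) (φ : E → K), (∀ x ∈ X, φ x ∈ T) ∧
      (∀ s, BaireMeasurableSet {x | x ∈ X ∧ φ x = s}) ∧ Set.BijOn (fun x => φ x • x) X Y := by
  set T : Finset K := insert 1 (S ∪ S⁻¹) with hT
  have hST : S ⊆ T := fun x hx => by simp [hT, hx]
  have hTi : ∀ s ∈ T, s⁻¹ ∈ T := by
    intro s hs
    simp only [hT, Finset.mem_insert, Finset.mem_union, Finset.mem_inv'] at hs ⊢
    rcases hs with rfl | hs | hs
    · simp
    · right; right; simpa using hs
    · right; left; exact hs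
  have h1T : (1 : K) ∈ T := by simp [hT]
  have hcl : ∀ s ∈ T, s ∈ Subgroup.closure (T : Set K) := fun s hs =>
    Subgroup.subset_closure hs
  have hcount : Countable (Subgroup.closure (T : Set K)) := by
    have e : Subgroup.closure (T : Set K) =
        (FreeGroup.lift (fun s : (T : Set K) => (s : K))).range := by
      rw [FreeGroup.range_lift_eq_closure, Subtype.range_coe]
    rw [e]
    have : Countable (FreeGroup (T : Set K)) := by
      have : Countable (T : Set K) := inferInstance
      exact FreeGroup.toWord_injective.countable
    exact (MonoidHom.rangeRestrict_surjective _).countable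
  have hcc : ContinuousConstSMul (Subgroup.closure (T : Set K)) E :=
    ⟨fun g => continuous_const_smul (g : K)⟩
  set T' : Finset (Subgroup.closure (T : Set K)) :=
    T.subtype (fun s => s ∈ Subgroup.closure (T : Set K)) with hT'
  have hsm : ∀ F : Finset E, S • F ⊆ T' • F := by
    intro F y hy
    obtain ⟨s, hs, z, hz, rfl⟩ := Finset.mem_smul.1 hy
    exact Finset.mem_smul.2 ⟨⟨s, hcl s (hST hs)⟩, by simp [hT', hST hs], z, hz, rfl⟩
  have hex : ∀ X Y : Set E, btExp S X Y 2 → btExp T' X Y 2 := fun X Y h F hF =>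
    (h F hF).trans (Finset.card_le_card (Finset.filter_subset_filter _ (hsm F)))
  obtain ⟨φ, a, b, c⟩ := bt_equi (Γ := Subgroup.closure (T : Set K)) (S := T') (E := E) (by
      intro s hs
      simp only [hT', Finset.mem_subtype] at hs ⊢
      exact hTi _ hs) (by simp [hT', h1T]) (by
      intro g hg
      exact hfix g (fun h => hg (Subtype.ext h))) hXc hYc hXY (hex X Y hX) (hex Y X hY)
  refine ⟨T, fun x => φ x, fun x hx => by simpa [hT'] using a x hx, ?_, c⟩
  intro s
  by_cases hs : s ∈ Subgroup.closure (T : Set K)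
  · convert b ⟨s, hs⟩ using 3
    simp [Subtype.ext_iff]
  · have : {x | x ∈ X ∧ (φ x : K) = s} = ∅ := by
      ext x
      simp only [Set.mem_ofPred_eq, Set.mem_empty_iff_false, iff_false, not_and]
      rintro - rfl
      exact hs (φ x).2
    rw [this]
    exact isOpen_empty.baireMeasurableSet

abbrev btE := EuclideanSpace ℝ (Fin 3)

@[reducible] def btIsoAct : MulAction (btE ≃ᵢ btE) btE where
  smul f x := f x
  one_smul _ := rfl
  mul_smul _ _ _ := rfl

attribute [local instance] btIsoAct

theorem btIso_smul (f : btE ≃ᵢ btE) (x : btE) : f • x = f x := rfl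

theorem btCont : ContinuousConstSMul (btE ≃ᵢ btE) btE := ⟨fun f => f.continuous⟩

attribute [local instance] btCont

theorem bt_fix (g : btE ≃ᵢ btE) (hg : g ≠ 1) : interior {x : btE | g • x = x} = ∅ := by
  by_contra hne
  apply hg
  have ho : IsOpen (interior {x : btE | g • x = x}) := isOpen_interior
  have hs := ho.affineSpan_eq_top (Set.nonempty_iff_ne_empty.2 hne)
  set f := g.toRealAffineIsometryEquiv with hf
  have e : (f.toAffineEquiv : btE →ᵃ[ℝ] btE) = AffineMap.id ℝ btE := by
    apply AffineMap.ext_on hs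
    intro x hx
    have := interior_subset hx
    exact this
  ext1 x
  have := congrArg (fun h : btE →ᵃ[ℝ] btE => h x) e
  exact this

theorem bt_exists_rot : ∃ ρ : btE ≃ᵢ btE, ρ 0 = 0 ∧ ∀ x, x ≠ 0 → x ∈ btD → ρ x ∉ btD := by
  obtain ⟨t, ht⟩ : ∃ t : ℝ, Transcendental ℤ t :=
    ⟨_, transcendental_liouvilleNumber (m := 2) le_rfl⟩
  have hind : ∀ z : Fin 3 → ℤ, (z 0 : ℝ) + z 1 * t + z 2 * t ^ 2 = 0 → z = 0 := by
    intro z hz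
    have := (transcendental_iff.1 ht) (Polynomial.C (z 0) + Polynomial.C (z 1) * Polynomial.X +
      Polynomial.C (z 2) * Polynomial.X ^ 2) (by simpa using hz)
    funext i
    have c0 := congrArg (fun p => Polynomial.coeff p 0) this
    have c1 := congrArg (fun p => Polynomial.coeff p 1) this
    have c2 := congrArg (fun p => Polynomial.coeff p 2) this
    simp at c0
    simp [c0] at c1
    simp [c0, c1] at c2
    fin_cases i <;> simp [c0, c1, c2]
  set v : btE := !₂[1, t, t ^ 2] with hv
  refine ⟨((ℝ ∙ v).reflection).toIsometryEquiv, by simp, ?_⟩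
  rintro x hx ⟨w, hw, c, hc⟩ ⟨w', hw', c', hc'⟩
  have hc0 : c ≠ 0 := by
    rintro rfl
    apply hx; ext i; simp [hc]
  obtain ⟨k, hk⟩ : ∃ k : ℝ, k = inner ℝ v x / ‖v‖ ^ 2 := ⟨_, rfl⟩
  have hvn : v ≠ 0 := by
    intro h
    have := congrArg (fun y : btE => y 0) h
    simp [hv] at this
  have hin : inner ℝ v x = c * ((w 0 : ℝ) + w 1 * t + w 2 * t ^ 2) := by
    simp [PiLp.inner_apply, Fin.sum_univ_three, hc, hv]
    ring
  have hk0 : k ≠ 0 := by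
    rw [hk, hin]
    have h1 : (w 0 : ℝ) + w 1 * t + w 2 * t ^ 2 ≠ 0 := fun h => hw (hind w h)
    have h2 : ‖v‖ ≠ 0 := norm_ne_zero_iff.2 hvn
    positivity
  have hr : ∀ i, c' * w' i = 2 * k * v i - c * w i := by
    intro i
    rw [← hc' i, ← hc i]
    change ((ℝ ∙ v).reflection x) i = _
    rw [Submodule.reflection_singleton_apply]
    simp [hk, mul_assoc]
  -- nonzero integer vector orthogonal to both
  obtain ⟨z, hz, hz1, hz2⟩ : ∃ z : Fin 3 → ℤ, z ≠ 0 ∧ z 0 * w 0 + z 1 * w 1 + z 2 * w 2 = 0 ∧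
      z 0 * w' 0 + z 1 * w' 1 + z 2 * w' 2 = 0 := by
    set z : Fin 3 → ℤ := ![w 1 * w' 2 - w 2 * w' 1, w 2 * w' 0 - w 0 * w' 2,
      w 0 * w' 1 - w 1 * w' 0] with hzd
    by_cases hz : z = 0
    · have h0 := congrFun hz 0
      have h1 := congrFun hz 1
      have h2 := congrFun hz 2
      simp [hzd] at h0 h1 h2
      by_cases hw0 : w 0 = 0
      · by_cases hw1 : w 1 = 0
        · have hw2 : w 2 ≠ 0 := by
            intro h; apply hw; funext i; fin_cases i <;> simp [hw0, hw1, h]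
          have : w' 0 = 0 := by
            rw [hw0] at h1
            simpa [hw2] using h1
          refine ⟨![1, 0, 0], by simp, by simp [hw0], by simp [this]⟩
        · refine ⟨![w 1, - w 0, 0], ?_, ?_, ?_⟩
          · intro h; have := congrFun h 0; simp at this; exact hw1 this
          · simp; ring
          · simp; linarith
      · refine ⟨![w 1, - w 0, 0], ?_, ?_, ?_⟩
        · intro h; have := congrFun h 1; simp at this; exact hw0 this
        · simp; ring
        · simp; linarith
    · refine ⟨z, hz, ?_, ?_⟩ <;> simp [hzd] <;> ring
  apply hz
  apply hind
  have hz1' : (z 0 : ℝ) * w 0 + z 1 * w 1 + z 2 * w 2 = 0 := by exact_mod_cast hz1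
  have hz2' : (z 0 : ℝ) * w' 0 + z 1 * w' 1 + z 2 * w' 2 = 0 := by exact_mod_cast hz2
  have r0 := hr 0
  have r1 := hr 1
  have r2 := hr 2
  simp [hv] at r0 r1 r2
  have : 2 * k * ((z 0 : ℝ) + z 1 * t + z 2 * t ^ 2) = 0 := by
    linear_combination (-(z 0 : ℝ)) * r0 - z 1 * r1 - z 2 * r2 + c * hz1' + c' * hz2'
  simpa [hk0] using this

theorem btPhi_zero (g : FreeGroup Bool) : btPhi g 0 = 0 := by
  have := btPhi_word g.toWord 0
  rw [FreeGroup.mk_toWord] at this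
  simpa using this

theorem bt_ball {f : btE ≃ᵢ btE} (h0 : f 0 = 0) {x : btE} (hx : x ∈ Metric.closedBall (0 : btE) 1) :
    f x ∈ Metric.closedBall (0 : btE) 1 := by
  rw [Metric.mem_closedBall] at hx ⊢
  rw [← h0, f.dist_eq]
  exact hx

theorem bt_ball_exp : ∃ S : Finset (btE ≃ᵢ btE),
    btExp S (Metric.closedBall (0 : btE) 1) (Metric.closedBall (0 : btE) 1) 4 := by
  set B := Metric.closedBall (0 : btE) 1 with hB
  obtain ⟨ρ, hρ0, hρ⟩ := bt_exists_rot
  let _ : MulAction (FreeGroup Bool) btE := MulAction.compHom btE btPhi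
  have hsm : ∀ (g : FreeGroup Bool) (x : btE), btPhi g • x = g • x := fun _ _ => rfl
  set Fr : Set btE := {x : btE | ∀ g : FreeGroup Bool, g ≠ 1 → g • x ≠ x} with hFr
  obtain ⟨S1, hS1⟩ : ∃ S1 : Finset (FreeGroup Bool), btExp S1 (Fr ∩ B) (Fr ∩ B) 2 :=
    ⟨_, bt_free_exp.inter (fun s _ x hx => bt_ball (btPhi_zero s) hx)⟩
  obtain ⟨S2, h16⟩ : ∃ S2 : Finset (btE ≃ᵢ btE), btExp S2 (Fr ∩ B) (Fr ∩ B) 16 :=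
    ⟨_, ((hS1.comp hS1).comp (hS1.comp hS1)).map btPhi hsm⟩
  have hD : ∀ x, x ∉ btD → x ∈ Fr := fun x hx g hg e => hx (bt_stab g hg x e)
  have hρ1 : btExp {ρ} ((B ∩ btD) \ {0}) (Fr ∩ B) 1 := by
    apply btExp.single
    rintro x ⟨⟨hx1, hx2⟩, hx3⟩
    exact ⟨hD _ (hρ x hx3 hx2), bt_ball hρ0 hx1⟩
  have hρ2 := hρ1.comp h16
  set e : btE := EuclideanSpace.single 0 1 with he
  have hen : ‖e‖ = 1 := by simp [he]
  set T : Finset (btE ≃ᵢ btE) :=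
    Finset.univ.image (fun i : Fin 8 => IsometryEquiv.addRight (((i : ℝ) / 8) • e)) with hT
  have hpt : btExp T {(0 : btE)} B 8 := by
    have hval : ∀ i : Fin 8, (IsometryEquiv.addRight (((i : ℝ) / 8) • e)) • (0 : btE) =
      ((i : ℝ) / 8) • e := fun i => by rw [btIso_smul]; simp
    refine btExp.point (fun i : Fin 8 => IsometryEquiv.addRight (((i : ℝ) / 8) • e)) ?_ ?_ ?_
    · intro i
      exact Finset.mem_image_of_mem _ (Finset.mem_univ i)
    · intro i j h
      simp only [hval] at h
      have hne : e ≠ 0 := by intro h; rw [h] at hen; simp at hen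
      have := smul_left_injective ℝ hne h
      have h2 : (i : ℝ) = j := by linarith
      exact Fin.ext (by exact_mod_cast h2)
    · intro i
      rw [hval, hB, mem_closedBall_zero_iff, norm_smul, hen, mul_one, Real.norm_eq_abs, abs_le]
      have : (i : ℝ) ≤ 8 := by exact_mod_cast i.2.le
      have : (0 : ℝ) ≤ i := by positivity
      constructor <;> linarith
  set U := S2 ∪ S2 * {ρ} with hU
  have hr2 : Fr ∩ B ⊆ B := Set.inter_subset_right
  have a1 : btExp U (Fr ∩ B) B (2 * 8) := h16.mono Finset.subset_union_left subset_rfl hr2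
  have a2 : btExp U ((B ∩ btD) \ {0}) B (2 * 8) :=
    hρ2.mono Finset.subset_union_right subset_rfl hr2
  have a3 := a1.union a2
  have a4 : btExp (U ∪ T) ((Fr ∩ B) ∪ ((B ∩ btD) \ {0})) B (2 * 4) :=
    a3.mono Finset.subset_union_left subset_rfl subset_rfl
  have a5 : btExp (U ∪ T) {(0 : btE)} B (2 * 4) :=
    hpt.mono Finset.subset_union_right subset_rfl subset_rfl
  refine ⟨U ∪ T, (a4.union a5).mono subset_rfl ?_ subset_rfl⟩
  intro x hx
  by_cases h0 : x = 0
  · right; exact h0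
  · left
    by_cases hd : x ∈ btD
    · right; exact ⟨⟨hx, hd⟩, h0⟩
    · left; exact ⟨hD x hd, hx⟩

theorem bt_main : ∃ (τ : Fin 2 → (btE ≃ᵢ btE)) (T : Finset (btE ≃ᵢ btE)) (φ : btE → (btE ≃ᵢ btE)),
    Disjoint (τ 0 '' Metric.closedBall (0 : btE) 1) (τ 1 '' Metric.closedBall (0 : btE) 1) ∧
    (∀ x ∈ Metric.closedBall (0 : btE) 1, φ x ∈ T) ∧
    (∀ s, BaireMeasurableSet {x | x ∈ Metric.closedBall (0 : btE) 1 ∧ φ x = s}) ∧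
    Set.BijOn (fun x => φ x x) (Metric.closedBall (0 : btE) 1)
      (τ 0 '' Metric.closedBall (0 : btE) 1 ∪ τ 1 '' Metric.closedBall (0 : btE) 1) := by
  obtain ⟨S, hS⟩ := bt_ball_exp
  set B := Metric.closedBall (0 : btE) 1 with hB
  set e : btE := EuclideanSpace.single 0 1 with he
  have hen : ‖e‖ = 1 := by simp [he]
  set τ : Fin 2 → (btE ≃ᵢ btE) := fun i => IsometryEquiv.addRight ((3 * ((i : ℝ) + 1)) • e) with hτ
  have him : ∀ i, ∀ y ∈ τ i '' B, |y 0 - 3 * ((i : ℝ) + 1)| ≤ 1 := by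
    rintro i _ ⟨x, hx, rfl⟩
    have h1 : (τ i x) 0 = x 0 + 3 * ((i : ℝ) + 1) := by
      simp [hτ, he]
    rw [h1, add_sub_cancel_right]
    rw [hB, mem_closedBall_zero_iff] at hx
    exact (PiLp.norm_apply_le x 0).trans hx
  have hB0 : ∀ y ∈ B, |y 0| ≤ 1 := by
    intro x hx
    rw [hB, mem_closedBall_zero_iff] at hx
    exact (PiLp.norm_apply_le x 0).trans hx
  have hd01 : Disjoint (τ 0 '' B) (τ 1 '' B) := by
    rw [Set.disjoint_left]
    intro y h0 h1
    have h0 := abs_le.1 (him 0 y h0)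
    have h1 := abs_le.1 (him 1 y h1)
    simp at h0 h1
    linarith [h0.1, h0.2, h1.1, h1.2]
  have hdB : Disjoint B (τ 0 '' B ∪ τ 1 '' B) := by
    rw [Set.disjoint_left]
    rintro y hy (h0 | h0)
    · have h0 := abs_le.1 (him 0 y h0)
      have h1 := abs_le.1 (hB0 y hy)
      simp at h0 h1
      linarith [h0.1, h0.2, h1.1, h1.2]
    · have h0 := abs_le.1 (him 1 y h0)
      have h1 := abs_le.1 (hB0 y hy)
      simp at h0 h1
      linarith [h0.1, h0.2, h1.1, h1.2]
  have hBc : IsClosed B := Metric.isClosed_closedBall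
  have hcl : ∀ i, IsClosed (τ i '' B) := fun i => ((τ i).toHomeomorph.isClosedMap) B hBc
  have f1 : btExp ({τ 0} * S) B (τ 0 '' B) (1 * 4) :=
    hS.comp (btExp.single fun x hx => ⟨x, hx, rfl⟩)
  have f2 : ∀ i, btExp (S * {(τ i)⁻¹}) (τ i '' B) B (4 * 1) := fun i =>
    (btExp.single (by
      rintro _ ⟨x, hx, rfl⟩
      rw [btIso_smul, IsometryEquiv.inv_apply_self]
      exact hx)).comp hS
  set W := ({τ 0} * S) ∪ (S * {(τ 0)⁻¹} ∪ S * {(τ 1)⁻¹}) with hW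
  have g1 : btExp W B (τ 0 '' B ∪ τ 1 '' B) 2 := by
    intro F hF
    have := (f1.mono (Finset.subset_union_left (s₂ := S * {(τ 0)⁻¹} ∪ S * {(τ 1)⁻¹})) subset_rfl
      (Set.subset_union_left (t := τ 1 '' B))) F hF
    exact le_trans (by omega) this
  have g2 : btExp W (τ 0 '' B ∪ τ 1 '' B) B 2 := by
    apply btExp.union
    · refine (f2 0).mono ?_ subset_rfl subset_rfl
      exact Finset.subset_union_left.trans Finset.subset_union_right
    · refine (f2 1).mono ?_ subset_rfl subset_rfl
      exact Finset.subset_union_right.trans Finset.subset_union_right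
  obtain ⟨T, φ, a, b, c⟩ := bt_equi2 bt_fix W hBc ((hcl 0).union (hcl 1)) hdB g1 g2
  exact ⟨τ, T, φ, hd01, a, b, c⟩

theorem bt_pieces {n : ℕ} (B Y : Set btE) (s : Fin n → (btE ≃ᵢ btE)) (hs : Function.Injective s)
    (τ : btE ≃ᵢ btE) (φ : btE → (btE ≃ᵢ btE)) (hY : τ '' B ⊆ Y)
    (hφ : ∀ x ∈ B, ∃ i, φ x = s i) (hb : Set.BijOn (fun x => φ x x) B Y) :
    (∀ i j, i ≠ j → Disjoint ((τ⁻¹ * s i) '' {x | (x ∈ B ∧ φ x = s i) ∧ s i x ∈ τ '' B})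
      ((τ⁻¹ * s j) '' {x | (x ∈ B ∧ φ x = s j) ∧ s j x ∈ τ '' B})) ∧
    (⋃ i, (τ⁻¹ * s i) '' {x | (x ∈ B ∧ φ x = s i) ∧ s i x ∈ τ '' B}) = B := by
  constructor
  · intro i j hij
    rw [Set.disjoint_left]
    rintro _ ⟨x, ⟨⟨hx, hxi⟩, -⟩, rfl⟩ ⟨y, ⟨⟨hy, hyj⟩, -⟩, e⟩
    have e2 : s j y = s i x := τ⁻¹.injective e
    have e3 : y = x := hb.2.1 hy hx (by change φ y y = φ x x; rw [hyj, hxi, e2])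
    subst e3
    exact hij (hs (hxi.symm.trans hyj))
  · ext y
    simp only [Set.mem_iUnion]
    constructor
    · rintro ⟨i, x, ⟨-, z, hz, e⟩, rfl⟩
      rw [IsometryEquiv.mul_apply, ← e, IsometryEquiv.inv_apply_self]
      exact hz
    · intro hy
      obtain ⟨x, hx, e⟩ := hb.2.2 (hY ⟨y, hy, rfl⟩)
      obtain ⟨i, hi⟩ := hφ x hx
      change φ x x = τ y at e
      rw [hi] at e
      refine ⟨i, x, ⟨⟨hx, hi⟩, y, hy, e.symm⟩, ?_⟩
      rw [IsometryEquiv.mul_apply, e, IsometryEquiv.inv_apply_self]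
end

theorem baire_banach_tarski :
    ∃ (n m : ℕ)
      (A : Fin n → Set (EuclideanSpace ℝ (Fin 3)))
      (B : Fin m → Set (EuclideanSpace ℝ (Fin 3)))
      (α : Fin n → (EuclideanSpace ℝ (Fin 3) ≃ᵢ EuclideanSpace ℝ (Fin 3)))
      (β : Fin m → (EuclideanSpace ℝ (Fin 3) ≃ᵢ EuclideanSpace ℝ (Fin 3))),
      -- every piece has the Baire property
      (∀ i, BaireMeasurableSet (A i)) ∧
      (∀ j, BaireMeasurableSet (B j)) ∧
      -- the pieces partition the closed unit ball
      (∀ i j, i ≠ j → Disjoint (A i) (A j)) ∧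
      (∀ i j, i ≠ j → Disjoint (B i) (B j)) ∧
      (∀ i j, Disjoint (A i) (B j)) ∧
      ((⋃ i, A i) ∪ (⋃ j, B j)) = Metric.closedBall (0 : EuclideanSpace ℝ (Fin 3)) 1 ∧
      -- the images of the `Aᵢ` are pairwise disjoint with union the ball
      (∀ i j, i ≠ j → Disjoint (α i '' A i) (α j '' A j)) ∧
      (⋃ i, α i '' A i) = Metric.closedBall (0 : EuclideanSpace ℝ (Fin 3)) 1 ∧
      -- the images of the `Bⱼ` are pairwise disjoint with union the ball
      (∀ i j, i ≠ j → Disjoint (β i '' B i) (β j '' B j)) ∧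
      (⋃ j, β j '' B j) = Metric.closedBall (0 : EuclideanSpace ℝ (Fin 3)) 1 := by
  obtain ⟨τ, T, φ, hd, hT, hbm, hb⟩ := bt_main
  set B := Metric.closedBall (0 : btE) 1 with hB
  set s : Fin T.card → (btE ≃ᵢ btE) := fun i => (T.equivFin.symm i : btE ≃ᵢ btE) with hs
  have hsinj : Function.Injective s := Subtype.val_injective.comp T.equivFin.symm.injective
  have hφ : ∀ x ∈ B, ∃ i, φ x = s i := fun x hx =>
    ⟨T.equivFin ⟨φ x, hT x hx⟩, by simp [hs]⟩
  have hcl : ∀ k, IsClosed (τ k '' B) := fun k =>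
    ((τ k).toHomeomorph.isClosedMap) B Metric.isClosed_closedBall
  have hmeas : ∀ k i, BaireMeasurableSet {x | (x ∈ B ∧ φ x = s i) ∧ s i x ∈ τ k '' B} :=
by
    intro k i
    have h2 : IsClosed (s i ⁻¹' (τ k '' B)) := (hcl k).preimage (s i).continuous
    have h3 := h2.isOpen_compl.baireMeasurableSet.compl
    rw [compl_compl] at h3
    exact (hbm (s i)).inter h3
  have hdis : ∀ k i j, i ≠ j → Disjoint {x | (x ∈ B ∧ φ x = s i) ∧ s i x ∈ τ k '' B}
      {x | (x ∈ B ∧ φ x = s j) ∧ s j x ∈ τ k '' B} := by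
    intro k i j hij
    rw [Set.disjoint_left]
    rintro x ⟨⟨_, h1⟩, _⟩ ⟨⟨_, h2⟩, _⟩
    exact hij (hsinj (h1.symm.trans h2))
  obtain ⟨p1, p2⟩ := bt_pieces B _ s hsinj (τ 0) φ Set.subset_union_left hφ hb
  obtain ⟨q1, q2⟩ := bt_pieces B _ s hsinj (τ 1) φ Set.subset_union_right hφ hb
  refine ⟨T.card, T.card, fun i => {x | (x ∈ B ∧ φ x = s i) ∧ s i x ∈ τ 0 '' B},
    fun i => {x | (x ∈ B ∧ φ x = s i) ∧ s i x ∈ τ 1 '' B}, fun i => (τ 0)⁻¹ * s i,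
    fun i => (τ 1)⁻¹ * s i, hmeas 0, hmeas 1, hdis 0, hdis 1, ?_, ?_, p1, p2, q1, q2⟩
  · intro i j
    rw [Set.disjoint_left]
    rintro x ⟨⟨_, h1⟩, h3⟩ ⟨⟨_, h2⟩, h4⟩
    rw [← h1] at h3
    rw [← h2] at h4
    exact Set.disjoint_left.1 hd h3 h4
  · ext x
    simp only [Set.mem_union, Set.mem_iUnion]
    constructor
    · rintro (⟨i, ⟨h, _⟩, _⟩ | ⟨i, ⟨h, _⟩, _⟩) <;> exact h
    · intro hx
      obtain ⟨i, hi⟩ := hφ x hx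
      have := hb.1 hx
      change φ x x ∈ _ at this
      rw [hi] at this
      rcases this with h | h
      · left; exact ⟨i, ⟨hx, hi⟩, h⟩
      · right; exact ⟨i, ⟨hx, hi⟩, h⟩
end
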